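/- arXiv:2110.11345 — 4 statements merged into one kernel-verified Lean document; each statement's English description precedes it below -/
import Mathlib

section
/- Let G be a graph of order n, and suppose vertices v₁,…,v_t are deleted one at a time, where each v_i has degree at most n/8 in the graph G − {v₁,…,v_{i−1}}. Let H = G − {v₁,…,v_t}. Then ρ(H)² ≥ ρ(G)² − t·n/4. -/
open SimpleGraph

noncomputable def specRad {V : Type*} [Fintype V] [DecidableEq V] (G : SimpleGraph V) : ℝ :=
  letI := Classical.decRel G.Adj
  have h : (G.adjMatrix ℝ).IsHermitian := by
    ext i j
    simp [Matrix.conjTranspose_apply, SimpleGraph.adjMatrix_apply, G.adj_comm i j]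
  ⨆ i, h.eigenvalues i

open Matrix in
/-- `r` behaves as the largest eigenvalue of the principal submatrix of `A` indexed by `S`. -/
def IsTopEig {V : Type*} [Fintype V] (A : Matrix V V ℝ) (S : Set V) (r : ℝ) : Prop :=
  0 ≤ r ∧ (∀ y : V → ℝ, (∀ u, u ∉ S → y u = 0) → y ⬝ᵥ (A *ᵥ y) ≤ r * (y ⬝ᵥ y)) ∧
  (S.Nonempty → ∃ y : V → ℝ, y ≠ 0 ∧ (∀ u, u ∉ S → y u = 0) ∧
    ∀ u ∈ S, (A *ᵥ y) u = r * y u)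

open Matrix in
lemma rayleigh_le {W : Type*} [Fintype W] [DecidableEq W] (A : Matrix W W ℝ)
    (h : A.IsHermitian) (y : W → ℝ) :
    y ⬝ᵥ (A *ᵥ y) ≤ (⨆ i, h.eigenvalues i) * (y ⬝ᵥ y) := by
  have key : ∀ z : W → ℝ, y ⬝ᵥ z =
      ∑ i, (y ⬝ᵥ ⇑(h.eigenvectorBasis i)) * (⇑(h.eigenvectorBasis i) ⬝ᵥ z) := by
    intro z
    have := h.eigenvectorBasis.sum_inner_mul_inner (WithLp.toLp 2 y) (WithLp.toLp 2 z)
    simp only [EuclideanSpace.inner_eq_star_dotProduct, star_trivial] at this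
    rw [dotProduct_comm, ← this]
    refine Finset.sum_congr rfl fun i _ => ?_
    rw [dotProduct_comm y, dotProduct_comm z]
  have hT : Aᵀ = A := by simpa using h.eq
  rw [key (A *ᵥ y), key y, Finset.mul_sum]
  refine Finset.sum_le_sum fun i _ => ?_
  have h1 : ⇑(h.eigenvectorBasis i) ⬝ᵥ (A *ᵥ y) =
      h.eigenvalues i * (⇑(h.eigenvectorBasis i) ⬝ᵥ y) := by
    rw [dotProduct_mulVec, ← mulVec_transpose, hT, h.mulVec_eigenvectorBasis, smul_dotProduct,
      smul_eq_mul]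
  rw [h1, dotProduct_comm y]
  have h2 : h.eigenvalues i ≤ ⨆ i, h.eigenvalues i := le_ciSup (Set.finite_range _).bddAbove i
  nlinarith [mul_le_mul_of_nonneg_right h2 (mul_self_nonneg (⇑(h.eigenvectorBasis i) ⬝ᵥ y))]

open Matrix in
lemma exists_top_eigvec {W : Type*} [Fintype W] [DecidableEq W] [Nonempty W] (A : Matrix W W ℝ)
    (h : A.IsHermitian) : ∃ y : W → ℝ, y ≠ 0 ∧ A *ᵥ y = (⨆ i, h.eigenvalues i) • y := by
  obtain ⟨i, hi⟩ := exists_eq_ciSup_of_finite (f := h.eigenvalues)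
  refine ⟨⇑(h.eigenvectorBasis i), ?_, ?_⟩
  · intro h0
    have := h.eigenvectorBasis.orthonormal.ne_zero i
    apply this
    ext j
    exact congrFun h0 j
  · rw [← hi]; exact h.mulVec_eigenvectorBasis i

open Matrix in
lemma isTopEig_comap {V W : Type*} [Fintype V] [Fintype W] [DecidableEq W]
    (G : SimpleGraph V) (H : SimpleGraph W) [DecidableRel G.Adj] (f : W → V)
    (hf : Function.Injective f) (hH : ∀ a b, H.Adj a b ↔ G.Adj (f a) (f b)) (S : Set V)
    (hS : Set.range f = S) : IsTopEig (G.adjMatrix ℝ) S (specRad H) := by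
  subst hS
  classical
  letI := Classical.decRel H.Adj
  have h : (H.adjMatrix ℝ).IsHermitian := by
    ext i j
    simp [Matrix.conjTranspose_apply, SimpleGraph.adjMatrix_apply, H.adj_comm i j]
  have hr : specRad H = ⨆ i, h.eigenvalues i := rfl
  rw [hr]
  have hmv : ∀ y : V → ℝ, (∀ u, u ∉ Set.range f → y u = 0) → ∀ w,
      (G.adjMatrix ℝ *ᵥ y) (f w) = (H.adjMatrix ℝ *ᵥ (y ∘ f)) w := by
    intro y hy w
    simp only [mulVec, dotProduct]
    symm
    refine Fintype.sum_of_injective f hf _ _ ?_ ?_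
    · intro i hi; rw [hy i hi, mul_zero]
    · intro i; simp [SimpleGraph.adjMatrix_apply, hH]
  have hdp : ∀ y z : V → ℝ, (∀ u, u ∉ Set.range f → y u = 0) →
      y ⬝ᵥ z = (y ∘ f) ⬝ᵥ (z ∘ f) := by
    intro y z hy
    simp only [dotProduct]
    symm
    refine Fintype.sum_of_injective f hf _ _ ?_ ?_
    · intro i hi; rw [hy i hi, zero_mul]
    · intro i; rfl
  refine ⟨?_, ?_, ?_⟩
  · rcases isEmpty_or_nonempty W with hW | ⟨⟨w⟩⟩
    · simp
    · have := rayleigh_le _ h (Pi.single w 1)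
      simpa using this
  · intro y hy
    rw [hdp _ _ hy, hdp _ _ hy]
    have : (G.adjMatrix ℝ *ᵥ y) ∘ f = H.adjMatrix ℝ *ᵥ (y ∘ f) := funext (hmv y hy)
    rw [this]
    exact rayleigh_le _ h _
  · rintro ⟨_, w, rfl⟩
    haveI : Nonempty W := ⟨w⟩
    obtain ⟨x, hx0, hx⟩ := exists_top_eigvec _ h
    have hext : (Function.extend f x 0) ∘ f = x := funext fun i => hf.extend_apply _ _ _
    have hsupp : ∀ u, u ∉ Set.range f → Function.extend f x 0 u = 0 := by
      intro u hu
      rw [Function.extend_apply' _ _ _ (by simpa using hu)]; rfl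
    refine ⟨Function.extend f x 0, ?_, hsupp, ?_⟩
    · intro h0
      apply hx0
      rw [← hext, h0]; rfl
    · rintro _ ⟨w, rfl⟩
      rw [hmv _ hsupp, hext, hx, hf.extend_apply]; rfl

open Matrix in
lemma quad_eq {V : Type*} [Fintype V] (A : Matrix V V ℝ) (S : Set V) (r : ℝ)
    (y : V → ℝ) (hy : ∀ u, u ∉ S → y u = 0) (he : ∀ u ∈ S, (A *ᵥ y) u = r * y u) :
    y ⬝ᵥ (A *ᵥ y) = r * (y ⬝ᵥ y) := by
  simp only [dotProduct, Finset.mul_sum]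
  refine Finset.sum_congr rfl fun u _ => ?_
  by_cases hu : u ∈ S
  · have := he u hu
    simp only [this]; ring
  · simp [hy u hu]

lemma dot_self_pos {V : Type*} [Fintype V] (y : V → ℝ) (hy : y ≠ 0) : 0 < y ⬝ᵥ y := by
  have h0 : 0 ≤ y ⬝ᵥ y := Finset.sum_nonneg fun i _ => mul_self_nonneg _
  refine lt_of_le_of_ne h0 fun h => hy ?_
  exact dotProduct_self_eq_zero.1 h.symm

open Matrix in
lemma IsTopEig.le {V : Type*} [Fintype V] {A : Matrix V V ℝ} {S : Set V} {r r' : ℝ}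
    (hS : S.Nonempty) (h : IsTopEig A S r) (h' : IsTopEig A S r') : r ≤ r' := by
  obtain ⟨y, hy0, hy, he⟩ := h.2.2 hS
  have h1 := h'.2.1 y hy
  rw [quad_eq A S r y hy he] at h1
  exact le_of_mul_le_mul_right h1 (dot_self_pos y hy0)

lemma real_step (r r' s N d : ℝ) (hr : 0 ≤ r) (hr' : 0 ≤ r') (hs : 0 ≤ s) (hN : 0 < N)
    (hsN : s ≤ N) (h1 : r ^ 2 * s ≤ d * (N - s)) (h2 : r * (N - 2 * s) ≤ r' * (N - s))
    (hd : 0 ≤ d) : r ^ 2 ≤ r' ^ 2 + 2 * d := by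
  rcases le_total (N - 2 * s) 0 with h | h
  · have : r ^ 2 * N ≤ 2 * d * N := by nlinarith [sq_nonneg r, mul_nonneg hd hs, mul_nonneg (sq_nonneg r) (sub_nonneg.2 hsN)]
    have := le_of_mul_le_mul_right this hN
    nlinarith [sq_nonneg r']
  · have hM : 0 < N - s := by linarith
    have h3 : (r * (N - 2 * s)) ^ 2 ≤ (r' * (N - s)) ^ 2 :=
      pow_le_pow_left₀ (mul_nonneg hr h) h2 2
    have h4 : r ^ 2 * s * (2 * N - 3 * s) ≤ d * (N - s) * (2 * N - 3 * s) :=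
      mul_le_mul_of_nonneg_right h1 (by linarith)
    have h5 : d * (N - s) * (2 * N - 3 * s) ≤ d * (N - s) * (2 * (N - s)) :=
      mul_le_mul_of_nonneg_left (by linarith) (mul_nonneg hd hM.le)
    have h6 : r ^ 2 * (N - s) ^ 2 ≤ (r' ^ 2 + 2 * d) * (N - s) ^ 2 := by nlinarith
    exact le_of_mul_le_mul_right h6 (by positivity)

open Matrix in
lemma IsTopEig.step {V : Type*} [Fintype V] [DecidableEq V] {A : Matrix V V ℝ} {S S' : Set V}
    {r r' d : ℝ} (hA : Aᵀ = A) (v : V) (hv : v ∈ S) (hS' : ∀ u, u ∉ S' → u = v ∨ u ∉ S)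
    (hdiag : A v v = 0)
    [DecidablePred (· ∈ S)] (hd : ∑ w, (if w ∈ S then A v w else 0) ^ 2 ≤ d)
    (h : IsTopEig A S r) (h' : IsTopEig A S' r') : r ^ 2 ≤ r' ^ 2 + 2 * d := by
  obtain ⟨y, hy0, hy, he⟩ := h.2.2 ⟨v, hv⟩
  have hd0 : 0 ≤ d := le_trans (Finset.sum_nonneg fun i _ => sq_nonneg _) hd
  set z : V → ℝ := y - Pi.single v (y v) with hz
  have hz0 : ∀ u, u ∉ S' → z u = 0 := by
    intro u hu
    rcases hS' u hu with rfl | hu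
    · simp [hz]
    · have : u ≠ v := fun e => hu (e ▸ hv)
      simp [hz, this, hy u hu]
  have hzz : z ⬝ᵥ z = y ⬝ᵥ y - y v ^ 2 := by
    simp only [hz, sub_dotProduct, dotProduct_sub, single_dotProduct, dotProduct_single,
      Pi.sub_apply, Pi.single_eq_same]
    ring
  have hAv : (A *ᵥ y) v = r * y v := he v hv
  have hq := quad_eq A S r y hy he
  have hzA : z ⬝ᵥ (A *ᵥ z) = r * (y ⬝ᵥ y) - 2 * r * y v ^ 2 := by
    have e1 : y ⬝ᵥ (A *ᵥ Pi.single v (y v)) = r * y v * y v := by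
      rw [dotProduct_mulVec, ← mulVec_transpose, hA, dotProduct_single, hAv]
    have e2 : (A *ᵥ Pi.single v (y v)) v = 0 := by
      simp [mulVec, hdiag]
    simp only [hz, mulVec_sub, sub_dotProduct, dotProduct_sub, single_dotProduct]
    rw [e1, e2, hAv, hq]
    ring
  have h2 := h'.2.1 z hz0
  rw [hzA, hzz] at h2
  have hzn : 0 ≤ z ⬝ᵥ z := Finset.sum_nonneg fun i _ => mul_self_nonneg _
  have hcs : (r * y v) ^ 2 ≤ d * (z ⬝ᵥ z) := by
    have e : r * y v = ∑ w, (if w ∈ S then A v w else 0) * z w := by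
      rw [← hAv]
      simp only [mulVec, dotProduct]
      refine Finset.sum_congr rfl fun w _ => ?_
      by_cases hw : w ∈ S
      · by_cases hwv : w = v
        · subst hwv; simp [hdiag]
        · simp [hw, hz, hwv]
      · have : w ≠ v := fun e => hw (e ▸ hv)
        simp [hw, hy w hw]
    rw [e]
    refine (Finset.sum_mul_sq_le_sq_mul_sq _ _ _).trans ?_
    have : z ⬝ᵥ z = ∑ w, z w ^ 2 := by
      simp only [dotProduct, sq]
    rw [← this]
    exact mul_le_mul_of_nonneg_right hd hzn
  rw [hzz] at hcs hzn
  exact real_step r r' (y v ^ 2) (y ⬝ᵥ y) d h.1 h'.1 (sq_nonneg _) (dot_self_pos y hy0)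
    (by linarith) (by rw [← mul_pow]; exact hcs) (by linarith) hd0

/-- Deleting `t` vertices one at a time, each of degree at most `n/8` in the current graph,
decreases `ρ²` by at most `t·n/4`. -/
theorem stmt6 {V : Type*} [Fintype V] [DecidableEq V] (G : SimpleGraph V)
    [DecidableRel G.Adj] (n t : ℕ) (hcard : Fintype.card V = n)
    (v : Fin t → V) (hv : Function.Injective v)
    (hdeg : ∀ i : Fin t,
      (({u : V | G.Adj (v i) u ∧ ∀ j : Fin t, j < i → v j ≠ u}.ncard : ℝ)) ≤ n / 8) :
    specRad G ^ 2 - t * n / 4 ≤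
      specRad (G.induce {u : V | ∀ i : Fin t, v i ≠ u}) ^ 2 := by
  classical
  have hind : ∀ S : Set V, ∀ [Fintype S], IsTopEig (G.adjMatrix ℝ) S (specRad (G.induce S)) := by
    intro S _
    exact isTopEig_comap G _ Subtype.val Subtype.val_injective (fun a b => Iff.rfl) S
      Subtype.range_val
  have hG : IsTopEig (G.adjMatrix ℝ) Set.univ (specRad G) :=
    isTopEig_comap G G id Function.injective_id (fun a b => Iff.rfl) _ Set.range_id
  rcases isEmpty_or_nonempty V with hV | hV
  · have h0 : specRad G = 0 := by simp [specRad]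
    have : (0 : ℝ) ≤ t * n / 4 := by positivity
    rw [h0]
    nlinarith [sq_nonneg (specRad (G.induce {u : V | ∀ i : Fin t, v i ≠ u}))]
  have main : ∀ k : ℕ, k ≤ t → ∀ r : ℝ,
      IsTopEig (G.adjMatrix ℝ) {u : V | ∀ j : Fin t, j.val < k → v j ≠ u} r →
      specRad G ^ 2 ≤ r ^ 2 + k * n / 4 := by
    intro k
    induction k with
    | zero =>
      intro _ r hr
      have hs : {u : V | ∀ j : Fin t, j.val < 0 → v j ≠ u} = Set.univ := by
        ext u; simp
      rw [hs] at hr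
      have := IsTopEig.le Set.univ_nonempty hG hr
      have := pow_le_pow_left₀ hG.1 this 2
      simpa using this
    | succ k ih =>
      intro hk r hr
      have h1 := ih (by omega) _ (hind _)
      have h2 := IsTopEig.step (d := n / 8) (by simp) (v ⟨k, hk⟩)
        (by
          intro j hj e
          have := hv e
          subst this
          simp at hj)
        (by
          intro u hu
          simp only [Set.mem_setOf_eq, not_forall, not_not] at hu ⊢
          obtain ⟨j, hj, rfl⟩ := hu
          by_cases hjk : j.val = k
          · left; congr 1; exact Fin.ext hjk
          · right; exact ⟨j, by omega, rfl⟩)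
        (by simp)
        (by
          refine le_trans (le_of_eq ?_) (hdeg ⟨k, hk⟩)
          rw [Set.ncard_eq_toFinset_card', Finset.card_eq_sum_ones, Nat.cast_sum,
            Set.toFinset_setOf, Finset.sum_filter]
          refine Finset.sum_congr rfl fun w _ => ?_
          simp only [SimpleGraph.adjMatrix_apply, Set.mem_setOf_eq, Fin.lt_def]
          split_ifs <;> simp_all)
        (hind {u : V | ∀ j : Fin t, j.val < k → v j ≠ u}) hr
      push_cast
      linarith
  have hS : {u : V | ∀ j : Fin t, j.val < t → v j ≠ u} = {u : V | ∀ i : Fin t, v i ≠ u} := by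
    ext u; simp
  have := main t le_rfl (specRad (G.induce {u : V | ∀ i : Fin t, v i ≠ u}))
    (by rw [hS]; exact hind _)
  linarith
end

section
/- Let G be a graph containing an induced bipartite subgraph H with parts V₁, V₂ such that: any two vertices of H in the same part have more than k common neighbors in H, and for all v₁ ∈ V₁, v₂ ∈ V₂ and each 2 ≤ l ≤ k there is a v₁–v₂ path of order 2l in H. If G contains a cycle C₅ = z₁z₂z₃z₄z₅z₁ with two vertices u ∈ V₁ and v ∈ V₂ both on C₅, then G contains a cycle of length 2k+1. -/
open SimpleGraph

theorem cycle_close {V : Type*} {G : SimpleGraph V} {a b : V} (p : G.Walk a b) (hp : p.IsPath)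
    (h : G.Adj b a) (hl : 2 ≤ p.length) : (Walk.cons h p).IsCycle := by
  rw [Walk.cons_isCycle_iff]
  refine ⟨hp, fun he => ?_⟩
  cases p with
  | nil => simp at hl
  | @cons _ w _ h1 q =>
    rw [Walk.cons_isPath_iff] at hp
    rw [Walk.edges_cons, List.mem_cons] at he
    rcases he with he | he
    · have : b = w := by
        rw [Sym2.eq_iff] at he
        rcases he with ⟨h2, -⟩ | ⟨h2, -⟩
        · exact absurd h2 h.ne
        · exact h2
      subst this
      have := Walk.isPath_iff_eq_nil.1 hp.1
      subst this
      simp at hl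
    · exact hp.2 (Walk.snd_mem_support_of_mem_edges q he)

theorem grow {V : Type*} [Fintype V] [DecidableEq V] (G : SimpleGraph V)
    (V₁ V₂ : Set V) (hdisj : Disjoint V₁ V₂) (k : ℕ)
    (hcom : ∀ u v : V, u ∈ V₁ → v ∈ V₁ →
      k < {w : V | w ∈ V₂ ∧ G.Adj u w ∧ G.Adj v w}.ncard)
    (hcard : k < V₁.ncard) (a b : V) (ha : a ∈ V₁) (hab : a ≠ b) (hb : b ∈ V₁) (j : ℕ)
    (hj : j + 2 ≤ k) :
    ∃ c, c ≠ b ∧ c ∈ V₁ ∧ ∃ p : G.Walk c a, p.IsPath ∧ p.length = 2 * j ∧ b ∉ p.support ∧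
      ∃ A B : Finset V, (∀ x ∈ p.support, (x ∈ A ∧ x ∈ V₁) ∨ (x ∈ B ∧ x ∈ V₂)) ∧
        A.card ≤ j + 1 ∧ B.card ≤ j := by
  have pick : ∀ (S : Set V) (F : Finset V), F.card < S.ncard → ∃ x ∈ S, x ∉ F := by
    intro S F h
    by_contra! hc
    have : S.ncard ≤ (F : Set V).ncard := Set.ncard_le_ncard (fun x hx => hc x hx) (F.finite_toSet)
    rw [Set.ncard_coe_finset] at this
    omega
  have hd : ∀ x, x ∈ V₁ → x ∈ V₂ → False := fun x h1 h2 => Set.disjoint_left.1 hdisj h1 h2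
  induction j with
  | zero =>
    exact ⟨a, hab, ha, Walk.nil, by simp, by simp, by simpa using hab.symm, {a}, ∅, by simpa using ha, by simp, by simp⟩
  | succ j ih =>
    obtain ⟨c, hcb, hc, p, hp, hl, hbp, A, B, hs, hA, hB⟩ := ih (by omega)
    obtain ⟨d, hd1, hdA⟩ := pick V₁ (insert b A) (by
      have := Finset.card_insert_le b A
      omega)
    obtain ⟨w, ⟨hw2, hcw, hdw⟩, hwB⟩ := pick _ B (lt_of_le_of_lt (by omega) (hcom c d hc hd1))
    have hdb : d ≠ b := by grind
    have hdp : d ∉ p.support := by grind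
    have hwp : w ∉ p.support := by grind
    refine ⟨d, hdb, hd1, Walk.cons hdw (Walk.cons hcw.symm p), ?_, ?_, ?_, insert d A, insert w B, ?_, ?_, ?_⟩
    · simp only [Walk.cons_isPath_iff, Walk.support_cons, List.mem_cons, not_or]
      exact ⟨⟨hp, hwp⟩, hdw.ne, hdp⟩
    · simp; omega
    · simp only [Walk.support_cons, List.mem_cons, not_or]
      exact ⟨hdb.symm, fun h => hd w (h ▸ hb) hw2, hbp⟩
    · intro x hx
      simp only [Walk.support_cons, List.mem_cons] at hx
      grind
    · have := Finset.card_insert_le d A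
      omega
    · have := Finset.card_insert_le w B
      omega

theorem even_path {V : Type*} [Fintype V] [DecidableEq V] (G : SimpleGraph V)
    (V₁ V₂ : Set V) (hdisj : Disjoint V₁ V₂) (k : ℕ) (hk : 2 ≤ k)
    (hcom : ∀ u v : V, u ∈ V₁ → v ∈ V₁ →
      k < {w : V | w ∈ V₂ ∧ G.Adj u w ∧ G.Adj v w}.ncard)
    (hcard : k < V₁.ncard) (a b : V) (ha : a ∈ V₁) (hab : a ≠ b) (hb : b ∈ V₁) :
    ∃ p : G.Walk b a, p.IsPath ∧ (∀ x ∈ p.support, x ∈ V₁ ∪ V₂) ∧ p.length = 2 * k - 2 := by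
  obtain ⟨c, hcb, hc, p, hp, hl, hbp, A, B, hs, hA, hB⟩ :=
    grow G V₁ V₂ hdisj k hcom hcard a b ha hab hb (k - 2) (by omega)
  have hd : ∀ x, x ∈ V₁ → x ∈ V₂ → False := fun x h1 h2 => Set.disjoint_left.1 hdisj h1 h2
  obtain ⟨w, ⟨hw2, hcw, hdw⟩, hwB⟩ : ∃ w ∈ {w : V | w ∈ V₂ ∧ G.Adj c w ∧ G.Adj b w}, w ∉ B := by
    by_contra! hcon
    have h1 : _ ≤ (B : Set V).ncard := Set.ncard_le_ncard (fun x hx => hcon x hx) (B.finite_toSet)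
    rw [Set.ncard_coe_finset] at h1
    have := hcom c b hc hb
    omega
  have hwp : w ∉ p.support := by grind
  refine ⟨Walk.cons hdw (Walk.cons hcw.symm p), ?_, ?_, ?_⟩
  · simp only [Walk.cons_isPath_iff, Walk.support_cons, List.mem_cons, not_or]
    exact ⟨⟨hp, hwp⟩, hdw.ne, hbp⟩
  · intro x hx
    simp only [Walk.support_cons, List.mem_cons] at hx
    simp only [Set.mem_union]
    grind
  · simp; omega

theorem arc3 {V : Type*} [Fintype V] [DecidableEq V] (G : SimpleGraph V)
    (V₁ V₂ : Set V) (hdisj : Disjoint V₁ V₂) (k : ℕ) (hk : 2 ≤ k)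
    (hbip : ∀ u v, u ∈ V₁ ∪ V₂ → v ∈ V₁ ∪ V₂ → G.Adj u v →
      (u ∈ V₁ ∧ v ∈ V₂) ∨ (u ∈ V₂ ∧ v ∈ V₁))
    (hcommon : ∀ u v : V, ((u ∈ V₁ ∧ v ∈ V₁) ∨ (u ∈ V₂ ∧ v ∈ V₂)) →
      k < {w : V | w ∈ V₁ ∪ V₂ ∧ G.Adj u w ∧ G.Adj v w}.ncard)
    (v : V) (hv : v ∈ V₂) (a x y b : V) (ha : a ∈ V₁) (hb : b ∈ V₁) (hab : a ≠ b)
    (hx : x ∉ V₁ ∪ V₂) (hy : y ∉ V₁ ∪ V₂) (h1 : G.Adj a x) (h2 : G.Adj x y) (h3 : G.Adj y b) :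
    ∃ (v : V) (c : G.Walk v v), c.IsCycle ∧ c.length = 2 * k + 1 := by
  have hd : ∀ x, x ∈ V₁ → x ∈ V₂ → False := fun x h1 h2 => Set.disjoint_left.1 hdisj h1 h2
  obtain ⟨p, hp, hs, hl⟩ := even_path G V₁ V₂ hdisj k hk (by
      intro u w hu hw
      refine lt_of_lt_of_le (hcommon u w (Or.inl ⟨hu, hw⟩)) (Set.ncard_le_ncard ?_ (Set.toFinite _))
      rintro t ⟨ht, h4, h5⟩
      refine ⟨?_, h4, h5⟩
      rcases hbip u t (Or.inl hu) ht h4 with h | h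
      · exact h.2
      · exact (hd u hu h.1).elim) (by
      refine lt_of_lt_of_le (hcommon v v (Or.inr ⟨hv, hv⟩)) (Set.ncard_le_ncard ?_ (Set.toFinite _))
      rintro t ⟨ht, h4, h5⟩
      rcases hbip v t (Or.inr hv) ht h4 with h | h
      · exact (hd v h.1 hv).elim
      · exact h.2) a b ha hab hb
  refine ⟨_, _, cycle_close (Walk.cons h2 (Walk.cons h3 p)) ?_ h1 (by simp), by simp; omega⟩
  simp only [Walk.cons_isPath_iff, Walk.support_cons, List.mem_cons, not_or]
  exact ⟨⟨hp, fun h => hy (hs _ h)⟩, h2.ne, fun h => hx (hs _ h)⟩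

theorem extract5 {V : Type*} (G : SimpleGraph V) (z : V) (c : G.Walk z z) (hc : c.IsCycle)
    (hlen : c.length = 5) : ∃ z1 z2 z3 z4, G.Adj z z1 ∧ G.Adj z1 z2 ∧
      G.Adj z2 z3 ∧ G.Adj z3 z4 ∧ G.Adj z4 z ∧ c.support = [z, z1, z2, z3, z4, z] ∧
      [z1, z2, z3, z4, z].Nodup := by
  have hnd := hc.support_nodup
  clear hc
  have step : ∀ {a b : V} (p : G.Walk a b) (n : ℕ), p.length = n + 1 →
      ∃ (w : V) (_ : G.Adj a w) (q : G.Walk w b), q.length = n ∧ p.support = a :: q.support := by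
    intro a b p n h
    cases p with
    | nil => simp at h
    | cons h1 q => exact ⟨_, h1, q, by simpa using h, by simp⟩
  obtain ⟨z1, e0, p1, l1, s1⟩ := step c 4 hlen
  obtain ⟨z2, e1, p2, l2, s2⟩ := step p1 3 l1
  obtain ⟨z3, e2, p3, l3, s3⟩ := step p2 2 l2
  obtain ⟨z4, e3, p4, l4, s4⟩ := step p3 1 l3
  obtain ⟨z5, e4, p5, l5, s5⟩ := step p4 0 l4
  have h5 : z5 = z := Walk.eq_of_length_eq_zero l5
  subst h5
  have s6 : p5.support = [z5] := by
    cases p5 with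
    | nil => rfl
    | cons h q => simp at l5
  rw [s5, s6] at s4
  rw [s4] at s3
  rw [s3] at s2
  rw [s2] at s1
  refine ⟨z1, z2, z3, z4, e0, e1, e2, e3, e4, s1, ?_⟩
  rw [s1] at hnd
  exact hnd

/-- If `G` has an induced bipartite subgraph on `V₁ ∪ V₂` in which same-part vertices have
more than `k` common neighbors, different-part vertices are joined by paths of every even
order `2l` (`2 ≤ l ≤ k`), and `G` has a `C₅` meeting both `V₁` and `V₂`, then `G` contains
a cycle of length `2k+1`. -/
theorem stmt10 {V : Type*} [Fintype V] [DecidableEq V] (G : SimpleGraph V)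
    (V₁ V₂ : Set V) (hdisj : Disjoint V₁ V₂) (k : ℕ) (hk : 2 ≤ k)
    (hbip : ∀ u v, u ∈ V₁ ∪ V₂ → v ∈ V₁ ∪ V₂ → G.Adj u v →
      (u ∈ V₁ ∧ v ∈ V₂) ∨ (u ∈ V₂ ∧ v ∈ V₁))
    (hcommon : ∀ u v : V, ((u ∈ V₁ ∧ v ∈ V₁) ∨ (u ∈ V₂ ∧ v ∈ V₂)) →
      k < {w : V | w ∈ V₁ ∪ V₂ ∧ G.Adj u w ∧ G.Adj v w}.ncard)
    (hpaths : ∀ v₁ ∈ V₁, ∀ v₂ ∈ V₂, ∀ l : ℕ, 2 ≤ l → l ≤ k →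
      ∃ p : G.Walk v₁ v₂, p.IsPath ∧ (∀ x ∈ p.support, x ∈ V₁ ∪ V₂) ∧ p.length + 1 = 2 * l)
    (hC5 : ∃ (z : V) (c : G.Walk z z), c.IsCycle ∧ c.length = 5 ∧
      (∃ u ∈ V₁, u ∈ c.support) ∧ (∃ v ∈ V₂, v ∈ c.support)) :
    ∃ (v : V) (c : G.Walk v v), c.IsCycle ∧ c.length = 2 * k + 1 := by
  obtain ⟨z, c, hc, hlen, ⟨u, hu, huc⟩, ⟨v, hv, hvc⟩⟩ := hC5
  by_cases hk3 : k = 2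
  · exact ⟨z, c, hc, by omega⟩
  by_contra hno
  have hd : ∀ x, x ∈ V₁ → x ∈ V₂ → False := fun x h1 h2 => Set.disjoint_left.1 hdisj h1 h2
  have L1 : ∀ x y, G.Adj x y → (x ∈ V₁ → y ∉ V₁) ∧ (x ∈ V₂ → y ∉ V₂) := by
    intro x y h
    have t1 := hbip x y
    have t2 := hd x
    have t3 := hd y
    clear * - t1 t2 t3 h
    simp only [Set.mem_union] at *
    tauto
  have L2' : ∀ a x b, G.Adj a x → G.Adj x b → x ∉ V₁ ∪ V₂ → b ∈ V₁ → a ∈ V₂ → False := by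
    intro a x b h1 h2 hx hb ha
    obtain ⟨p, hp, hs, hl⟩ := hpaths b hb a ha k hk le_rfl
    refine hno ⟨_, _, cycle_close (Walk.cons h2 p) ?_ h1 (by simp; omega), by simp; omega⟩
    simp only [Walk.cons_isPath_iff]
    exact ⟨hp, fun h => hx (hs _ h)⟩
  have L4' : ∀ a x y z b, G.Adj a x → G.Adj x y → G.Adj y z → G.Adj z b → x ≠ z →
      x ∉ V₁ ∪ V₂ → y ∉ V₁ ∪ V₂ → z ∉ V₁ ∪ V₂ → b ∈ V₁ → a ∈ V₂ → False := by
    intro a x y z b h1 h2 h3 h4 hxz hx hy hz hb ha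
    obtain ⟨p, hp, hs, hl⟩ := hpaths b hb a ha (k-1) (by omega) (by omega)
    refine hno ⟨_, _, cycle_close (Walk.cons h2 (Walk.cons h3 (Walk.cons h4 p))) ?_ h1
      (by simp), by simp; omega⟩
    simp only [Walk.cons_isPath_iff, Walk.support_cons, List.mem_cons, not_or]
    exact ⟨⟨⟨hp, fun h => hz (hs _ h)⟩, h3.ne, fun h => hy (hs _ h)⟩, h2.ne, hxz,
      fun h => hx (hs _ h)⟩
  have L3 : ∀ a x y b, G.Adj a x → G.Adj x y → G.Adj y b → a ≠ b →
      x ∉ V₁ ∪ V₂ → y ∉ V₁ ∪ V₂ → ¬ (a ∈ V₁ ∧ b ∈ V₁) ∧ ¬ (a ∈ V₂ ∧ b ∈ V₂) := by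
    intro a x y b h1 h2 h3 hab hx hy
    refine ⟨fun h => hno ?_, fun h => hno ?_⟩
    · exact arc3 G V₁ V₂ hdisj k hk hbip hcommon v hv a x y b h.1 h.2 hab hx hy h1 h2 h3
    · refine arc3 G V₂ V₁ hdisj.symm k hk ?_ ?_ u hu a x y b h.1 h.2 hab ?_ ?_ h1 h2 h3
      · intro u v
        rw [Set.union_comm]
        intro h1 h2 h3
        exact (hbip u v h1 h2 h3).symm
      · intro u v h
        rw [Set.union_comm]
        exact hcommon u v h.symm
      · rwa [Set.union_comm]
      · rwa [Set.union_comm]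
  have L2 : ∀ a x b, G.Adj a x → G.Adj x b → x ∉ V₁ ∪ V₂ →
      ¬ (b ∈ V₁ ∧ a ∈ V₂) ∧ ¬ (b ∈ V₂ ∧ a ∈ V₁) := fun a x b h1 h2 hx =>
    ⟨fun h => L2' a x b h1 h2 hx h.1 h.2, fun h => L2' b x a h2.symm h1.symm hx h.2 h.1⟩
  have L4 : ∀ a x y z b, G.Adj a x → G.Adj x y → G.Adj y z → G.Adj z b → x ≠ z →
      x ∉ V₁ ∪ V₂ → y ∉ V₁ ∪ V₂ → z ∉ V₁ ∪ V₂ →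
      ¬ (b ∈ V₁ ∧ a ∈ V₂) ∧ ¬ (b ∈ V₂ ∧ a ∈ V₁) := fun a x y z b h1 h2 h3 h4 hxz hx hy hz =>
    ⟨fun h => L4' a x y z b h1 h2 h3 h4 hxz hx hy hz h.1 h.2,
      fun h => L4' b z y x a h4.symm h3.symm h2.symm h1.symm hxz.symm hz hy hx h.2 h.1⟩
  obtain ⟨z1, z2, z3, z4, e0, e1, e2, e3, e4, hsup, hnd⟩ : ∃ z1 z2 z3 z4, G.Adj z z1 ∧ G.Adj z1 z2 ∧
      G.Adj z2 z3 ∧ G.Adj z3 z4 ∧ G.Adj z4 z ∧ c.support = [z, z1, z2, z3, z4, z] ∧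
      [z1, z2, z3, z4, z].Nodup := by
    exact extract5 G z c hc hlen
  rw [hsup] at huc hvc
  simp only [List.mem_cons, List.not_mem_nil, or_false] at huc hvc
  simp only [List.nodup_cons, List.mem_cons, List.not_mem_nil, or_false, not_or, List.nodup_nil, not_false_eq_true, and_true] at hnd
  have key : ∀ x, x ∈ V₁ ∧ x ∉ V₂ ∨ x ∈ V₂ ∧ x ∉ V₁ ∨ x ∉ V₁ ∧ x ∉ V₂ := by
    intro x; have := hd x; clear * - this; tauto
  simp only [Set.mem_union, not_or] at L2 L3 L4
  have hu' : z ∈ V₁ ∨ z1 ∈ V₁ ∨ z2 ∈ V₁ ∨ z3 ∈ V₁ ∨ z4 ∈ V₁ := by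
    clear * - hu huc
    rcases huc with h | h | h | h | h | h <;> subst h <;> simp [hu]
  have hv' : z ∈ V₂ ∨ z1 ∈ V₂ ∨ z2 ∈ V₂ ∨ z3 ∈ V₂ ∨ z4 ∈ V₂ := by
    clear * - hv hvc
    rcases hvc with h | h | h | h | h | h <;> subst h <;> simp [hv]
  obtain ⟨⟨n12, n13, n14, n10⟩, ⟨n23, n24, n20⟩, ⟨n34, n30⟩, n40⟩ := hnd
  have a0 := L1 _ _ e0
  have a1 := L1 _ _ e1
  have a2 := L1 _ _ e2
  have a3 := L1 _ _ e3
  have a4 := L1 _ _ e4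
  have b0 := L2 _ _ _ e0 e1
  have b1 := L2 _ _ _ e1 e2
  have b2 := L2 _ _ _ e2 e3
  have b3 := L2 _ _ _ e3 e4
  have b4 := L2 _ _ _ e4 e0
  have c0 := L3 _ _ _ _ e0 e1 e2 (Ne.symm n30)
  have c1 := L3 _ _ _ _ e1 e2 e3 n14
  have c2 := L3 _ _ _ _ e2 e3 e4 n20
  have c3 := L3 _ _ _ _ e3 e4 e0 (Ne.symm n13)
  have c4 := L3 _ _ _ _ e4 e0 e1 (Ne.symm n24)
  have d0 := L4 _ _ _ _ _ e0 e1 e2 e3 n13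
  have d1 := L4 _ _ _ _ _ e1 e2 e3 e4 n24
  have d2 := L4 _ _ _ _ _ e2 e3 e4 e0 n30
  have d3 := L4 _ _ _ _ _ e3 e4 e0 e1 (Ne.symm n14)
  have d4 := L4 _ _ _ _ _ e4 e0 e1 e2 (Ne.symm n20)
  have k0 := key z
  have k1 := key z1
  have k2 := key z2
  have k3 := key z3
  have k4 := key z4
  clear * - a0 a1 a2 a3 a4 b0 b1 b2 b3 b4 c0 c1 c2 c3 c4 d0 d1 d2 d3 d4 k0 k1 k2 k3 k4 hu' hv'
  rcases k0 with ⟨p0, q0⟩ | ⟨p0, q0⟩ | ⟨p0, q0⟩ <;>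
  rcases k1 with ⟨p1, q1⟩ | ⟨p1, q1⟩ | ⟨p1, q1⟩ <;>
  simp only [p0, q0, p1, q1, true_and, and_true, not_true_eq_false, not_false_eq_true, false_and, and_false, true_or, or_true, false_or, forall_true_left, false_imp_iff] at * <;>
  grind
end

section
/- Let G be a non-bipartite connected graph of sufficiently large order n with minimum degree δ(G) ≥ n/3. Then G contains a cycle of length t for every integer t with 4 ≤ t ≤ δ(G) + 1. -/
open SimpleGraph

set_option linter.unusedSectionVars false
set_option linter.unusedSimpArgs false

section cyc
variable {V : Type*} [DecidableEq V]

/-- A list of vertices which, read cyclically, is a cycle of `G`. -/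
def IsCyc (G : SimpleGraph V) (l : List V) : Prop :=
  l.Nodup ∧ 3 ≤ l.length ∧ l.IsChain G.Adj ∧ ∀ x ∈ l.head?, ∀ y ∈ l.getLast?, G.Adj y x

theorem walk_of_chain (G : SimpleGraph V) : ∀ (l : List V) (x : V), (x :: l).IsChain G.Adj →
    ∃ (y : V) (w : G.Walk x y), w.support = x :: l ∧ (x :: l).getLast? = some y := by
  intro l
  induction l with
  | nil => intro x _; exact ⟨x, Walk.nil, by simp⟩
  | cons a l ih =>
    intro x h
    rw [List.isChain_cons_cons] at h
    obtain ⟨y, w, hw, hy⟩ := ih a h.2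
    refine ⟨y, Walk.cons h.1 w, by simp [hw], ?_⟩
    rw [List.getLast?_cons_cons]; exact hy

theorem IsCyc.toWalk {G : SimpleGraph V} {l : List V} (h : IsCyc G l) :
    ∃ (v : V) (c : G.Walk v v), c.IsCycle ∧ c.length = l.length := by
  obtain ⟨hn, h3, hc, hw⟩ := h
  cases l with
  | nil => simp at h3
  | cons x l =>
    obtain ⟨y, w, hs, hy⟩ := walk_of_chain G l x hc
    have ha : G.Adj y x := hw x (by simp) y (by simp [hy])
    have hl : w.length + 1 = (x :: l).length := by rw [← hs, Walk.length_support]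
    refine ⟨y, Walk.cons ha w, ?_, ?_⟩
    · rw [Walk.isCycle_iff_isPath_tail_and_le_length]
      refine ⟨?_, by simp; simp at hl h3; omega⟩
      rw [Walk.isPath_def]
      simp [hs] at *
      exact hn
    · simp at hl ⊢; omega

theorem IsCyc.replace {G : SimpleGraph V} {A M D M' : List V} {x y : V}
    (h : IsCyc G (A ++ x :: (M ++ y :: D))) (hne : M' ≠ [])
    (hc : (x :: (M' ++ [y])).IsChain G.Adj) (hn : M'.Nodup)
    (hd : ∀ v ∈ M', v ∉ A ∧ v ≠ x ∧ v ≠ y ∧ v ∉ D) :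
    IsCyc G (A ++ x :: (M' ++ y :: D)) := by
  obtain ⟨h1, h2, h3, h4⟩ := h
  refine ⟨?_, ?_, ?_, ?_⟩
  · simp only [List.nodup_append, List.nodup_cons, List.mem_append, List.mem_cons] at h1 ⊢
    grind
  · have : 0 < M'.length := List.length_pos_iff.2 hne
    simp; omega
  · have e : A ++ x :: (M' ++ y :: D) = A ++ x :: ((M' ++ [y]) ++ D) := by simp
    have h5 := List.isChain_split.1 h3
    rw [List.isChain_split]
    refine ⟨h5.1, ?_⟩
    have h6 : (y :: D).IsChain G.Adj := by
      have := h5.2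
      rw [← List.cons_append] at this
      exact (List.isChain_split.1 this).2
    rw [← List.cons_append, List.isChain_split]
    exact ⟨by simpa using hc, h6⟩
  · have e1 : ∀ N : List V, (A ++ x :: (N ++ y :: D)).head? = (A ++ [x]).head? := by
      intro N; cases A <;> simp
    have e2 : ∀ N : List V, (A ++ x :: (N ++ y :: D)).getLast? = (y :: D).getLast? := by
      intro N
      rw [show A ++ x :: (N ++ y :: D) = (A ++ x :: N) ++ (y :: D) by simp]
      rw [List.getLast?_append_of_ne_nil _ (by simp)]
    rw [e1, e2] at *
    exact h4

theorem IsCyc.cross {G : SimpleGraph V} {A P M D Q : List V} {x y m0 m1 : V}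
    (h : IsCyc G (A ++ x :: ((P ++ M) ++ y :: D))) (hQ : Q ≠ [])
    (hm0 : M.head? = some m0) (hm1 : M.getLast? = some m1)
    (hc : (x :: (Q ++ [m1])).IsChain G.Adj) (hn : Q.Nodup)
    (hd : ∀ v ∈ Q, v ∉ A ++ x :: ((P ++ M) ++ y :: D)) (ha : G.Adj m0 y) :
    IsCyc G (A ++ x :: ((Q ++ M.reverse) ++ y :: D)) := by
  have h1 := h.1
  refine h.replace (by simp [hQ]) ?_ ?_ ?_
  · have hM : M.IsChain G.Adj := by
      have h3 := h.2.2.1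
      rw [List.isChain_split] at h3
      have h4 := h3.2
      rw [← List.cons_append, List.isChain_append] at h4
      have h5 := h4.1
      rw [← List.cons_append, List.isChain_append] at h5
      exact h5.2.1
    have hMr : M.reverse.IsChain G.Adj := by
      rw [List.isChain_reverse]
      exact hM.imp (fun a b hab => hab.symm)
    rw [List.append_assoc, ← List.cons_append, List.isChain_append]
    rw [← List.cons_append, List.isChain_append] at hc
    refine ⟨hc.1, ?_, ?_⟩
    · rw [List.isChain_append]
      refine ⟨hMr, by simp, ?_⟩
      intro a ha' b hb
      simp [hm0] at ha' hb
      subst ha' hb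
      exact ha
    · intro a ha' b hb
      apply hc.2.2 a ha' b
      simp [hm1] at hb
      simp [hb]
  · simp only [List.nodup_append, List.nodup_cons, List.mem_append, List.mem_cons,
      List.nodup_reverse, List.mem_reverse] at h1 hd ⊢
    grind
  · simp only [List.nodup_append, List.nodup_cons, List.mem_append, List.mem_cons,
      List.nodup_reverse, List.mem_reverse] at h1 hd ⊢
    grind

theorem split_at (l : List V) (i j : ℕ) (hij : i < j) (hj : j < l.length) :
    l = l.take i ++ l[i] :: ((l.drop (i+1)).take (j-i-1) ++ l[j] :: l.drop (j+1)) := by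
  have h1 : l = l.take i ++ l.drop i := by simp
  have h2 : l.drop i = l[i] :: l.drop (i+1) := List.drop_eq_getElem_cons (by omega)
  have h3 : l.drop (i+1) = (l.drop (i+1)).take (j-i-1) ++ (l.drop (i+1)).drop (j-i-1) := by simp
  have h4 : (l.drop (i+1)).drop (j-i-1) = l[j] :: l.drop (j+1) := by
    rw [List.drop_drop, show i + 1 + (j-i-1) = j by omega]
    exact List.drop_eq_getElem_cons hj
  rw [← h4, ← h3, ← h2, ← h1]

/-- Replace the segment strictly between positions `i` and `j` by fresh vertices. -/
theorem IsCyc.detour {G : SimpleGraph V} {l : List V} (h : IsCyc G l) {i j : ℕ} (hij : i < j)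
    (hj : j < l.length) {M' : List V} (hne : M' ≠ [])
    (hc : (l[i] :: (M' ++ [l[j]])).IsChain G.Adj) (hn : M'.Nodup) (hd : ∀ v ∈ M', v ∉ l) :
    ∃ l', IsCyc G l' ∧ l'.length + (j - i - 1) = l.length + M'.length := by
  have hs := split_at l i j hij hj
  have hd' : ∀ v ∈ M', v ∉ l.take i ++ l[i] :: ((l.drop (i+1)).take (j-i-1) ++ l[j] :: l.drop (j+1)) := by
    rw [← hs]; exact hd
  refine ⟨l.take i ++ l[i] :: (M' ++ l[j] :: l.drop (j+1)), ?_, ?_⟩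
  · refine IsCyc.replace (M := (l.drop (i+1)).take (j-i-1)) (by rw [← hs]; exact h) hne hc hn ?_
    intro v hv
    have := hd' v hv
    simp only [List.mem_append, List.mem_cons] at this
    grind
  · simp; omega

/-- Insert one vertex. -/
theorem IsCyc.insert {G : SimpleGraph V} {l : List V} (h : IsCyc G l) {i j : ℕ} (hij : i < j)
    (hj : j + 1 < l.length) {z : V} (hz : z ∉ l) (h1 : G.Adj z l[i]) (h2 : G.Adj z l[j])
    (h3 : G.Adj l[i+1] l[j+1]) :
    ∃ l', IsCyc G l' ∧ l'.length = l.length + 1 ∧ l'.toFinset = insert z l.toFinset := by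
  have hs := split_at l i (j+1) (by omega) hj
  set M := (l.drop (i+1)).take (j+1-i-1) with hM
  have hl : M.length = j - i := by simp [hM]; omega
  refine ⟨l.take i ++ l[i] :: (([z] ++ M.reverse) ++ l[j+1] :: l.drop (j+1+1)), ?_, ?_, ?_⟩
  · refine IsCyc.cross (P := []) (m0 := l[i+1]) (m1 := l[j]) (by rw [List.nil_append, ← hs]; exact h)
      (by simp) ?_ ?_ ?_ (by simp) ?_ h3
    · rw [List.head?_eq_getElem?]
      simp [hM]
      grind
    · rw [List.getLast?_eq_getElem?]
      simp [hM]
      grind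
    · simp [h1.symm, h2]
    · simp only [List.nil_append]
      rw [← hs]; simpa using hz
  · simp [hl]; omega
  · conv_rhs => rw [hs]
    ext v
    simp
    grind

/-- Insert three vertices and drop one. -/
theorem IsCyc.insert3 {G : SimpleGraph V} {l : List V} (h : IsCyc G l) {i j : ℕ} (hij : i + 2 ≤ j)
    (hj : j + 1 < l.length) {Q : List V} (hQ : Q ≠ []) (hn : Q.Nodup) (hd : ∀ v ∈ Q, v ∉ l)
    (hc : (l[i] :: (Q ++ [l[j]])).IsChain G.Adj)
    (h3 : G.Adj l[i+2] l[j+1]) :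
    ∃ l', IsCyc G l' ∧ l'.length + 1 = l.length + Q.length := by
  have hs := split_at l i (j+1) (by omega) hj
  set M := (l.drop (i+1)).take (j+1-i-1) with hM
  have hMM : M = [l[i+1]] ++ (l.drop (i+2)).take (j-i-1) := by
    rw [hM, List.drop_eq_getElem_cons (by omega : i+1 < l.length)]
    rw [show j + 1 - i - 1 = (j - i - 1) + 1 by omega, List.take_succ_cons]
    simp
  set M2 := (l.drop (i+2)).take (j-i-1) with hM2
  have hl : M2.length = j - i - 1 := by simp [hM2]; omega
  rw [hMM] at hs
  refine ⟨l.take i ++ l[i] :: ((Q ++ M2.reverse) ++ l[j+1] :: l.drop (j+1+1)), ?_, ?_⟩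
  · refine IsCyc.cross (P := [l[i+1]]) (m0 := l[i+2]) (m1 := l[j]) (by rw [← hs]; exact h)
      hQ ?_ ?_ hc hn ?_ h3
    · rw [List.head?_eq_getElem?]
      simp [hM2]
      grind
    · rw [List.getLast?_eq_getElem?]
      simp [hM2]
      grind
    · rw [← hs]; exact hd
  · simp [hl]; omega
end cyc

section base
open Finset
variable {V : Type*} [Fintype V] [DecidableEq V]

theorem count_pair {ι : Type*} [DecidableEq ι] (f : ι → Finset V) (L : ℕ) (T : Finset ι)
    (h : ∀ a ∈ T, ∀ b ∈ T, a ≠ b → #(f a ∩ f b) ≤ L) :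
    ∑ a ∈ T, #(f a) ≤ #(T.biUnion f) + #T * #T * L := by
  induction T using Finset.induction_on with
  | empty => simp
  | insert a T ha ih =>
    have ih' := ih (fun b hb c hc => h b (mem_insert_of_mem hb) c (mem_insert_of_mem hc))
    rw [sum_insert ha, biUnion_insert, card_insert_of_notMem ha]
    have h1 := card_union_add_card_inter (f a) (T.biUnion f)
    have h2 : #(f a ∩ T.biUnion f) ≤ #T * L := by
      rw [inter_biUnion]
      refine card_biUnion_le_card_mul _ _ _ (fun b hb => ?_)
      exact h a (mem_insert_self _ _) b (mem_insert_of_mem hb) (by rintro rfl; exact ha hb)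
    nlinarith

/-- Among any nine vertices of `O` two have many common neighbours in `O`. -/
def PairProp (G : SimpleGraph V) [DecidableRel G.Adj] (O : Finset V) (L : ℕ) : Prop :=
  ∀ T : Finset V, T ⊆ O → #T = 9 → ∃ a ∈ T, ∃ b ∈ T, a ≠ b ∧
    L ≤ #((G.neighborFinset a ∩ G.neighborFinset b) ∩ O)

variable (G : SimpleGraph V) [DecidableRel G.Adj]

theorem pairProp_of (O : Finset V) (L d : ℕ) (h : ∀ v ∈ O, d ≤ #(G.neighborFinset v ∩ O))
    (hd : #O + 81 * L < 9 * d) : PairProp G O L := by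
  intro T hT h9
  by_contra hcon
  push Not at hcon
  have h1 := count_pair (fun v => G.neighborFinset v ∩ O) L T (by
    intro a ha b hb hab
    have := hcon a ha b hb hab
    rw [← inter_inter_distrib_right]
    omega)
  have h2 : #T * d ≤ ∑ a ∈ T, #(G.neighborFinset a ∩ O) := by
    rw [← smul_eq_mul]
    exact card_nsmul_le_sum _ _ _ (fun v hv => h v (hT hv))
  have h3 : #(T.biUnion (fun v => G.neighborFinset v ∩ O)) ≤ #O :=
    card_le_card (biUnion_subset.2 (fun v _ => inter_subset_right))
  rw [h9] at *
  omega

variable {G}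

theorem evenpath {O : Finset V} {L : ℕ} (hP : PairProp G O L) : ∀ (k : ℕ) (S : Finset V) (z z' : V),
    z ≠ z' → L ≤ #((G.neighborFinset z ∩ G.neighborFinset z') ∩ O) → #S + 2 * k + 20 ≤ L →
    ∃ q : List V, q.length = 2 * k + 1 ∧ q.Nodup ∧ (∀ v ∈ q, v ∈ O ∧ v ∉ S ∧ v ≠ z ∧ v ≠ z') ∧
      (z :: (q ++ [z'])).IsChain G.Adj := by
  intro k
  induction k with
  | zero =>
    intro S z z' hz hc hS
    have : (((G.neighborFinset z ∩ G.neighborFinset z') ∩ O) \ S).Nonempty := by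
      rw [← card_pos]
      have := le_card_sdiff S ((G.neighborFinset z ∩ G.neighborFinset z') ∩ O)
      omega
    obtain ⟨x, hx⟩ := this
    simp at hx
    refine ⟨[x], by simp, by simp, ?_, ?_⟩
    · intro v hv
      simp at hv; subst hv
      exact ⟨hx.1.2.2, hx.2, hx.1.1.ne', hx.1.2.1.ne'⟩
    · simp [hx.1.1, hx.1.2.1.symm]
  | succ k ih =>
    intro S z z' hz hc hS
    have h9 : 9 ≤ #(((G.neighborFinset z ∩ G.neighborFinset z') ∩ O) \ S) := by
      have := le_card_sdiff S ((G.neighborFinset z ∩ G.neighborFinset z') ∩ O)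
      omega
    obtain ⟨T, hT, hT9⟩ := exists_subset_card_eq h9
    have hT' : ∀ v ∈ T, ((G.Adj z v ∧ G.Adj z' v) ∧ v ∈ O) ∧ v ∉ S := by
      intro v hv; have := hT hv; simp at this; tauto
    obtain ⟨a, ha, b, hb, hab, hL⟩ := hP T (fun v hv => (hT' v hv).1.2) hT9
    obtain ⟨q, hq1, hq2, hq3, hq4⟩ := ih (S ∪ {z, z'}) a b hab hL (by
      have h1 := card_union_le S {z, z'}
      have h2 : #({z, z'} : Finset V) ≤ 2 := card_le_two
      omega)
    have ha' := hT' a ha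
    have hb' := hT' b hb
    refine ⟨a :: (q ++ [b]), by simp; omega, ?_, ?_, ?_⟩
    · simp only [List.nodup_cons, List.nodup_append, List.mem_append, List.mem_singleton]
      grind
    · intro v hv
      simp only [List.mem_cons, List.mem_append, List.not_mem_nil, or_false] at hv
      rcases hv with rfl | hv | rfl
      · exact ⟨ha'.1.2, ha'.2, ha'.1.1.1.ne', ha'.1.1.2.ne'⟩
      · have := hq3 v hv
        simp at this
        tauto
      · exact ⟨hb'.1.2, hb'.2, hb'.1.1.1.ne', hb'.1.1.2.ne'⟩
    · rw [List.cons_append, List.isChain_cons_cons]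
      refine ⟨ha'.1.1.1, ?_⟩
      rw [List.append_assoc, List.singleton_append, ← List.cons_append, List.isChain_split]
      exact ⟨by simpa using hq4, by simp [hb'.1.1.2.symm]⟩

theorem isCyc_mk {p q : V} {m : List V} (h1 : (p :: (m ++ [q])).Nodup) (h2 : m ≠ [])
    (h3 : (p :: (m ++ [q])).IsChain G.Adj) (h4 : G.Adj q p) : IsCyc G (p :: (m ++ [q])) := by
  refine ⟨h1, ?_, h3, ?_⟩
  · have : 0 < m.length := List.length_pos_iff.2 h2
    simp; omega
  · intro x hx y hy
    rw [← List.cons_append, List.getLast?_append_of_ne_nil _ (by simp)] at hy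
    simp at hx hy
    subst hx hy
    exact h4

theorem evencyc {L : ℕ} (hP : PairProp G univ L) (h9 : 9 ≤ Fintype.card V) (k : ℕ)
    (hk : 2 * k + 40 ≤ L) : ∃ l, IsCyc G l ∧ l.length = 2 * k + 4 := by
  obtain ⟨T, hT, hT9⟩ := exists_subset_card_eq (s := (univ : Finset V)) (n := 9) (by simpa using h9)
  obtain ⟨a, ha, b, hb, hab, hL⟩ := hP T hT hT9
  obtain ⟨c, hc⟩ : ((G.neighborFinset a ∩ G.neighborFinset b) ∩ univ).Nonempty := by
    rw [← card_pos]; omega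
  simp at hc
  obtain ⟨q, hq1, hq2, hq3, hq4⟩ := evenpath hP k {c} a b hab hL (by simp; omega)
  refine ⟨c :: ((a :: q) ++ [b]), isCyc_mk ?_ (by simp) ?_ hc.2, by simp; omega⟩
  · simp only [List.nodup_cons, List.nodup_append, List.mem_append, List.mem_singleton,
      List.cons_append]
    have := hc.1.ne
    have := hc.2.ne
    grind
  · simp [hc.1.symm] at hq4 ⊢
    exact hq4

theorem colorable_two (p : V → Prop) (h1 : ∀ a b, p a → p b → ¬ G.Adj a b)
    (h2 : ∀ a b, ¬ p a → ¬ p b → ¬ G.Adj a b) : G.Colorable 2 := by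
  classical
  refine ⟨Coloring.mk (fun v => if p v then (0 : Fin 2) else 1) ?_⟩
  intro a b hab
  by_cases ha : p a <;> by_cases hb : p b <;> simp [ha, hb]
  · exact h1 a b ha hb hab
  · exact h2 a b ha hb hab

/-- Many common neighbours. -/
def RR (G : SimpleGraph V) [DecidableRel G.Adj] (L : ℕ) (a b : V) : Prop :=
  L ≤ #(G.neighborFinset a ∩ G.neighborFinset b)

theorem RR.symm {L : ℕ} {a b : V} (h : RR G L a b) : RR G L b a := by
  unfold RR at *; rwa [inter_comm]

theorem oddA {L k : ℕ} (hP : PairProp G univ L) (hk : 2 * k + 40 ≤ L)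
    (H : ∀ l, IsCyc G l → l.length ≠ 2 * k + 5) {v p q : V} (hpq : G.Adj p q)
    (h1 : RR G L v p) (h2 : RR G L v q) : False := by
  have key : ∀ p q : V, G.Adj p q → RR G L p q → False := by
    intro p q hpq h
    obtain ⟨m, hq1, hq2, hq3, hq4⟩ := evenpath hP (k+1) ∅ p q hpq.ne (by simpa [RR] using h) (by simp; omega)
    refine H (p :: (m ++ [q])) (isCyc_mk ?_ ?_ hq4 hpq.symm) (by simp; omega)
    · simp only [List.nodup_cons, List.nodup_append, List.mem_append, List.mem_singleton]
      have := hpq.ne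
      grind
    · rintro rfl; simp at hq1
  by_cases hp : v = p
  · subst hp; exact key v q hpq h2
  by_cases hq : v = q
  · subst hq; exact key v p hpq.symm h1
  obtain ⟨c, hc⟩ : ((G.neighborFinset v ∩ G.neighborFinset p) \ {q}).Nonempty := by
    rw [← card_pos]
    have := le_card_sdiff {q} (G.neighborFinset v ∩ G.neighborFinset p)
    have h1' := h1
    unfold RR at h1'
    simp at this
    omega
  simp at hc
  obtain ⟨m, hq1, hq2, hq3, hq4⟩ := evenpath hP k {p, c} v q hq (by simpa [RR] using h2) (by
    have : #({p, c} : Finset V) ≤ 2 := card_le_two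
    omega)
  refine H (p :: ((c :: v :: m) ++ [q])) (isCyc_mk ?_ (by simp) ?_ hpq.symm) (by simp; omega)
  · simp only [List.nodup_cons, List.nodup_append, List.mem_append, List.mem_singleton,
      List.cons_append, List.mem_cons]
    have := hpq.ne
    have := hc.1.1.ne
    have := hc.1.2.ne
    grind
  · simp [hc.1.1.symm, hc.1.2] at hq4 ⊢
    exact hq4

theorem oddB {L k : ℕ} (hP : PairProp G univ L) (hk : 2 * k + 40 ≤ L)
    (H : ∀ l, IsCyc G l → l.length ≠ 2 * k + 5) {x y a b : V} (hxy : G.Adj x y)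
    (ha : G.Adj x a) (hb : G.Adj y b) (hab : a ≠ b) (hay : a ≠ y) (hbx : b ≠ x)
    (h : RR G L a b) : False := by
  obtain ⟨m, hq1, hq2, hq3, hq4⟩ := evenpath hP k {x, y} a b hab (by simpa [RR] using h) (by
    have : #({x, y} : Finset V) ≤ 2 := card_le_two
    omega)
  refine H (x :: ((a :: (m ++ [b])) ++ [y])) (isCyc_mk ?_ (by simp) ?_ hxy.symm) (by simp; omega)
  · simp only [List.nodup_cons, List.nodup_append, List.mem_append, List.mem_singleton,
      List.cons_append, List.mem_cons]
    have := hxy.ne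
    have := ha.ne
    have := hb.ne
    grind
  · rw [List.cons_append, List.isChain_cons_cons]
    refine ⟨ha, ?_⟩
    rw [List.append_assoc, List.singleton_append, ← List.cons_append, List.isChain_split]
    exact ⟨by simpa using hq4, by simp [hb.symm]⟩
end base

section base3
open Finset
variable {V : Type*} [Fintype V] [DecidableEq V]
variable {G : SimpleGraph V} [DecidableRel G.Adj]

instance instDecRR (G : SimpleGraph V) [DecidableRel G.Adj] (L : ℕ) (a : V) : DecidablePred (RR G L a) :=
  fun b => inferInstanceAs (Decidable (L ≤ #(G.neighborFinset a ∩ G.neighborFinset b)))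

/-- Hypotheses for the short odd cycle argument. -/
structure BD (G : SimpleGraph V) [DecidableRel G.Adj] (d L : ℕ) : Prop where
  deg : ∀ v, d ≤ #(G.neighborFinset v)
  n : Fintype.card V ≤ 3 * d
  hL : 1000 * L ≤ d
  L0 : 0 < L
  A : ∀ v p q, G.Adj p q → RR G L v p → RR G L v q → False
  B : ∀ x y a b, G.Adj x y → G.Adj x a → G.Adj y b → a ≠ b → a ≠ y → b ≠ x → RR G L a b → False
  ncol : ¬ G.Colorable 2

namespace BD
variable {d L : ℕ}

theorem refl (h : BD G d L) (v : V) : RR G L v v := by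
  have := h.deg v; have := h.hL
  unfold RR; rw [inter_self]; omega

theorem ne (h : BD G d L) {a b : V} (hab : ¬ RR G L a b) : a ≠ b := by
  rintro rfl; exact hab (h.refl a)

theorem adj (h : BD G d L) {a b : V} (hab : G.Adj a b) : ¬ RR G L a b := fun hR => h.A a a b hab (h.refl a) hR

theorem four (h : BD G d L) {a b c e : V} (h1 : ¬ RR G L a b) (h2 : ¬ RR G L a c) (h3 : ¬ RR G L a e)
    (h4 : ¬ RR G L b c) (h5 : ¬ RR G L b e) (h6 : ¬ RR G L c e) : False := by
  have := h.ne h1; have := h.ne h2; have := h.ne h3; have := h.ne h4; have := h.ne h5; have := h.ne h6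
  have hh := count_pair (fun v => G.neighborFinset v) L {a, b, c, e} (by
    have hs : ∀ p q, ¬ RR G L p q → #(G.neighborFinset p ∩ G.neighborFinset q) ≤ L ∧
        #(G.neighborFinset q ∩ G.neighborFinset p) ≤ L := by
      intro p q hpq
      unfold RR at hpq
      rw [inter_comm (G.neighborFinset q)]
      omega
    have := hs _ _ h1; have := hs _ _ h2; have := hs _ _ h3; have := hs _ _ h4; have := hs _ _ h5; have := hs _ _ h6
    intro p hp q hq hpq
    simp only [mem_insert, mem_singleton] at hp hq
    rcases hp with rfl | rfl | rfl | rfl <;> rcases hq with rfl | rfl | rfl | rfl <;> first | exact absurd rfl hpq | tauto)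
  have hc : #({a, b, c, e} : Finset V) = 4 := by
    rw [card_insert_of_notMem, card_insert_of_notMem, card_insert_of_notMem, card_singleton] <;> simp <;> tauto
  have h2 : #({a, b, c, e} : Finset V) * d ≤ ∑ v ∈ ({a, b, c, e} : Finset V), #(G.neighborFinset v) := by
    rw [← smul_eq_mul]
    exact card_nsmul_le_sum _ _ _ (fun v hv => h.deg v)
  have h3 := card_le_univ (({a, b, c, e} : Finset V).biUnion (fun v => G.neighborFinset v))
  rw [hc] at hh h2
  have := h.n; have := h.hL; have := h.L0
  omega

theorem three (h : BD G d L) {a b c : V} (h1 : ¬ RR G L a b) (h2 : ¬ RR G L a c) (h4 : ¬ RR G L b c) :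
    #(G.neighborFinset a) + #(G.neighborFinset b) + #(G.neighborFinset c) ≤
      #(G.neighborFinset a ∪ (G.neighborFinset b ∪ G.neighborFinset c)) + 9 * L := by
  have := h.ne h1; have := h.ne h2; have := h.ne h4
  unfold RR at *
  have e1 := card_union_add_card_inter (G.neighborFinset b) (G.neighborFinset c)
  have e2 := card_union_add_card_inter (G.neighborFinset a) (G.neighborFinset b ∪ G.neighborFinset c)
  rw [inter_union_distrib_left] at e2
  have e3 := card_union_le (G.neighborFinset a ∩ G.neighborFinset b) (G.neighborFinset a ∩ G.neighborFinset c)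
  omega

theorem exN (h : BD G d L) (x : V) (S : Finset V) (hS : #S ≤ 100) : ∃ a, G.Adj x a ∧ a ∉ S := by
  obtain ⟨a, ha⟩ : (G.neighborFinset x \ S).Nonempty := by
    rw [← card_pos]
    have := le_card_sdiff S (G.neighborFinset x)
    have := h.deg x; have := h.hL; have := h.L0
    omega
  simp at ha
  exact ⟨a, ha⟩

theorem noTri (h : BD G d L) {x y c : V} (hxy : G.Adj x y) (hxc : G.Adj x c) (hyc : G.Adj y c) : False := by
  obtain ⟨a, ha, ha'⟩ := h.exN x {y, c} (card_le_two.trans (by norm_num))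
  obtain ⟨b, hb, hb'⟩ := h.exN y {x, c, a} (card_le_three.trans (by norm_num))
  obtain ⟨e, he, he'⟩ := h.exN c {x, y, a, b} (card_le_four.trans (by norm_num))
  simp only [mem_insert, mem_singleton, not_or] at ha' hb' he'
  refine h.four (a := c) (b := a) (c := b) (e := e) ?_ ?_ ?_ ?_ ?_ ?_
  · exact fun hR => h.B y x c a hxy.symm hyc ha (Ne.symm ha'.2) hxc.ne' ha'.1 hR
  · exact fun hR => h.B x y c b hxy hxc hb (Ne.symm hb'.2.1) hyc.ne' hb'.1 hR
  · exact h.adj he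
  · exact fun hR => h.B x y a b hxy ha hb (Ne.symm hb'.2.2) ha'.1 hb'.1 hR
  · exact fun hR => h.B x c a e hxc ha he (Ne.symm he'.2.2.1) ha'.2 he'.1 hR
  · exact fun hR => h.B y c b e hyc hb he (Ne.symm he'.2.2.2) hb'.2.1 he'.2.1 hR

theorem exEdge (h : BD G d L) : ∃ x y, G.Adj x y ∧ (∀ a b, G.Adj x a → G.Adj x b → RR G L a b) ∧
    (∀ a b, G.Adj y a → G.Adj y b → RR G L a b) := by
  by_contra hcon
  push Not at hcon
  refine h.ncol (colorable_two (fun x => ∀ a b, G.Adj x a → G.Adj x b → RR G L a b) ?_ ?_)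
  · intro x y hx hy hxy
    obtain ⟨a, b, ha, hb, hR⟩ := hcon x y hxy hx
    exact hR (hy a b ha hb)
  · intro x y hx hy hxy
    push Not at hx hy
    obtain ⟨a, a', ha, ha', hR⟩ := hx
    obtain ⟨b, b', hb, hb', hR'⟩ := hy
    have key : ∀ a b, G.Adj x a → G.Adj y b → ¬ RR G L a b := by
      intro a b ha hb hab
      by_cases e1 : a = b
      · subst e1; exact h.noTri hxy ha hb
      by_cases e2 : a = y
      · subst e2; exact h.adj hb hab
      by_cases e3 : b = x
      · subst e3; exact h.adj ha.symm hab
      exact h.B x y a b hxy ha hb e1 e2 e3 hab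
    exact h.four hR (key _ _ ha hb) (key _ _ ha hb') (key _ _ ha' hb) (key _ _ ha' hb') hR'

theorem exThird (h : BD G d L) {u p : V} (_hup : ¬ RR G L u p) : ∃ w, ¬ RR G L u w ∧ ¬ RR G L p w := by
  by_contra hcon
  push Not at hcon
  refine h.ncol (colorable_two (fun w => RR G L u w) ?_ ?_)
  · intro a b ha hb hab; exact h.A u a b hab ha hb
  · intro a b ha hb hab; exact h.A p a b hab (hcon _ ha) (hcon _ hb)

theorem degLe (h : BD G d L) (u : V) : #(G.neighborFinset u) ≤ d + 9 * L := by
  obtain ⟨p, hp, -⟩ := h.exN u ∅ (by simp)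
  obtain ⟨w, hw, hw'⟩ := h.exThird (h.adj hp)
  have h1 := h.three (h.adj hp) hw hw'
  have h2 := card_le_univ (G.neighborFinset u ∪ (G.neighborFinset p ∪ G.neighborFinset w))
  have := h.n; have := h.deg p; have := h.deg w
  omega

theorem noIndep (h : BD G d L) (I : Finset V) (hI : ∀ a ∈ I, ∀ b ∈ I, ¬ G.Adj a b) (hc : 2 * d ≤ #I + 100 * L) : False := by
  have h1 := card_mul_le_card_mul (s := I) (t := Iᶜ) (m := d) (n := d + 9 * L) G.Adj (by
    intro a ha
    refine (h.deg a).trans (card_le_card ?_)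
    intro b hb
    simp at hb
    simp only [bipartiteAbove, mem_filter, mem_compl]
    exact ⟨fun hb' => hI a ha b hb' hb, hb⟩) (by
    intro b hb
    refine le_trans (card_le_card ?_) (h.degLe b)
    intro a ha
    simp only [bipartiteBelow, mem_filter] at ha
    simpa using ha.2.symm)
  have h2 := card_add_card_compl I
  have := h.n; have h3 := h.hL; have := h.L0
  have h4 : #Iᶜ ≤ d + 100 * L := by omega
  have h5 : #Iᶜ * (d + 9 * L) ≤ (d + 100 * L) * (d + 9 * L) := Nat.mul_le_mul_right _ h4
  have h6 : 2 * d * d ≤ (#I + 100 * L) * d := Nat.mul_le_mul_right _ hc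
  nlinarith

theorem near (h : BD G d L) {x y w : V} (hxy : G.Adj x y) (hxw : ¬ RR G L x w) (hyw : ¬ RR G L y w)
    (hX : 2 * L ≤ #(G.neighborFinset w ∩ univ.filter (RR G L x))) :
    #(G.neighborFinset x \ univ.filter (RR G L w)) ≤ 40 * L := by
  obtain ⟨X0, hX0, hX0c⟩ := exists_subset_card_eq hX
  have hun := h.three (h.adj hxy) hxw hyw
  have d1 := h.deg x
  have d2 := h.deg y
  have d3 := h.deg w
  have hL := h.hL
  have hL0 := h.L0
  have hn := h.n
  set A := G.neighborFinset x \ univ.filter (RR G L w) with hA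
  have h1 := card_mul_le_card_mul (s := A) (t := X0) (m := L) (n := 20 * L) (fun a v => ¬ G.Adj a v) (by
    intro a ha
    have e : #(bipartiteAbove (fun a v => ¬ G.Adj a v) X0 a) + #(X0.filter (fun v => G.Adj a v)) = #X0 := by
      rw [add_comm]; exact card_filter_add_card_filter_not _
    have e2 : #(X0.filter (fun v => G.Adj a v)) ≤ #(G.neighborFinset w ∩ G.neighborFinset a) := by
      apply card_le_card
      intro v hv
      simp only [mem_filter] at hv
      have := hX0 hv.1
      simp at this ⊢
      exact ⟨this.1, hv.2⟩
    have e3 : ¬ RR G L w a := by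
      simp [hA] at ha; exact ha.2
    unfold RR at e3
    omega) (by
    intro v hv
    have hv' := hX0 hv
    simp at hv'
    have r1 : ¬ RR G L y v := fun hR => h.A v x y hxy hv'.2.symm hR.symm
    have r2 : ¬ RR G L w v := h.adj hv'.1
    unfold RR at r1 r2
    have s1 : #(bipartiteBelow (fun a v => ¬ G.Adj a v) A v) ≤ #(G.neighborFinset x \ G.neighborFinset v) := by
      apply card_le_card
      intro a ha
      simp only [bipartiteBelow, mem_filter] at ha
      simp [hA] at ha ⊢
      exact ⟨ha.1.1, fun hh => ha.2 hh.symm⟩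
    have s2 := card_sdiff_add_card_inter (G.neighborFinset x) (G.neighborFinset v)
    have s3 := h.degLe x
    set U := G.neighborFinset x ∪ (G.neighborFinset y ∪ G.neighborFinset w) with hU
    have s4 : #(G.neighborFinset v) ≤ #(G.neighborFinset x ∩ G.neighborFinset v) +
        #(G.neighborFinset y ∩ G.neighborFinset v) + #(G.neighborFinset w ∩ G.neighborFinset v) + #Uᶜ := by
      have : G.neighborFinset v ⊆ ((G.neighborFinset x ∩ G.neighborFinset v ∪
        G.neighborFinset y ∩ G.neighborFinset v) ∪ G.neighborFinset w ∩ G.neighborFinset v) ∪ Uᶜ := by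
        intro a ha
        simp [hU] at ha ⊢
        tauto
      refine (card_le_card this).trans ?_
      refine (card_union_le _ _).trans ?_
      gcongr
      refine (card_union_le _ _).trans ?_
      gcongr
      exact card_union_le _ _
    have s5 := card_add_card_compl U
    have s6 := h.deg v
    omega)
  rw [hX0c] at h1
  have : #A * L ≤ (40 * L) * L := by nlinarith
  exact Nat.le_of_mul_le_mul_right this hL0

theorem far (h : BD G d L) {x y w : V} (hxy : G.Adj x y) (hxw : ¬ RR G L x w) (hyw : ¬ RR G L y w)
    (hS : ∀ a b, G.Adj y a → G.Adj y b → RR G L a b)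
    (hX : #(G.neighborFinset w ∩ univ.filter (RR G L y)) < 2 * L) : False := by
  have d2 := h.deg y
  have d3 := h.deg w
  have hun : G.neighborFinset w ⊆ (G.neighborFinset w ∩ univ.filter (RR G L y)) ∪
      (G.neighborFinset w ∩ univ.filter (RR G L x)) := by
    intro v hv
    simp at hv ⊢
    by_contra hcon
    exact h.four (h.adj hxy) hxw (fun h' => hcon (Or.inr ⟨hv, h'⟩)) hyw
      (fun h' => hcon (Or.inl ⟨hv, h'⟩)) (h.adj hv)
  have h1 := (card_le_card hun).trans (card_union_le _ _)
  refine h.noIndep (univ.filter (RR G L x)) ?_ ?_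
  · intro a ha b hb hab
    simp at ha hb
    exact h.A x a b hab ha hb
  · set X := G.neighborFinset w ∩ univ.filter (RR G L x) with hXd
    have h2 : X ∪ G.neighborFinset y ⊆ univ.filter (RR G L x) := by
      intro v hv
      simp [hXd] at hv ⊢
      rcases hv with hv | hv
      · exact hv.2
      · exact hS _ _ hxy.symm hv
    have h3 := card_le_card h2
    have h4 := card_union_add_card_inter X (G.neighborFinset y)
    have h5 : #(X ∩ G.neighborFinset y) ≤ #(G.neighborFinset y ∩ G.neighborFinset w) := by
      apply card_le_card
      intro v hv
      simp [hXd] at hv ⊢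
      tauto
    unfold RR at hyw
    omega

theorem final (h : BD G d L) : False := by
  obtain ⟨x, y, hxy, hx, hy⟩ := h.exEdge
  obtain ⟨w, hxw, hyw⟩ := h.exThird (h.adj hxy)
  by_cases c1 : #(G.neighborFinset w ∩ univ.filter (RR G L y)) < 2 * L
  · exact h.far hxy hxw hyw hy c1
  by_cases c2 : #(G.neighborFinset w ∩ univ.filter (RR G L x)) < 2 * L
  · exact h.far hxy.symm hyw hxw hx c2
  have n1 := h.near hxy hxw hyw (by omega)
  have n2 := h.near hxy.symm hyw hxw (by omega)
  have d1 := h.deg x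
  have d2 := h.deg y
  refine h.noIndep (univ.filter (RR G L w)) ?_ ?_
  · intro a ha b hb hab
    simp at ha hb
    exact h.A w a b hab ha hb
  · set W := univ.filter (RR G L w)
    have h1 := card_sdiff_add_card_inter (G.neighborFinset x) W
    have h2 := card_sdiff_add_card_inter (G.neighborFinset y) W
    have h3 := card_union_add_card_inter (G.neighborFinset x ∩ W) (G.neighborFinset y ∩ W)
    have h4 : #(G.neighborFinset x ∩ W ∪ G.neighborFinset y ∩ W) ≤ #W := by
      apply card_le_card
      intro v hv
      simp at hv
      tauto
    have h5 : #((G.neighborFinset x ∩ W) ∩ (G.neighborFinset y ∩ W)) ≤ #(G.neighborFinset x ∩ G.neighborFinset y) := by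
      apply card_le_card
      intro v hv
      simp at hv ⊢
      tauto
    have := h.adj hxy
    unfold RR at this
    omega
end BD

theorem base_cyc (G : SimpleGraph V) [DecidableRel G.Adj] (d L : ℕ) (hd : ∀ v, d ≤ #(G.neighborFinset v))
    (hn : Fintype.card V ≤ 3 * d) (hL : 1000 * L ≤ d) (h9 : 9 ≤ Fintype.card V) (hcol : ¬ G.Colorable 2)
    (t : ℕ) (ht : 4 ≤ t) (htL : t + 40 ≤ L) : ∃ l, IsCyc G l ∧ l.length = t := by
  have hP : PairProp G univ L := pairProp_of G univ L d (by simpa using hd) (by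
    rw [card_univ]; omega)
  obtain ⟨k, hk | hk⟩ : ∃ k, t = 2 * k + 4 ∨ t = 2 * k + 5 := ⟨(t - 4) / 2, by omega⟩
  · subst hk
    exact evencyc hP h9 k (by omega)
  · subst hk
    by_contra hcon
    have H : ∀ l, IsCyc G l → l.length ≠ 2 * k + 5 := fun l hl hl' => hcon ⟨l, hl, hl'⟩
    have hb : BD G d L :=
      { deg := hd, n := hn, hL := hL, L0 := by omega, ncol := hcol
        A := fun v p q hpq h1 h2 => oddA hP (by omega) H hpq h1 h2
        B := fun x y a b h1 h2 h3 h4 h5 h6 h7 => oddB hP (by omega) H h1 h2 h3 h4 h5 h6 h7 }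
    exact hb.final
end base3

section growth
open Finset
variable {V : Type*} [Fintype V] [DecidableEq V]
variable {G : SimpleGraph V} [DecidableRel G.Adj]

open Classical in
/-- Indices `i` such that the vertex at position `i + m` exists and lies in `S`. -/
noncomputable def idx (l : List V) (m : ℕ) (S : Finset V) : Finset ℕ :=
  (range l.length).filter (fun i => ∃ h : i + m < l.length, l[i+m] ∈ S)

theorem mem_idx {l : List V} {m : ℕ} {S : Finset V} {i : ℕ} :
    i ∈ idx l m S ↔ ∃ h : i + m < l.length, l[i+m] ∈ S := by
  unfold idx
  simp only [mem_filter, mem_range]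
  constructor
  · exact fun h => h.2
  · rintro ⟨h, h'⟩; exact ⟨by omega, h, h'⟩

theorem card_idx_le {l : List V} (hl : l.Nodup) (m : ℕ) (S : Finset V) : #(idx l m S) ≤ #S := by
  refine card_le_card_of_forall_subsingleton (fun i v => l[i+m]? = some v) ?_ ?_
  · intro i hi
    obtain ⟨h, h'⟩ := mem_idx.1 hi
    exact ⟨_, h', by simp [h]⟩
  · intro v hv i hi j hj
    have h1 := hi.2
    have h2 := hj.2
    rw [List.getElem?_eq_some_iff] at h1 h2
    obtain ⟨a, ha⟩ := h1
    obtain ⟨b, hb⟩ := h2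
    have := (hl.getElem_inj_iff (hi := a) (hj := b)).1 (ha.trans hb.symm)
    omega

theorem le_card_idx {l : List V} (S : Finset V) : #(S ∩ l.toFinset) ≤ #(idx l 0 S) := by
  refine card_le_card_of_forall_subsingleton (fun v i => l[i]? = some v) ?_ ?_
  · intro v hv
    simp at hv
    obtain ⟨i, hi, rfl⟩ := List.getElem_of_mem hv.2
    exact ⟨i, mem_idx.2 ⟨by simpa using hi, by simpa using hv.1⟩, by simp [hi]⟩
  · intro i hi v hv w hw
    have h1 := hv.2
    have h2 := hw.2
    rw [h1] at h2
    simpa using h2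

/-- Insertion between two consecutive neighbours. -/
theorem IsCyc.ins1 {l : List V} (h : IsCyc G l) {z : V} (hz : z ∉ l)
    (hd : l.length + 1 < 2 * #(G.neighborFinset z ∩ l.toFinset)) :
    ∃ l', IsCyc G l' ∧ l'.length = l.length + 1 ∧ l'.toFinset = Insert.insert z l.toFinset := by
  set J := idx l 0 (G.neighborFinset z) with hJ
  have h1 : #(G.neighborFinset z ∩ l.toFinset) ≤ #J := le_card_idx _
  have h2 : ¬ Disjoint J (J.image Nat.succ) := by
    intro hdis
    have e1 := card_union_of_disjoint hdis
    rw [card_image_of_injective _ Nat.succ_injective] at e1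
    have e2 : J ∪ J.image Nat.succ ⊆ range (l.length + 1) := by
      intro i hi
      simp only [mem_union, mem_image] at hi
      rcases hi with hi | ⟨j, hj, rfl⟩
      · obtain ⟨h, -⟩ := mem_idx.1 hi; simp at h ⊢; omega
      · obtain ⟨h, -⟩ := mem_idx.1 hj; simp at h ⊢; omega
    have e3 := card_le_card e2
    simp at e3
    omega
  rw [not_disjoint_iff] at h2
  obtain ⟨j, hj1, hj2⟩ := h2
  simp only [mem_image] at hj2
  obtain ⟨i, hi, rfl⟩ := hj2
  obtain ⟨a1, a2⟩ := mem_idx.1 hi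
  obtain ⟨b1, b2⟩ := mem_idx.1 hj1
  simp at a1 a2 b1 b2
  have hs := split_at l i (i+1) (by omega) b1
  have hz' : z ∉ l.take i ++ l[i] :: ((l.drop (i+1)).take (i+1-i-1) ++ l[i+1] :: l.drop (i+1+1)) := by
    rw [← hs]; exact hz
  refine ⟨l.take i ++ l[i] :: ([z] ++ l[i+1] :: l.drop (i+1+1)), ?_, ?_, ?_⟩
  · refine IsCyc.replace (M := (l.drop (i+1)).take (i+1-i-1)) (by rw [← hs]; exact h) (by simp) ?_ (by simp) ?_
    · simp [a2.symm, b2]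
    · intro v hv
      simp at hv; subst hv
      simp only [List.mem_append, List.mem_cons] at hz'
      grind
  · simp; omega
  · conv_rhs => rw [hs]
    ext v
    simp
    grind

/-- Insertion by a crossing at nearly complete vertices. -/
theorem IsCyc.ins2 {l : List V} (h : IsCyc G l) {z : V} (hz : z ∉ l) (K : Finset V)
    (hK : ∀ v ∈ l, v ∉ K → #(l.toFinset \ G.neighborFinset v) ≤ 20)
    (hd : #K + 30 < #(G.neighborFinset z ∩ l.toFinset)) :
    ∃ l', IsCyc G l' ∧ l'.length = l.length + 1 ∧ l'.toFinset = Insert.insert z l.toFinset := by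
  set J := idx l 0 (G.neighborFinset z) with hJ
  have h1 : #(G.neighborFinset z ∩ l.toFinset) ≤ #J := le_card_idx _
  have h2 := card_idx_le h.1 1 K
  set J' := J \ (idx l 1 K ∪ {l.length - 1}) with hJ'
  have h3 : 29 ≤ #J' := by
    have e1 := le_card_sdiff (idx l 1 K ∪ {l.length - 1}) J
    rw [← hJ'] at e1
    have e2 := card_union_le (idx l 1 K) {l.length - 1}
    simp only [card_singleton] at e2
    omega
  have hmem : ∀ i ∈ J', ∃ (h1 : i + 1 < l.length), G.Adj z l[i] ∧ l[i+1] ∉ K := by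
    intro i hi
    simp only [hJ', mem_sdiff, mem_union, mem_singleton, not_or, mem_idx, hJ] at hi
    obtain ⟨⟨a1, a2⟩, a3, a4⟩ := hi
    simp at a1 a2
    refine ⟨by omega, a2, fun hk => a3 ⟨by omega, hk⟩⟩
  obtain ⟨i, hi⟩ : J'.Nonempty := by rw [← card_pos]; omega
  obtain ⟨i1, i2, i3⟩ := hmem i hi
  have h4 := hK l[i+1] (by simp) i3
  have h5 := card_idx_le h.1 1 (l.toFinset \ G.neighborFinset l[i+1])
  obtain ⟨j, hj⟩ : (J' \ (idx l 1 (l.toFinset \ G.neighborFinset l[i+1]) ∪ {i})).Nonempty := by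
    rw [← card_pos]
    have e1 := le_card_sdiff (idx l 1 (l.toFinset \ G.neighborFinset l[i+1]) ∪ {i}) J'
    have e2 := card_union_le (idx l 1 (l.toFinset \ G.neighborFinset l[i+1])) {i}
    simp only [card_singleton] at e2
    omega
  simp only [mem_sdiff, mem_union, mem_singleton, not_or, mem_idx] at hj
  obtain ⟨hj, j5, j4⟩ := hj
  obtain ⟨j1, j2, j3⟩ := hmem j hj
  have hadj : G.Adj l[i+1] l[j+1] := by
    by_contra hcon
    exact j5 ⟨j1, by simp, by simpa using hcon⟩
  rcases lt_or_gt_of_ne j4 with hlt | hlt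
  · exact h.insert hlt i1 hz j2 i2 hadj.symm
  · exact h.insert hlt j1 hz i2 j2 hadj

theorem greedy9 {α : Type*} [DecidableEq α] (P : α → Prop) (R : α → α → Prop) (hs : ∀ a b, R a b → R b a)
    (h : ∀ T : Finset α, #T ≤ 8 → (∀ a ∈ T, P a) → ∃ b, P b ∧ b ∉ T ∧ ∀ a ∈ T, R a b) :
    ∃ T : Finset α, #T = 9 ∧ (∀ a ∈ T, P a) ∧ ∀ a ∈ T, ∀ b ∈ T, a ≠ b → R a b := by
  have key : ∀ m ≤ 9, ∃ T : Finset α, #T = m ∧ (∀ a ∈ T, P a) ∧ ∀ a ∈ T, ∀ b ∈ T, a ≠ b → R a b := by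
    intro m
    induction m with
    | zero => intro _; exact ⟨∅, by simp⟩
    | succ m ih =>
      intro hm
      obtain ⟨T, h1, h2, h3⟩ := ih (by omega)
      obtain ⟨b, hb, hbT, hR⟩ := h T (by omega) h2
      refine ⟨insert b T, by rw [card_insert_of_notMem hbT, h1], ?_, ?_⟩
      · intro a ha
        rcases mem_insert.1 ha with rfl | ha
        · exact hb
        · exact h2 a ha
      · intro a ha c hc hac
        rcases mem_insert.1 ha with rfl | ha <;> rcases mem_insert.1 hc with rfl | hc
        · exact absurd rfl hac
        · exact hs _ _ (hR _ (by assumption))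
        · exact hR _ (by assumption)
        · exact h3 a ha c hc hac
  exact key 9 le_rfl

/-- Nine pairs with distinct second coordinates contain a pair with many common neighbours. -/
theorem pick {O : Finset V} {L : ℕ} (hP : PairProp G O L) (P : ℕ × V → Prop) (R : ℕ × V → ℕ × V → Prop)
    (hO : ∀ a, P a → a.2 ∈ O)
    (hs : ∀ a b, R a b → R b a)
    (h : ∀ T : Finset (ℕ × V), #T ≤ 8 → (∀ a ∈ T, P a) →
      ∃ b, P b ∧ (∀ a ∈ T, a.2 ≠ b.2) ∧ ∀ a ∈ T, R a b) :
    ∃ a b, P a ∧ P b ∧ R a b ∧ a.2 ≠ b.2 ∧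
      L ≤ #((G.neighborFinset a.2 ∩ G.neighborFinset b.2) ∩ O) := by
  obtain ⟨T, h1, h2, h3⟩ := greedy9 P (fun a b => R a b ∧ a.2 ≠ b.2) (fun a b hab => ⟨hs _ _ hab.1, hab.2.symm⟩)
    (by
      intro T hT hTP
      obtain ⟨b, hb, hb1, hb2⟩ := h T hT hTP
      exact ⟨b, hb, fun hbT => hb1 b hbT rfl, fun a ha => ⟨hb2 a ha, hb1 a ha⟩⟩)
  have hc : #(T.image Prod.snd) = 9 := by
    rw [card_image_of_injOn, h1]
    intro a ha b hb hab
    by_contra hne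
    exact (h3 a ha b hb hne).2 hab
  obtain ⟨u, hu, v, hv, huv, hL⟩ := hP _ (by
    intro v hv
    simp only [mem_image] at hv
    obtain ⟨a, ha, rfl⟩ := hv
    exact hO a (h2 a ha)) hc
  simp only [mem_image] at hu hv
  obtain ⟨a, ha, rfl⟩ := hu
  obtain ⟨b, hb, rfl⟩ := hv
  exact ⟨a, b, h2 a ha, h2 b hb, (h3 a ha b hb (by rintro rfl; exact huv rfl)).1, huv, hL⟩

theorem atMostOne (P : V → Prop) (x : V) : (∃ b b', b ≠ b' ∧ P b ∧ P b') ∨ ∃ b, ∀ z, P z → z = b := by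
  by_cases h : ∃ b, P b
  · obtain ⟨b, hb⟩ := h
    by_cases h' : ∃ z, P z ∧ z ≠ b
    · obtain ⟨z, hz, hzb⟩ := h'
      exact Or.inl ⟨z, b, hzb, hz, hb⟩
    · push Not at h'
      exact Or.inr ⟨b, h'⟩
  · push Not at h
    exact Or.inr ⟨x, fun z hz => absurd hz (h z)⟩

theorem outPair {d L : ℕ} {l : List V} (r : V) (hd : ∀ v, d ≤ #(G.neighborFinset v))
    (hn : Fintype.card V ≤ 3 * d) (hL : 1000 * L ≤ d) (hL0 : 100 ≤ L)
    (hr : ∀ z, z ∉ l → z ≠ r → 2 * #(G.neighborFinset z ∩ l.toFinset) ≤ d + 1) :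
    PairProp G ((univ \ l.toFinset) \ {r}) L := by
  refine pairProp_of G _ L (d / 2 - 3) ?_ ?_
  · intro z hz
    simp at hz
    have h1 := hr z hz.1 hz.2
    have h2 := card_sdiff_add_card_inter (G.neighborFinset z) l.toFinset
    have h3 : (G.neighborFinset z \ l.toFinset) \ {r} ⊆ G.neighborFinset z ∩ ((univ \ l.toFinset) \ {r}) := by
      intro v hv
      simp at hv ⊢
      tauto
    have h4 := card_le_card h3
    have h5 := le_card_sdiff {r} (G.neighborFinset z \ l.toFinset)
    have h6 := hd z
    simp only [card_singleton] at h5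
    omega
  · have := card_le_univ ((univ \ l.toFinset) \ {r})
    omega

/-- Lengthening by a detour through the outside. -/
theorem growA {L : ℕ} {l : List V} (h : IsCyc G l) (b : V) (hL : L = 10000)
    (hs : 4000 ≤ l.length) (hP : PairProp G ((univ \ l.toFinset) \ {b}) L)
    (hK : l.length < 100 * #(idx l 0 (univ.filter (fun v => 11 ≤ #(G.neighborFinset v \ l.toFinset))))) :
    ∃ l', IsCyc G l' ∧ l'.length = l.length + 2 := by
  set NF := idx l 0 (univ.filter (fun v => 11 ≤ #(G.neighborFinset v \ l.toFinset))) with hNF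
  obtain ⟨y, hy, hfib⟩ := exists_lt_card_fiber_of_mul_lt_card_of_maps_to (s := NF)
    (t := (range (l.length / 3200 + 1)) ×ˢ range 2) (f := fun i => (i / 3200, i % 2)) (n := 8) (by
      intro i hi
      obtain ⟨h1, -⟩ := mem_idx.1 hi
      simp only [coe_product, coe_range, Set.mem_prod, Set.mem_Iio, mem_product, mem_range]
      refine ⟨?_, by omega⟩
      have : i / 3200 ≤ l.length / 3200 := Nat.div_le_div_right (by omega)
      omega) (by
      simp only [card_product, card_range]
      omega)
  set Fb := NF.filter (fun i => (i / 3200, i % 2) = y) with hFb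
  obtain ⟨a, c, ha, hc, hR, hac, hLc⟩ := pick hP
    (fun a => a.1 ∈ Fb ∧ a.2 ∈ (univ \ l.toFinset) \ {b} ∧ ∃ h : a.1 < l.length, G.Adj l[a.1] a.2)
    (fun a c => a.1 ≠ c.1) (fun a ha => ha.2.1) (fun a b => Ne.symm) (by
      intro T hT hTP
      obtain ⟨i, hi⟩ : (Fb \ T.image Prod.fst).Nonempty := by
        rw [← card_pos]
        have e1 := le_card_sdiff (T.image Prod.fst) Fb
        have e2 : #(T.image Prod.fst) ≤ #T := card_image_le
        omega
      simp only [mem_sdiff] at hi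
      obtain ⟨hi, hiT⟩ := hi
      have hi' := hi
      rw [hFb, mem_filter] at hi'
      obtain ⟨h1, h2⟩ := mem_idx.1 hi'.1
      simp only [add_zero, mem_filter] at h1 h2
      obtain ⟨z, hz⟩ : (((G.neighborFinset l[i] \ l.toFinset) \ {b}) \ T.image Prod.snd).Nonempty := by
        rw [← card_pos]
        have e1 := le_card_sdiff (T.image Prod.snd) ((G.neighborFinset l[i] \ l.toFinset) \ {b})
        have e2 : #(T.image Prod.snd) ≤ #T := card_image_le
        have e3 := le_card_sdiff {b} (G.neighborFinset l[i] \ l.toFinset)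
        simp only [card_singleton] at e3
        have := h2.2
        omega
      simp only [mem_sdiff, mem_singleton] at hz
      refine ⟨(i, z), ⟨hi, ?_, h1, ?_⟩, ?_, ?_⟩
      · simp only [mem_sdiff, mem_univ, true_and, mem_singleton]
        exact ⟨hz.1.1.2, hz.1.2⟩
      · simpa using hz.1.1.1
      · intro a ha haz
        exact hz.2 (mem_image.2 ⟨a, ha, haz⟩)
      · intro a ha haz
        exact hiT (mem_image.2 ⟨a, ha, haz⟩))
  have key : ∀ a c : ℕ × V, a.1 ∈ Fb → c.1 ∈ Fb → a.1 < c.1 → a.2 ∉ l → c.2 ∉ l → a.2 ≠ c.2 →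
      (h1 : a.1 < l.length) → (h2 : c.1 < l.length) → G.Adj l[a.1] a.2 → G.Adj l[c.1] c.2 → 
      L ≤ #((G.neighborFinset a.2 ∩ G.neighborFinset c.2) ∩ ((univ \ l.toFinset) \ {b})) →
      ∃ l', IsCyc G l' ∧ l'.length = l.length + 2 := by
    intro a c ha hc hlt hal hcl hac h1 h2 ha' hc' hLc
    have e1 := (mem_filter.1 ha).2
    have e2 := (mem_filter.1 hc).2
    rw [← e2, Prod.mk.injEq] at e1
    obtain ⟨k, hk⟩ : ∃ k, c.1 = a.1 + 2 * (k + 1) := ⟨(c.1 - a.1) / 2 - 1, by omega⟩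
    obtain ⟨q, q1, q2, q3, q4⟩ := evenpath hP k ∅ a.2 c.2 hac hLc (by simp; omega)
    obtain ⟨l', hl', hlen⟩ := h.detour hlt h2 (M' := a.2 :: (q ++ [c.2])) (by simp) (by
        rw [List.cons_append, List.isChain_cons_cons]
        refine ⟨ha', ?_⟩
        rw [List.append_assoc, List.singleton_append, ← List.cons_append, List.isChain_split]
        exact ⟨by simpa using q4, by simp [hc'.symm]⟩) (by
        simp only [List.nodup_cons, List.nodup_append, List.mem_append, List.mem_singleton]
        grind) (by
        intro v hv
        simp only [List.mem_cons, List.mem_append, List.not_mem_nil, or_false] at hv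
        rcases hv with rfl | hv | rfl
        · exact hal
        · have := (q3 v hv).1
          simp at this
          exact this.1
        · exact hcl)
    refine ⟨l', hl', ?_⟩
    simp at hlen
    omega
  obtain ⟨a1, a2, a3, a4⟩ := ha
  obtain ⟨c1, c2, c3, c4⟩ := hc
  simp at a2 c2
  rcases lt_or_gt_of_ne hR with hlt | hlt
  · exact key a c a1 c1 hlt a2.1 c2.1 hac a3 c3 a4 c4 hLc
  · exact key c a c1 a1 hlt c2.1 a2.1 (Ne.symm hac) c3 a3 c4 a4 (by rwa [inter_comm (G.neighborFinset c.2)])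
end growth

section growth2
open Finset
variable {V : Type*} [Fintype V] [DecidableEq V]
variable {G : SimpleGraph V} [DecidableRel G.Adj]

/-- The relation used when the cycle is nearly complete. -/
def EE (G : SimpleGraph V) (l : List V) (a b : ℕ) : Prop :=
  a + 2 ≤ b ∧ ∃ (h1 : a + 2 < l.length) (h2 : b + 1 < l.length), G.Adj l[a+2] l[b+1]

theorem growB {d L : ℕ} {l : List V} (h : IsCyc G l) (r : V) (hL : 0 < L)
    (hd : ∀ v, d ≤ #(G.neighborFinset v))
    (hs : 4000 ≤ l.length) (hsd : l.length + 1 ≤ d) (hP : PairProp G ((univ \ l.toFinset) \ {r}) L)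
    (K : Finset V) (hK1 : 100 * #K ≤ l.length)
    (hK : ∀ v ∈ l, v ∉ K → #(l.toFinset \ G.neighborFinset v) ≤ 20)
    (hr : ∀ z, z ∉ l → z ≠ r → 20 * #(G.neighborFinset z ∩ l.toFinset) < l.length) :
    ∃ l', IsCyc G l' ∧ l'.length = l.length + 2 := by
  have hout : ∀ v ∈ l, ∃ z, G.Adj v z ∧ z ∉ l ∧ z ≠ r := by
    intro v hv
    obtain ⟨z, hz⟩ : ((G.neighborFinset v \ l.toFinset) \ {r}).Nonempty := by
      rw [← card_pos]
      have e1 := le_card_sdiff {r} (G.neighborFinset v \ l.toFinset)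
      simp only [card_singleton] at e1
      have e2 := card_sdiff_add_card_inter (G.neighborFinset v) l.toFinset
      have e3 : #(G.neighborFinset v ∩ l.toFinset) ≤ #(l.toFinset.erase v) := by
        apply card_le_card
        intro u hu
        simp at hu ⊢
        exact ⟨hu.1.ne', hu.2⟩
      rw [card_erase_of_mem (by simpa using hv), List.toFinset_card_of_nodup h.1] at e3
      have := hd v
      omega
    simp at hz
    exact ⟨z, hz.1.1, hz.1.2, hz.2⟩
  obtain ⟨a, c, ha, hc, hR, hac, hLc⟩ := pick hP
    (fun a => a.2 ∈ (univ \ l.toFinset) \ {r} ∧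
      ∃ h : a.1 + 2 < l.length, G.Adj l[a.1] a.2 ∧ l[a.1+1] ∉ K ∧ l[a.1+2] ∉ K)
    (fun a c => EE G l a.1 c.1 ∨ EE G l c.1 a.1) (fun a ha => ha.1) (fun a b => Or.symm) (by
      intro T hT hTP
      classical
      set W := T.biUnion (fun a => idx l 0 (G.neighborFinset a.2) ∪
        (idx l 1 (l.toFinset \ (if h : a.1 + 2 < l.length then G.neighborFinset l[a.1+2] else l.toFinset)) ∪
        idx l 2 (l.toFinset \ (if h : a.1 + 2 < l.length then G.neighborFinset l[a.1+1] else l.toFinset)))) with hW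
      have hWc : #W ≤ #T * (l.length / 20 + 1 + 40) := by
        refine card_biUnion_le_card_mul _ _ _ ?_
        intro a ha
        obtain ⟨p1, p2, p3, p4, p5⟩ := hTP a ha
        simp at p1
        refine (card_union_le _ _).trans ?_
        have e0 : #(idx l 0 (G.neighborFinset a.2)) ≤ l.length / 20 + 1 := by
          have e1 : idx l 0 (G.neighborFinset a.2) ⊆ idx l 0 (G.neighborFinset a.2 ∩ l.toFinset) := by
            intro i hi
            obtain ⟨q1, q2⟩ := mem_idx.1 hi
            exact mem_idx.2 ⟨q1, by simp at q2 ⊢; exact q2⟩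
          have e2 := (card_le_card e1).trans (card_idx_le h.1 _ _)
          have := hr a.2 p1.1 p1.2
          omega
        have e3 := card_union_le
          (idx l 1 (l.toFinset \ (if h : a.1 + 2 < l.length then G.neighborFinset l[a.1+2] else l.toFinset)))
          (idx l 2 (l.toFinset \ (if h : a.1 + 2 < l.length then G.neighborFinset l[a.1+1] else l.toFinset)))
        have e4 := card_idx_le h.1 1 (l.toFinset \ (if h : a.1 + 2 < l.length then G.neighborFinset l[a.1+2] else l.toFinset))
        have e5 := card_idx_le h.1 2 (l.toFinset \ (if h : a.1 + 2 < l.length then G.neighborFinset l[a.1+1] else l.toFinset))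
        rw [dif_pos p2] at e3 e4 e5
        rw [dif_pos p2] at e3
        rw [dif_pos p2, dif_pos p2]
        have e6 := hK l[a.1+2] (by simp) p5
        have e7 := hK l[a.1+1] (by simp) p4
        omega
      have hk1 := card_idx_le h.1 1 K
      have hk2 := card_idx_le h.1 2 K
      obtain ⟨k, hk⟩ : (range (l.length - 2) \ ((idx l 1 K ∪ idx l 2 K) ∪ W)).Nonempty := by
        rw [← card_pos]
        have e1 := le_card_sdiff ((idx l 1 K ∪ idx l 2 K) ∪ W) (range (l.length - 2))
        have e2 := card_union_le (idx l 1 K ∪ idx l 2 K) W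
        have e3 := card_union_le (idx l 1 K) (idx l 2 K)
        have e4 : #T * (l.length / 20 + 1 + 40) ≤ 8 * (l.length / 20 + 1 + 40) := Nat.mul_le_mul_right _ hT
        rw [card_range] at e1
        omega
      simp only [mem_sdiff, mem_range, mem_union, not_or] at hk
      obtain ⟨hk0, ⟨hk3, hk4⟩, hkW⟩ := hk
      have hk2' : k + 2 < l.length := by omega
      obtain ⟨z, hz1, hz2, hz3⟩ := hout l[k] (by simp)
      have hT' : ∀ a ∈ T, ¬ G.Adj a.2 l[k] ∧ ∃ h : a.1 + 2 < l.length,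
          G.Adj l[a.1+2] l[k+1] ∧ G.Adj l[a.1+1] l[k+2] := by
        intro a ha
        obtain ⟨p1, p2, p3, p4, p5⟩ := hTP a ha
        have hka : k ∉ _ := fun hh => hkW (mem_biUnion.2 ⟨a, ha, hh⟩)
        rw [dif_pos p2, dif_pos p2] at hka
        simp only [mem_union, not_or, mem_idx] at hka
        obtain ⟨q1, q2, q3⟩ := hka
        refine ⟨fun hh => q1 ⟨by omega, by simpa using hh⟩, p2, ?_, ?_⟩
        · by_contra hcon
          exact q2 ⟨by omega, by simpa using hcon⟩
        · by_contra hcon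
          exact q3 ⟨by omega, by simpa using hcon⟩
      refine ⟨(k, z), ⟨?_, hk2', hz1, ?_, ?_⟩, ?_, ?_⟩
      · simp only [mem_sdiff, mem_univ, true_and, mem_singleton, List.mem_toFinset]
        exact ⟨hz2, hz3⟩
      · exact fun hh => hk3 (mem_idx.2 ⟨by omega, hh⟩)
      · exact fun hh => hk4 (mem_idx.2 ⟨by omega, hh⟩)
      · intro a ha haz
        refine (hT' a ha).1 ?_
        simp only at haz
        rw [haz]; exact hz1.symm
      · intro a ha
        obtain ⟨p1, p2, p3, p4, p5⟩ := hTP a ha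
        obtain ⟨q1, q2, q3, q4⟩ := hT' a ha
        have n1 : k ≠ a.1 := by
          rintro rfl; exact q1 p3.symm
        have n2 : k ≠ a.1 + 1 := by
          rintro rfl; exact q3.ne rfl
        have n3 : k + 1 ≠ a.1 := by
          intro hh
          have : l[a.1+1] = l[k+2] := by congr 1; omega
          exact q4.ne this
        rcases lt_or_gt_of_ne n1 with hlt | hlt
        · exact Or.inr ⟨by simp only; omega, hk2', by omega, q4.symm⟩
        · exact Or.inl ⟨by simp only; omega, by omega, by simp only; omega, q3⟩)
  have key : ∀ a c : ℕ × V, EE G l a.1 c.1 → a.2 ∉ l → c.2 ∉ l → a.2 ≠ c.2 →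
      (h1 : a.1 < l.length) → (h2 : c.1 < l.length) → G.Adj l[a.1] a.2 → G.Adj l[c.1] c.2 →
      L ≤ #((G.neighborFinset a.2 ∩ G.neighborFinset c.2) ∩ ((univ \ l.toFinset) \ {r})) →
      ∃ l', IsCyc G l' ∧ l'.length = l.length + 2 := by
    rintro a c ⟨hE, h3, h4, hadj⟩ hal hcl hac h1 h2 ha' hc' hLc
    obtain ⟨w, hw⟩ : ((G.neighborFinset a.2 ∩ G.neighborFinset c.2) ∩ ((univ \ l.toFinset) \ {r})).Nonempty := by
      rw [← card_pos]; omega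
    simp at hw
    obtain ⟨w1, w2, w3, w4⟩ := hw
    have := w1.ne
    have := w2.ne
    obtain ⟨l', hl', hlen⟩ := h.insert3 hE h4 (Q := [a.2, w, c.2]) (by simp) (by simp; grind) (by
      intro v hv
      simp at hv
      rcases hv with rfl | rfl | rfl <;> assumption) (by
      simp [ha', hc'.symm, w1, w2.symm]) hadj
    refine ⟨l', hl', ?_⟩
    simp at hlen
    omega
  obtain ⟨a1, a2, a3, a4⟩ := ha
  obtain ⟨c1, c2, c3, c4⟩ := hc
  simp at a1 c1
  rcases hR with hR | hR
  · exact key a c hR a1.1 c1.1 hac (by omega) (by omega) a3 c3 hLc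
  · exact key c a hR c1.1 a1.1 (Ne.symm hac) (by omega) (by omega) c3 a3 (by rwa [inter_comm (G.neighborFinset c.2)])

theorem grow_s11 {d L : ℕ} {l : List V} (h : IsCyc G l) (hL : L = 10000) (hLd : 1000 * L ≤ d)
    (hd : ∀ v, d ≤ #(G.neighborFinset v)) (hn : Fintype.card V ≤ 3 * d)
    (hs : 4000 ≤ l.length) (hsd : l.length + 1 ≤ d) :
    ∃ l', IsCyc G l' ∧ l'.length = l.length + 2 := by
  have x : V := l[0]
  rcases atMostOne (fun z => z ∉ l ∧ l.length + 2 < 2 * #(G.neighborFinset z ∩ l.toFinset)) x with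
    ⟨b, b', hbb, ⟨hb1, hb2⟩, hb3, hb4⟩ | ⟨b, hb⟩
  · obtain ⟨l1, h1, h2, h3⟩ := h.ins1 hb1 (by omega)
    have hmem : b' ∉ l1 := by
      intro hh
      rw [← List.mem_toFinset, h3] at hh
      simp at hh
      rcases hh with rfl | hh
      · exact hbb rfl
      · exact hb3 hh
    obtain ⟨l2, h4, h5, -⟩ := h1.ins1 hmem (by
      have : #(G.neighborFinset b' ∩ l.toFinset) ≤ #(G.neighborFinset b' ∩ l1.toFinset) := by
        apply card_le_card
        rw [h3]
        exact inter_subset_inter_left (subset_insert _ _)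
      omega)
    exact ⟨l2, h4, by omega⟩
  have hP := outPair (G := G) (l := l) b hd hn hLd (by omega) (by
    intro z hz hzb
    by_contra hcon
    exact hzb (hb z ⟨hz, by omega⟩))
  set K := univ.filter (fun v => 11 ≤ #(G.neighborFinset v \ l.toFinset)) with hK
  by_cases hNF : l.length < 100 * #(idx l 0 K)
  · exact growA h b hL hs hP hNF
  have hKC : #(K ∩ l.toFinset) ≤ #(idx l 0 K) := le_card_idx _
  have hfull : ∀ v ∈ l, v ∉ K ∩ l.toFinset → #(l.toFinset \ G.neighborFinset v) ≤ 19 := by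
    intro v hv hvK
    have hv' : ¬ 11 ≤ #(G.neighborFinset v \ l.toFinset) := by
      intro hh
      exact hvK (by simp [hK, hv, hh])
    have e1 := card_sdiff_add_card_inter (G.neighborFinset v) l.toFinset
    have e2 := card_sdiff_add_card_inter l.toFinset (G.neighborFinset v)
    rw [inter_comm, List.toFinset_card_of_nodup h.1] at e2
    have := hd v
    omega
  rcases atMostOne (fun z => z ∉ l ∧ l.length ≤ 20 * #(G.neighborFinset z ∩ l.toFinset)) x with
    ⟨b, b', hbb, ⟨hb1, hb2⟩, hb3, hb4⟩ | ⟨r, hr⟩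
  · obtain ⟨l1, h1, h2, h3⟩ := h.ins2 hb1 (K ∩ l.toFinset) (fun v hv hvK => (hfull v hv hvK).trans (by norm_num)) (by omega)
    have hmem : b' ∉ l1 := by
      intro hh
      rw [← List.mem_toFinset, h3] at hh
      simp at hh
      rcases hh with rfl | hh
      · exact hbb rfl
      · exact hb3 hh
    obtain ⟨l2, h4, h5, -⟩ := h1.ins2 hmem (insert b (K ∩ l.toFinset)) (by
      intro v hv hvK
      rw [mem_insert, not_or] at hvK
      have hv' : v ∈ l := by
        rw [← List.mem_toFinset, h3] at hv
        simp at hv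
        exact hv.resolve_left hvK.1
      have e1 := hfull v hv' hvK.2
      have e2 : l1.toFinset \ G.neighborFinset v ⊆ insert b (l.toFinset \ G.neighborFinset v) := by
        rw [h3]
        intro u hu
        simp at hu ⊢
        tauto
      have e3 := (card_le_card e2).trans (card_insert_le _ _)
      omega) (by
      have : #(G.neighborFinset b' ∩ l.toFinset) ≤ #(G.neighborFinset b' ∩ l1.toFinset) := by
        apply card_le_card
        rw [h3]
        exact inter_subset_inter_left (subset_insert _ _)
      have := card_insert_le b (K ∩ l.toFinset)
      omega)
    exact ⟨l2, h4, by omega⟩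
  have hr' : ∀ z, z ∉ l → z ≠ r → 20 * #(G.neighborFinset z ∩ l.toFinset) < l.length := by
    intro z hz hzr
    by_contra hcon
    exact hzr (hr z ⟨hz, by omega⟩)
  have hP2 := outPair (G := G) (l := l) r hd hn hLd (by omega) (by
    intro z hz hzb
    have := hr' z hz hzb
    omega)
  exact growB h r (by omega) hd hs hsd hP2 (K ∩ l.toFinset) (by omega)
    (fun v hv hvK => (hfull v hv hvK).trans (by norm_num)) hr'

theorem all_cyc (G : SimpleGraph V) [DecidableRel G.Adj] (d : ℕ) (hLd : 10000000 ≤ d)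
    (hd : ∀ v, d ≤ #(G.neighborFinset v)) (hn : Fintype.card V ≤ 3 * d) (h9 : 9 ≤ Fintype.card V)
    (hcol : ¬ G.Colorable 2) (t : ℕ) (ht : 4 ≤ t) (htd : t ≤ d + 1) : ∃ l, IsCyc G l ∧ l.length = t := by
  induction t using Nat.strong_induction_on with
  | _ t ih =>
    by_cases hb : t ≤ 4001
    · exact base_cyc G d 10000 hd hn (by omega) h9 hcol t ht (by omega)
    · obtain ⟨l, hl, hlen⟩ := ih (t - 2) (by omega) (by omega) (by omega)
      obtain ⟨l', hl', hlen'⟩ := grow_s11 hl (L := 10000) rfl (by omega) hd hn (by omega) (by omega)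
      exact ⟨l', hl', by omega⟩
end growth2

/-- A non-bipartite connected graph of sufficiently large order `n` with `δ(G) ≥ n/3`
contains a cycle of every length `t` with `4 ≤ t ≤ δ(G)+1`. -/
theorem stmt11 :
    ∃ N : ℕ, ∀ n : ℕ, N ≤ n → ∀ (G : SimpleGraph (Fin n)) [DecidableRel G.Adj],
      G.Connected → ¬ G.Colorable 2 → (n : ℝ) / 3 ≤ (G.minDegree : ℝ) →
      ∀ t : ℕ, 4 ≤ t → t ≤ G.minDegree + 1 →
        ∃ (v : Fin n) (c : G.Walk v v), c.IsCycle ∧ c.length = t := by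
  refine ⟨100000000, fun n hn G _ _ hcol hδ t ht htd => ?_⟩
  have h3 : n ≤ 3 * G.minDegree := by
    have : (n : ℝ) ≤ 3 * (G.minDegree : ℝ) := by linarith
    exact_mod_cast this
  obtain ⟨l, hl, hlen⟩ := all_cyc G G.minDegree (by omega) (fun v => by
    rw [card_neighborFinset_eq_degree]; exact G.minDegree_le_degree v) (by simpa using h3)
    (by simp; omega) hcol t ht htd
  obtain ⟨v, c, hc, hc'⟩ := hl.toWalk
  exact ⟨v, c, hc, hc'.trans hlen⟩
end

section
/- Let 0 < ε < 1/4. There exists N = N(ε) such that every graph G on n ≥ N vertices with spectral radius ρ(G) > √(⌊n²/4⌋) contains a cycle C_l for every integer l with 3 ≤ l ≤ (1/4 − ε)n. -/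
open SimpleGraph

open scoped Classical in
/-- The neighbours of `v` as a finset. -/
noncomputable def nb {V : Type*} [Fintype V] (G : SimpleGraph V) (v : V) : Finset V :=
  Finset.univ.filter (fun w => G.Adj v w)

lemma mem_nb {V : Type*} [Fintype V] {G : SimpleGraph V} {v w : V} : w ∈ nb G v ↔ G.Adj v w := by
  simp [nb]

lemma eig_exists {V : Type*} [Fintype V] [DecidableEq V] [Nonempty V] (G : SimpleGraph V) :
    ∃ x : V → ℝ, x ≠ 0 ∧ ∀ v, ∑ w ∈ nb G v, x w = specRad G * x v := by
  let _ := Classical.decRel G.Adj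
  have h : (G.adjMatrix ℝ).IsHermitian := by
    ext i j
    simp [Matrix.conjTranspose_apply, SimpleGraph.adjMatrix_apply, G.adj_comm i j]
  obtain ⟨i, hi⟩ := exists_eq_ciSup_of_finite (f := h.eigenvalues)
  refine ⟨h.eigenvectorBasis i, ?_, ?_⟩
  · have := h.eigenvectorBasis.orthonormal.ne_zero i
    intro h0
    apply this
    ext j
    exact congrFun h0 j
  · intro v
    have h1 := congrFun (h.mulVec_eigenvectorBasis i) v
    rw [SimpleGraph.adjMatrix_mulVec_apply] at h1
    have h2 : specRad G = h.eigenvalues i := by rw [hi]; rfl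
    rw [h2]
    simp only [Pi.smul_apply, smul_eq_mul] at h1
    rw [← h1]
    apply Finset.sum_congr _ (fun _ _ => rfl)
    ext w; simp [mem_nb]

lemma rayleigh_le_s12 {V : Type*} [Fintype V] [DecidableEq V] (G : SimpleGraph V) (x : V → ℝ) :
    ∑ v, x v * ∑ w ∈ nb G v, x w ≤ specRad G * ∑ v, x v ^ 2 := by
  let _ := Classical.decRel G.Adj
  have h : (G.adjMatrix ℝ).IsHermitian := by
    ext i j
    simp [Matrix.conjTranspose_apply, SimpleGraph.adjMatrix_apply, G.adj_comm i j]
  set y : EuclideanSpace ℝ V := WithLp.toLp 2 x with hy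
  have hle : ∀ i, h.eigenvalues i ≤ specRad G := fun i =>
    le_ciSup (Set.finite_range h.eigenvalues).bddAbove i
  set T := Matrix.toEuclideanLin (G.adjMatrix ℝ) with hT
  have e1 : ∑ v, x v * ∑ w ∈ nb G v, x w = inner ℝ y (T y) := by
    rw [PiLp.inner_apply]
    apply Finset.sum_congr rfl
    intro v _
    have : (T y) v = ∑ w ∈ nb G v, x w := by
      rw [hT, Matrix.toLpLin_apply]
      show ((G.adjMatrix ℝ).mulVec x) v = _
      rw [SimpleGraph.adjMatrix_mulVec_apply]
      apply Finset.sum_congr _ (fun _ _ => rfl)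
      ext w; simp [mem_nb]
    rw [this]
    simp [hy, mul_comm]
  have e2 : ∑ v, x v ^ 2 = inner ℝ y y := by
    rw [PiLp.inner_apply]
    apply Finset.sum_congr rfl
    intro v _
    simp [hy, pow_two]
  rw [e1, e2, ← h.eigenvectorBasis.sum_inner_mul_inner y (T y),
    ← h.eigenvectorBasis.sum_inner_mul_inner y y, Finset.mul_sum]
  apply Finset.sum_le_sum
  intro i _
  have e3 : inner ℝ (h.eigenvectorBasis i) (T y) = h.eigenvalues i * inner ℝ (h.eigenvectorBasis i) y := by
    have hs : T.IsSymmetric := Matrix.isSymmetric_toEuclideanLin_iff.2 h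
    rw [← hs]
    have : T (h.eigenvectorBasis i) = h.eigenvalues i • h.eigenvectorBasis i := by
      rw [hT, Matrix.toLpLin_apply, h.mulVec_eigenvectorBasis]; rfl
    rw [this, inner_smul_left]; simp
  rw [e3, real_inner_comm (h.eigenvectorBasis i) y]
  nlinarith [hle i, mul_self_nonneg (inner ℝ (h.eigenvectorBasis i) y : ℝ)]


lemma walk2_le {V : Type*} [Fintype V] (G : SimpleGraph V) (x : V → ℝ) (lam : ℝ)
    (hx : ∀ v, ∑ w ∈ nb G v, x w = lam * x v) (u : V) (hu : x u ≠ 0)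
    (hmax : ∀ v, |x v| ≤ |x u|) : lam ^ 2 ≤ ∑ v ∈ nb G u, ((nb G v).card : ℝ) := by
  have h1 : lam ^ 2 * x u = ∑ v ∈ nb G u, ∑ w ∈ nb G v, x w := by
    simp only [hx]
    rw [← Finset.mul_sum, hx]; ring
  have h2 : lam ^ 2 * |x u| ≤ (∑ v ∈ nb G u, ((nb G v).card : ℝ)) * |x u| := by
    calc lam ^ 2 * |x u| = |lam ^ 2 * x u| := by rw [abs_mul, abs_of_nonneg (sq_nonneg lam)]
      _ = |∑ v ∈ nb G u, ∑ w ∈ nb G v, x w| := by rw [h1]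
      _ ≤ ∑ v ∈ nb G u, |∑ w ∈ nb G v, x w| := Finset.abs_sum_le_sum_abs _ _
      _ ≤ ∑ v ∈ nb G u, ∑ w ∈ nb G v, |x w| :=
        Finset.sum_le_sum (fun v _ => Finset.abs_sum_le_sum_abs _ _)
      _ ≤ ∑ v ∈ nb G u, ∑ w ∈ nb G v, |x u| :=
        Finset.sum_le_sum (fun v _ => Finset.sum_le_sum (fun w _ => hmax w))
      _ = _ := by simp [Finset.sum_mul]
  exact le_of_mul_le_mul_right h2 (abs_pos.2 hu)

lemma local_sq_le {V : Type*} [Fintype V] (G : SimpleGraph V) (x : V → ℝ) (lam : ℝ)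
    (hx : ∀ v, ∑ w ∈ nb G v, x w = lam * x v) (C : Finset V)
    (hC : ∀ v ∈ C, ∀ w, G.Adj v w → w ∈ C) (v : V) (hv : v ∈ C) :
    lam ^ 2 * x v ^ 2 ≤ ((nb G v).card : ℝ) * ∑ w ∈ C, x w ^ 2 := by
  have h1 : lam ^ 2 * x v ^ 2 = (∑ w ∈ nb G v, x w) ^ 2 := by rw [hx]; ring
  rw [h1]
  refine (sq_sum_le_card_mul_sum_sq).trans ?_
  refine mul_le_mul_of_nonneg_left ?_ (Nat.cast_nonneg _)
  exact Finset.sum_le_sum_of_subset_of_nonneg (fun w hw => hC v hv w (mem_nb.1 hw))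
    (fun _ _ _ => sq_nonneg _)

lemma comp_sq_le {V : Type*} [Fintype V] (G : SimpleGraph V) (x : V → ℝ) (lam : ℝ)
    (hx : ∀ v, ∑ w ∈ nb G v, x w = lam * x v) (C : Finset V)
    (hC : ∀ v ∈ C, ∀ w, G.Adj v w → w ∈ C) (u : V) (huC : u ∈ C) (hu : x u ≠ 0) :
    lam ^ 2 ≤ ∑ v ∈ C, ((nb G v).card : ℝ) := by
  have hpos : 0 < ∑ w ∈ C, x w ^ 2 :=
    Finset.sum_pos' (fun _ _ => sq_nonneg _) ⟨u, huC, by positivity⟩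
  refine le_of_mul_le_mul_right ?_ hpos
  rw [Finset.mul_sum, Finset.sum_mul]
  exact Finset.sum_le_sum (fun v hv => local_sq_le G x lam hx C hC v hv)

lemma exists_max_abs {V : Type*} [Fintype V] (x : V → ℝ) (hx : x ≠ 0) :
    ∃ u, x u ≠ 0 ∧ ∀ v, |x v| ≤ |x u| := by
  obtain ⟨v0, hv0⟩ := Function.ne_iff.1 hx
  have : (Finset.univ : Finset V).Nonempty := ⟨v0, Finset.mem_univ _⟩
  obtain ⟨u, -, hu⟩ := Finset.exists_max_image Finset.univ (fun v => |x v|) this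
  refine ⟨u, ?_, fun v => hu v (Finset.mem_univ _)⟩
  have h := hu v0 (Finset.mem_univ _)
  have : 0 < |x v0| := abs_pos.2 hv0
  exact abs_pos.1 (lt_of_lt_of_le this h)

lemma exists_triangle {V : Type*} [Fintype V] [DecidableEq V] [Nonempty V] (G : SimpleGraph V)
    (h : Real.sqrt ((Fintype.card V ^ 2 / 4 : ℕ) : ℝ) < specRad G) :
    ∃ u v w, G.Adj u v ∧ G.Adj u w ∧ G.Adj v w := by
  classical
  obtain ⟨x, hx0, hx⟩ := eig_exists G
  obtain ⟨u, hu, hmax⟩ := exists_max_abs x hx0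
  by_contra! hno
  have h1 := walk2_le G x _ hx u hu hmax
  have h2 : ∑ v ∈ nb G u, (nb G v).card ≤ Fintype.card V ^ 2 / 4 := by
    have h3 : ∑ v ∈ nb G u, (nb G v).card ≤ ∑ v ∈ nb G u, (Fintype.card V - (nb G u).card) := by
      apply Finset.sum_le_sum
      intro v hv
      rw [← Finset.card_compl]
      apply Finset.card_le_card
      intro w hw
      rw [Finset.mem_compl, mem_nb]
      intro huw
      exact hno u v w (mem_nb.1 hv) huw (mem_nb.1 hw)
    refine h3.trans ?_
    rw [Finset.sum_const, smul_eq_mul, Nat.le_div_iff_mul_le (by norm_num)]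
    have := Finset.card_le_univ (nb G u)
    obtain ⟨k, hk⟩ := Nat.exists_eq_add_of_le this
    rw [hk, Nat.add_sub_cancel_left]
    zify
    nlinarith [sq_nonneg (((nb G u).card : ℤ) - k)]
  have h4 : Real.sqrt ((Fintype.card V ^ 2 / 4 : ℕ) : ℝ) ^ 2 < specRad G ^ 2 :=
    pow_lt_pow_left₀ h (Real.sqrt_nonneg _) two_ne_zero
  rw [Real.sq_sqrt (Nat.cast_nonneg _)] at h4
  have h5 : ((∑ v ∈ nb G u, (nb G v).card : ℕ) : ℝ) ≤ ((Fintype.card V ^ 2 / 4 : ℕ) : ℝ) :=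
    Nat.cast_le.2 h2
  push_cast at h5 h4
  linarith

open scoped Classical in
lemma specRad_sub_le {V : Type*} [Fintype V] [DecidableEq V] [Nonempty V] (G G' : SimpleGraph V)
    (hle : G' ≤ G) (c : ℝ) (hc : 0 ≤ c)
    (hcard : (((Finset.univ : Finset (V × V)).filter
      (fun p => G.Adj p.1 p.2 ∧ ¬ G'.Adj p.1 p.2)).card : ℝ) ≤ c ^ 2) :
    specRad G - c ≤ specRad G' := by
  obtain ⟨x, hx0, hx⟩ := eig_exists G
  have hpos : 0 < ∑ w, x w ^ 2 := by
    obtain ⟨v0, hv0⟩ := Function.ne_iff.1 hx0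
    have : x v0 ≠ 0 := hv0
    exact Finset.sum_pos' (fun _ _ => sq_nonneg _) ⟨v0, Finset.mem_univ _, by positivity⟩
  set X := ∑ w, x w ^ 2 with hX
  set D := ((Finset.univ : Finset (V × V)).filter
      (fun p => G.Adj p.1 p.2 ∧ ¬ G'.Adj p.1 p.2)) with hD
  have h1 := rayleigh_le_s12 G' x
  have h2 : ∑ v, x v * ∑ w ∈ nb G v, x w = specRad G * X := by
    simp only [hx]
    rw [hX, Finset.mul_sum]
    exact Finset.sum_congr rfl (fun v _ => by ring)
  have h3 : ∑ v, x v * ∑ w ∈ nb G v, x w = ∑ v, x v * ∑ w ∈ nb G' v, x w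
      + ∑ p ∈ D, x p.1 * x p.2 := by
    rw [hD, Finset.sum_filter, ← Finset.univ_product_univ, Finset.sum_product,
      ← Finset.sum_add_distrib]
    apply Finset.sum_congr rfl
    intro v _
    simp only [nb, Finset.sum_filter, Finset.mul_sum, ← Finset.sum_add_distrib]
    apply Finset.sum_congr rfl
    intro w _
    by_cases a : G.Adj v w <;> by_cases b : G'.Adj v w <;> simp [a, b]
    exact absurd (hle b) a
  have h4 : (∑ p ∈ D, x p.1 * x p.2) ^ 2 ≤ (c * X) ^ 2 := by
    refine (sq_sum_le_card_mul_sum_sq).trans ?_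
    have h5 : ∑ p ∈ D, (x p.1 * x p.2) ^ 2 ≤ X ^ 2 := by
      calc ∑ p ∈ D, (x p.1 * x p.2) ^ 2 ≤ ∑ p : V × V, (x p.1 * x p.2) ^ 2 :=
            Finset.sum_le_sum_of_subset_of_nonneg (Finset.subset_univ _)
              (fun _ _ _ => sq_nonneg _)
        _ = X ^ 2 := by
            rw [← Finset.univ_product_univ, Finset.sum_product, hX, sq, Finset.sum_mul_sum]
            simp only [mul_pow]
    rw [mul_pow]
    exact mul_le_mul hcard h5 (Finset.sum_nonneg (fun _ _ => sq_nonneg _)) (sq_nonneg _)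
  have h6 : ∑ p ∈ D, x p.1 * x p.2 ≤ c * X := le_of_sq_le_sq h4 (by positivity)
  have h7 : (specRad G - c) * X ≤ specRad G' * X := by linarith
  exact le_of_mul_le_mul_right h7 hpos


lemma bip_numeric (n s lam K W p : ℝ) (hnR : 100 ≤ n) (hs1 : 1 ≤ s) (hS : s ≤ n / 250)
    (hl0 : 0 < lam) (hp0 : 0 ≤ p) (hWpos : 0 < W) (hKs : K ≤ n / 2 - s / 2)
    (hlsq : n ^ 2 / 4 - 1 ≤ lam ^ 2) (hpl : p * lam ^ 2 ≤ s * (n / 5) * W)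
    (hmain : lam * (W - p) ≤ K * (W - p) + lam * p + s * p) : False := by
  have hll : n / 2 - 1 / 50 ≤ lam := by
    apply le_of_sq_le_sq _ hl0.le
    nlinarith
  have hsW : 0 < s * W := by positivity
  have hpl1 : p * lam ≤ 0.401 * s * W := by
    have h1 : p * lam * lam ≤ (0.401 * s * W) * lam := by
      have : (0.401 * s * W) * (n / 2 - 1 / 50) ≤ (0.401 * s * W) * lam :=
        mul_le_mul_of_nonneg_left hll (by positivity)
      have h3 : 0 ≤ s * W * (n - 100) := mul_nonneg (by positivity) (by linarith)
      nlinarith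
    exact le_of_mul_le_mul_right h1 hl0
  have hsl : s ≤ 0.0081 * lam := by linarith
  have hpp : p ≤ 0.0034 * W := by
    have h1 : p * lam ≤ (0.0034 * W) * lam := by
      refine hpl1.trans ?_
      have := mul_le_mul_of_nonneg_right hsl hWpos.le
      nlinarith
    exact le_of_mul_le_mul_right h1 hl0
  have h1 : 0.48 * s * (W - p) ≤ (lam - K) * (W - p) := by
    apply mul_le_mul_of_nonneg_right _ (by linarith)
    linarith
  have h2 : s * p ≤ s * (0.0034 * W) := mul_le_mul_of_nonneg_left hpp (by linarith)
  nlinarith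

lemma bip_spectral {V : Type*} [Fintype V] [DecidableEq V] [Nonempty V] (G : SimpleGraph V)
    (h : Real.sqrt ((Fintype.card V ^ 2 / 4 : ℕ) : ℝ) < specRad G)
    (hn : 100 ≤ Fintype.card V) (S : Finset V) (c : V → Prop)
    (hbip : ∀ v w, v ∉ S → w ∉ S → G.Adj v w → (c v ↔ ¬ c w))
    (hdeg : ∀ v ∈ S, ((nb G v).card : ℝ) ≤ Fintype.card V / 5)
    (hS : (S.card : ℝ) ≤ Fintype.card V / 250) : False := by
  classical
  obtain ⟨x, hx0, hx⟩ := eig_exists G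
  set lam := specRad G with hlam
  set n := Fintype.card V with hnn
  set W := ∑ v, x v ^ 2 with hW
  have hWpos : 0 < W := by
    obtain ⟨v0, hv0⟩ := Function.ne_iff.1 hx0
    have : x v0 ≠ 0 := hv0
    exact Finset.sum_pos' (fun _ _ => sq_nonneg _) ⟨v0, Finset.mem_univ _, by positivity⟩
  set p := ∑ v ∈ S, x v ^ 2 with hp
  set P := Sᶜ.filter c with hP
  set Q := Sᶜ.filter (fun v => ¬ c v) with hQ
  set Wp := ∑ v ∈ P, x v ^ 2 with hWp
  set Wq := ∑ v ∈ Q, x v ^ 2 with hWq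
  have hWsum : Wp + Wq + p = W := by
    rw [hWp, hWq, hP, hQ, Finset.sum_filter_add_sum_filter_not, hp, hW, add_comm,
      Finset.sum_add_sum_compl]
  have hcards : P.card + Q.card + S.card = n := by
    rw [hP, hQ, Finset.card_filter_add_card_filter_not, Finset.card_compl]
    have := Finset.card_le_univ S
    omega
  have hp0 : 0 ≤ p := Finset.sum_nonneg (fun _ _ => sq_nonneg _)
  have hWp0 : 0 ≤ Wp := Finset.sum_nonneg (fun _ _ => sq_nonneg _)
  have hWq0 : 0 ≤ Wq := Finset.sum_nonneg (fun _ _ => sq_nonneg _)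
  have hpl : p * lam ^ 2 ≤ S.card * (n / 5) * W := by
    rw [hp, Finset.sum_mul]
    calc ∑ v ∈ S, x v ^ 2 * lam ^ 2 ≤ ∑ v ∈ S, (n / 5 : ℝ) * W := by
          apply Finset.sum_le_sum
          intro v hv
          have h1 := local_sq_le G x lam hx Finset.univ (by simp) v (Finset.mem_univ _)
          have h2 := mul_le_mul_of_nonneg_right (hdeg v hv) hWpos.le
          linarith
      _ = _ := by simp; ring
  set a : V → V → ℝ := fun v w => if G.Adj v w then x v * x w else 0 with ha
  have hrow : ∀ v, ∑ w, a v w = lam * x v ^ 2 := by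
    intro v
    have : ∑ w, a v w = x v * ∑ w ∈ nb G v, x w := by
      rw [Finset.mul_sum, nb, Finset.sum_filter]
    rw [this, hx]; ring
  have hsymm : ∀ v w, a v w = a w v := by
    intro v w
    simp only [ha, G.adj_comm v w, mul_comm]
  have habs : ∀ v w, |a v w| ≤ |x v| * |x w| := by
    intro v w
    simp only [ha]
    split_ifs
    · rw [abs_mul]
    · simp; positivity
  set Q1 := ∑ v ∈ Sᶜ, ∑ w ∈ Sᶜ, a v w with hQ1
  set Q2 := ∑ v ∈ S, ∑ w ∈ Sᶜ, a v w with hQ2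
  set Q3 := ∑ v ∈ S, ∑ w ∈ S, a v w with hQ3
  have hE1 : Q2 + Q3 = lam * p := by
    rw [hQ2, hQ3, ← Finset.sum_add_distrib, hp, Finset.mul_sum]
    apply Finset.sum_congr rfl
    intro v _
    rw [add_comm, Finset.sum_add_sum_compl, hrow]
  have hE2 : Q2 + Q1 = lam * (Wp + Wq) := by
    have : Q2 = ∑ v ∈ Sᶜ, ∑ w ∈ S, a v w := by
      rw [hQ2, Finset.sum_comm]
      exact Finset.sum_congr rfl (fun v _ => Finset.sum_congr rfl (fun w _ => hsymm _ _))
    rw [this, hQ1, ← Finset.sum_add_distrib, hWp, hWq, hP, hQ,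
      Finset.sum_filter_add_sum_filter_not, Finset.mul_sum]
    apply Finset.sum_congr rfl
    intro v _
    rw [Finset.sum_add_sum_compl, hrow]
  have hQ3b : -Q3 ≤ S.card * p := by
    have h1 : |Q3| ≤ (∑ v ∈ S, |x v|) ^ 2 := by
      rw [sq, Finset.sum_mul_sum]
      refine (Finset.abs_sum_le_sum_abs _ _).trans (Finset.sum_le_sum (fun v _ => ?_))
      exact (Finset.abs_sum_le_sum_abs _ _).trans (Finset.sum_le_sum (fun w _ => habs v w))
    have h2 : (∑ v ∈ S, |x v|) ^ 2 ≤ S.card * p := by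
      refine (sq_sum_le_card_mul_sum_sq).trans ?_
      simp [hp]
    linarith [neg_abs_le Q3]
  set al := ∑ v ∈ P, |x v| with hal
  set be := ∑ v ∈ Q, |x v| with hbe
  have hal2 : al ^ 2 ≤ P.card * Wp := by
    refine (sq_sum_le_card_mul_sum_sq).trans ?_
    simp [hWp]
  have hbe2 : be ^ 2 ≤ Q.card * Wq := by
    refine (sq_sum_le_card_mul_sum_sq).trans ?_
    simp [hWq]
  have hal0 : 0 ≤ al := Finset.sum_nonneg (fun _ _ => abs_nonneg _)
  have hbe0 : 0 ≤ be := Finset.sum_nonneg (fun _ _ => abs_nonneg _)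
  have hQ1b : Q1 ≤ 2 * (al * be) := by
    have h0 : ∀ f : V → ℝ, ∑ v ∈ Sᶜ, f v = ∑ v ∈ P, f v + ∑ v ∈ Q, f v := by
      intro f
      rw [hP, hQ, Finset.sum_filter_add_sum_filter_not]
    have hz : ∀ v w, v ∉ S → w ∉ S → (c v ↔ c w) → a v w = 0 := by
      intro v w hv hw hvw
      simp only [ha]
      rw [if_neg]
      intro hadj
      have := hbip v w hv hw hadj
      tauto
    have hPP : ∑ v ∈ P, ∑ w ∈ P, a v w = 0 :=
      Finset.sum_eq_zero (fun v hv => Finset.sum_eq_zero (fun w hw => by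
        simp only [hP, Finset.mem_filter, Finset.mem_compl] at hv hw
        exact hz v w hv.1 hw.1 (by tauto)))
    have hQQ : ∑ v ∈ Q, ∑ w ∈ Q, a v w = 0 :=
      Finset.sum_eq_zero (fun v hv => Finset.sum_eq_zero (fun w hw => by
        simp only [hQ, Finset.mem_filter, Finset.mem_compl] at hv hw
        exact hz v w hv.1 hw.1 (by tauto)))
    have hPQ : ∑ v ∈ P, ∑ w ∈ Q, a v w ≤ al * be := by
      rw [hal, hbe, Finset.sum_mul_sum]
      exact Finset.sum_le_sum (fun v _ => Finset.sum_le_sum (fun w _ =>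
        (le_abs_self _).trans (habs v w)))
    have hQP : ∑ v ∈ Q, ∑ w ∈ P, a v w ≤ be * al := by
      rw [hal, hbe, Finset.sum_mul_sum]
      exact Finset.sum_le_sum (fun v _ => Finset.sum_le_sum (fun w _ =>
        (le_abs_self _).trans (habs v w)))
    rw [hQ1]
    simp only [h0, Finset.sum_add_distrib]
    linarith
  set K := Real.sqrt (((P.card + Q.card) ^ 2 / 4 : ℕ) : ℝ) with hK
  have hPQK : (P.card : ℝ) * Q.card ≤ K ^ 2 := by
    rw [hK, Real.sq_sqrt (Nat.cast_nonneg _)]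
    have : P.card * Q.card ≤ (P.card + Q.card) ^ 2 / 4 := by
      rw [Nat.le_div_iff_mul_le (by norm_num)]
      zify
      nlinarith [sq_nonneg ((P.card : ℤ) - Q.card)]
    exact_mod_cast this
  have hK0 : 0 ≤ K := Real.sqrt_nonneg _
  have hQ1K : Q1 ≤ K * (Wp + Wq) := by
    refine hQ1b.trans ?_
    apply le_of_sq_le_sq _ (by positivity)
    have h1 : al ^ 2 * be ^ 2 ≤ (P.card * Wp) * (Q.card * Wq) :=
      mul_le_mul hal2 hbe2 (by positivity) (by positivity)
    have h2 : (P.card * Wp) * (Q.card * Wq) ≤ K ^ 2 * (Wp * Wq) := by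
      have := mul_le_mul_of_nonneg_right hPQK (mul_nonneg hWp0 hWq0)
      linarith
    have h3 : 0 ≤ K ^ 2 * (Wp - Wq) ^ 2 := by positivity
    nlinarith
  have hmain : lam * (Wp + Wq) ≤ K * (Wp + Wq) + lam * p + S.card * p := by linarith
  have hl0 : 0 < lam := lt_of_le_of_lt (Real.sqrt_nonneg _) h
  rcases Finset.eq_empty_or_nonempty S with hSe | hSne
  · have hp00 : p = 0 := by rw [hp, hSe]; simp
    have hcc : P.card + Q.card = n := by rw [hSe] at hcards; simpa using hcards
    rw [hcc] at hK
    rw [hp00] at hmain hWsum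
    have h1 : lam * W ≤ K * W := by
      have : Wp + Wq = W := by linarith
      rw [this] at hmain; linarith
    have h2 := le_of_mul_le_mul_right h1 hWpos
    rw [hK] at h2
    linarith
  · have hs1 : (1 : ℝ) ≤ S.card := by exact_mod_cast hSne.card_pos
    set s : ℝ := (S.card : ℝ) with hs
    have hnR : (100 : ℝ) ≤ n := by exact_mod_cast hn
    have hKs : K ≤ n / 2 - s / 2 := by
      have hc : ((P.card + Q.card : ℕ) : ℝ) = n - s := by
        rw [hs, ← hcards]; push_cast; ring
      rw [hK]
      apply Real.sqrt_le_iff.2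
      constructor
      · linarith
      · have : (((P.card + Q.card) ^ 2 / 4 : ℕ) : ℝ) ≤ ((P.card + Q.card : ℕ) : ℝ) ^ 2 / 4 := by
          have := @Nat.cast_div_le ℝ _ _ _ ((P.card + Q.card) ^ 2) 4
          push_cast at this ⊢
          linarith
        rw [hc] at this
        have e : ((n : ℝ) - s) ^ 2 / 4 = (n / 2 - s / 2) ^ 2 := by ring
        linarith
    have hlsq : (n : ℝ) ^ 2 / 4 - 1 ≤ lam ^ 2 := by
      have h1 : Real.sqrt ((n ^ 2 / 4 : ℕ) : ℝ) ^ 2 < lam ^ 2 :=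
        pow_lt_pow_left₀ h (Real.sqrt_nonneg _) two_ne_zero
      rw [Real.sq_sqrt (Nat.cast_nonneg _)] at h1
      have h2 : n ^ 2 < 4 * (n ^ 2 / 4) + 4 := by omega
      have h3 : ((n ^ 2 : ℕ) : ℝ) < ((4 * (n ^ 2 / 4) + 4 : ℕ) : ℝ) := Nat.cast_lt.2 h2
      push_cast at h1 h3
      linarith
    have hW' : Wp + Wq = W - p := by linarith
    rw [hW'] at hmain
    exact bip_numeric n s lam K W p hnR hs1 hS hl0 hp0 hWpos hKs hlsq hpl hmain


lemma cycle_of_path {V : Type*} (G : SimpleGraph V) {a b y : V} (q : G.Walk a b) (hq : q.IsPath)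
    (hab : a ≠ b) (hy : y ∉ q.support) (h1 : G.Adj y a) (h2 : G.Adj b y) :
    ∃ (v : V) (c : G.Walk v v), c.IsCycle ∧ c.length = q.length + 2 := by
  refine ⟨y, Walk.cons h1 (q.concat h2), ?_, by simp⟩
  rw [Walk.cons_isCycle_iff]
  refine ⟨(Walk.concat_isPath_iff h2).2 ⟨hq, hy⟩, ?_⟩
  intro h
  rw [Walk.edges_concat, List.concat_eq_append, List.mem_append, List.mem_singleton] at h
  rcases h with h | h
  · exact hy (Walk.fst_mem_support_of_mem_edges _ h)
  · rw [Sym2.eq_iff] at h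
    rcases h with ⟨h, h'⟩ | ⟨h, h'⟩
    · exact G.ne_of_adj h1 h'.symm
    · exact hab h'

lemma common_nb {V : Type*} [Fintype V] [DecidableEq V] (G : SimpleGraph V) (Y F : Finset V)
    (d : ℕ) (x x' : V) (hx : (Y \ nb G x).card ≤ d) (hx' : (Y \ nb G x').card ≤ d)
    (hF : F.card + 2 * d < Y.card) : ∃ y ∈ Y, y ∉ F ∧ G.Adj x y ∧ G.Adj x' y := by
  by_contra! hno
  have hsub : Y ⊆ F ∪ ((Y \ nb G x) ∪ (Y \ nb G x')) := by
    intro y hy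
    simp only [Finset.mem_union, Finset.mem_sdiff, mem_nb]
    have := hno y hy
    tauto
  have h1 := Finset.card_le_card hsub
  have h2 := Finset.card_union_le F ((Y \ nb G x) ∪ (Y \ nb G x'))
  have h3 := Finset.card_union_le (Y \ nb G x) (Y \ nb G x')
  omega

lemma core_path {V : Type*} [Fintype V] [DecidableEq V] (G : SimpleGraph V) (X Y : Finset V)
    (N d : ℕ) (hX : ∀ x ∈ X, (Y \ nb G x).card ≤ d) (hXN : N ≤ X.card) (hYN : N ≤ Y.card) :
    ∀ (t : ℕ) (F : Finset V) (x x' : V), x ∈ X → x' ∈ X → x ≠ x' → x ∉ F → x' ∉ F →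
      F.card + 2 * t + 2 * d + 6 ≤ N → ∃ p : G.Walk x x', p.IsPath ∧ p.length = 2 * (t + 1) ∧
        ∀ v ∈ p.support, v ∉ F := by
  intro t
  induction t with
  | zero =>
    intro F x x' hx hx' hne hxF hxF' hN
    obtain ⟨y, hyY, hyF, h1, h2⟩ := common_nb G Y F d x x' (hX x hx) (hX x' hx') (by omega)
    refine ⟨Walk.cons h1 (Walk.cons h2.symm Walk.nil), ?_, by simp, ?_⟩
    · have := G.ne_of_adj h1
      have := G.ne_of_adj h2
      simp [Walk.isPath_def]
      tauto
    · simp only [Walk.support_cons, Walk.support_nil, List.mem_cons, List.not_mem_nil]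
      rintro v (rfl | rfl | rfl | h)
      · exact hxF
      · exact hyF
      · exact hxF'
      · exact h.elim
  | succ t ih =>
    intro F x x' hx hx' hne hxF hxF' hN
    have hex : ∃ x1 ∈ X, x1 ∉ insert x (insert x' F) := by
      by_contra! hno
      have h1 := Finset.card_le_card (show X ⊆ insert x (insert x' F) from hno)
      have h2 := Finset.card_insert_le x (insert x' F)
      have h3 := Finset.card_insert_le x' F
      omega
    obtain ⟨x1, hx1, hx1F⟩ := hex
    simp only [Finset.mem_insert, not_or] at hx1F
    obtain ⟨y, hyY, hyF, h1, h2⟩ := common_nb G Y (insert x' F) d x x1 (hX x hx) (hX x1 hx1) (by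
      have h3 := Finset.card_insert_le x' F
      omega)
    simp only [Finset.mem_insert, not_or] at hyF
    have hxy := G.ne_of_adj h1
    have hx1y := G.ne_of_adj h2
    obtain ⟨p, hp, hlen, hpF⟩ := ih (insert x (insert y F)) x1 x' hx1 hx' hx1F.2.1
      (by simp only [Finset.mem_insert, not_or]; tauto)
      (by simp only [Finset.mem_insert, not_or]; refine ⟨hne.symm, fun h => hyF.1 h.symm, hxF'⟩)
      (by
        have h2 := Finset.card_insert_le x (insert y F)
        have h3 := Finset.card_insert_le y F
        omega)
    refine ⟨Walk.cons h1 (Walk.cons h2.symm p), ?_, by simp [hlen]; ring, ?_⟩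
    · rw [Walk.cons_isPath_iff, Walk.cons_isPath_iff]
      refine ⟨⟨hp, fun h => ?_⟩, fun h => ?_⟩
      · have := hpF _ h
        simp at this
      · rw [Walk.support_cons, List.mem_cons] at h
        rcases h with h | h
        · exact hxy h
        · have := hpF _ h
          simp at this
    · simp only [Walk.support_cons, List.mem_cons]
      rintro v (rfl | rfl | h)
      · exact hxF
      · exact hyF.2
      · have := hpF _ h
        simp only [Finset.mem_insert, not_or] at this
        exact this.2.2

lemma core_even {V : Type*} [Fintype V] [DecidableEq V] (G : SimpleGraph V) (X Y : Finset V)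
    (N d : ℕ) (hX : ∀ x ∈ X, (Y \ nb G x).card ≤ d) (hXN : N ≤ X.card) (hYN : N ≤ Y.card)
    (t : ℕ) (hN : 2 * t + 2 * d + 7 ≤ N) :
    ∃ (v : V) (c : G.Walk v v), c.IsCycle ∧ c.length = 2 * t + 4 := by
  obtain ⟨x, hx, x', hx', hne⟩ := Finset.one_lt_card.1 (show 1 < X.card by omega)
  obtain ⟨y, hyY, -, h1, h2⟩ := common_nb G Y ∅ d x x' (hX x hx) (hX x' hx')
    (by simp only [Finset.card_empty]; omega)
  obtain ⟨p, hp, hlen, hpF⟩ := core_path G X Y N d hX hXN hYN t {y} x x' hx hx' hne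
    (by simpa using G.ne_of_adj h1) (by simpa using G.ne_of_adj h2)
    (by simp only [Finset.card_singleton]; omega)
  obtain ⟨v, c, hc, hcl⟩ := cycle_of_path G p hp hne (y := y) (fun h => hpF _ h (by simp)) h1.symm h2
  exact ⟨v, c, hc, by omega⟩

lemma core_odd {V : Type*} [Fintype V] [DecidableEq V] (G : SimpleGraph V) (X Y : Finset V)
    (N d : ℕ) (hX : ∀ x ∈ X, (Y \ nb G x).card ≤ d) (hXN : N ≤ X.card) (hYN : N ≤ Y.card)
    (t : ℕ) (hN : 2 * t + 2 * d + 8 ≤ N) (u v : V) (huv : G.Adj u v)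
    (hu : 3 ≤ (nb G u ∩ X).card) (hv : 3 ≤ (nb G v ∩ X).card) :
    ∃ (v : V) (c : G.Walk v v), c.IsCycle ∧ c.length = 2 * t + 5 := by
  have h1 : ∃ x ∈ nb G u ∩ X, x ∉ ({v} : Finset V) := by
    by_contra! hno
    have := Finset.card_le_card (show nb G u ∩ X ⊆ {v} from hno)
    simp only [Finset.card_singleton] at this
    omega
  obtain ⟨x, hx, hxv⟩ := h1
  have h2 : ∃ x' ∈ nb G v ∩ X, x' ∉ ({u, x} : Finset V) := by
    by_contra! hno
    have := Finset.card_le_card (show nb G v ∩ X ⊆ {u, x} from hno)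
    have h3 := Finset.card_le_two (a := u) (b := x)
    omega
  obtain ⟨x', hx', hxu'⟩ := h2
  simp only [Finset.mem_inter, mem_nb] at hx hx'
  simp only [Finset.mem_insert, Finset.mem_singleton, not_or] at hxv hxu'
  have hux := G.ne_of_adj hx.1
  have hvx' := G.ne_of_adj hx'.1
  obtain ⟨p, hp, hlen, hpF⟩ := core_path G X Y N d hX hXN hYN t {u, v} x x' hx.2 hx'.2
    (fun h => hxu'.2 h.symm)
    (by simp only [Finset.mem_insert, Finset.mem_singleton, not_or]; exact ⟨hux.symm, hxv⟩)
    (by simp only [Finset.mem_insert, Finset.mem_singleton, not_or]; exact ⟨hxu'.1, hvx'.symm⟩)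
    (by have h3 := Finset.card_le_two (a := u) (b := v); omega)
  have hup : u ∉ p.support := fun h => hpF _ h (by simp)
  have hvp : v ∉ p.support := fun h => hpF _ h (by simp)
  obtain ⟨w, c, hc, hcl⟩ := cycle_of_path G (Walk.cons hx.1 p)
    ((Walk.cons_isPath_iff _ _).2 ⟨hp, hup⟩) (fun h => hxu'.1 h.symm) (y := v)
    (by rw [Walk.support_cons, List.mem_cons, not_or]; exact ⟨(G.ne_of_adj huv).symm, hvp⟩)
    huv.symm hx'.1.symm
  refine ⟨w, c, hc, ?_⟩
  rw [hcl, Walk.length_cons, hlen]; ring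


lemma core_half {V : Type*} [Fintype V] [DecidableEq V] (A : Finset V) (f : V → ℕ) (n : ℝ)
    (hn : 0 < n) (hf : (∑ v ∈ A, (f v : ℝ)) ≤ n ^ 2 / 1000000) :
    (A.card : ℝ) - n / 1000 ≤ ((A.filter (fun v => (f v : ℝ) ≤ n / 1000)).card : ℝ) := by
  set B := A.filter (fun v => ¬ (f v : ℝ) ≤ n / 1000) with hB
  have h1 : (B.card : ℝ) * (n / 1000) ≤ n ^ 2 / 1000000 := by
    refine le_trans ?_ hf
    calc (B.card : ℝ) * (n / 1000) = ∑ v ∈ B, n / 1000 := by simp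
      _ ≤ ∑ v ∈ B, (f v : ℝ) := by
        apply Finset.sum_le_sum
        intro v hv
        simp only [hB, Finset.mem_filter, not_le] at hv
        exact hv.2.le
      _ ≤ _ := Finset.sum_le_sum_of_subset_of_nonneg (Finset.filter_subset _ _)
        (fun _ _ _ => Nat.cast_nonneg _)
  have h2 : (B.card : ℝ) ≤ n / 1000 := by
    have : (B.card : ℝ) * (n / 1000) ≤ (n / 1000) * (n / 1000) := by linarith
    exact le_of_mul_le_mul_right this (by positivity)
  have h3 := Finset.card_filter_add_card_filter_not (s := A) (fun v => (f v : ℝ) ≤ n / 1000)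
  have h4 : ((A.filter (fun v => (f v : ℝ) ≤ n / 1000)).card : ℝ) + B.card = A.card := by
    rw [hB]; exact_mod_cast h3
  linarith

lemma core_exists {V : Type*} [Fintype V] [DecidableEq V] [Nonempty V] (G : SimpleGraph V)
    (A : Finset V)
    (hA : (1 / 4 - 1 / 1000000) * (Fintype.card V : ℝ) ^ 2 ≤ ∑ v ∈ A, ((nb G v \ A).card : ℝ)) :
    ∃ (X Y : Finset V), Disjoint X Y ∧
      (∀ x ∈ X, (Y \ nb G x).card ≤ Fintype.card V / 1000) ∧
      (∀ y ∈ Y, (X \ nb G y).card ≤ Fintype.card V / 1000) ∧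
      0.498 * (Fintype.card V : ℝ) ≤ X.card ∧ 0.498 * (Fintype.card V : ℝ) ≤ Y.card := by
  classical
  set n : ℝ := (Fintype.card V : ℝ) with hn
  have hn0 : 0 < n := by rw [hn]; exact_mod_cast Fintype.card_pos
  have hab : (A.card : ℝ) + Aᶜ.card = n := by
    rw [hn]; exact_mod_cast Finset.card_add_card_compl A
  have hmisA : ∀ v, ((Aᶜ \ nb G v).card : ℝ) = Aᶜ.card - (nb G v \ A).card := by
    intro v
    have h1 := Finset.card_sdiff_add_card_inter Aᶜ (nb G v)
    have h2 : Aᶜ ∩ nb G v = nb G v \ A := by ext w; simp; tauto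
    rw [h2] at h1
    rw [← h1]; push_cast; ring
  have hsumA : ∑ v ∈ A, ((Aᶜ \ nb G v).card : ℝ) ≤ A.card * Aᶜ.card -
      (1 / 4 - 1 / 1000000) * n ^ 2 := by
    simp only [hmisA, Finset.sum_sub_distrib, Finset.sum_const, nsmul_eq_mul]
    linarith
  have hsumA0 : 0 ≤ ∑ v ∈ A, ((Aᶜ \ nb G v).card : ℝ) :=
    Finset.sum_nonneg (fun _ _ => Nat.cast_nonneg _)
  have hswap : ∑ v ∈ Aᶜ, ((A \ nb G v).card : ℝ) = ∑ v ∈ A, ((Aᶜ \ nb G v).card : ℝ) := by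
    have h := Finset.sum_card_bipartiteAbove_eq_sum_card_bipartiteBelow (s := A) (t := Aᶜ)
      (fun v w => ¬ G.Adj v w)
    have e1 : ∀ v, Finset.bipartiteAbove (fun v w => ¬ G.Adj v w) Aᶜ v = Aᶜ \ nb G v := by
      intro v; ext w; simp [Finset.bipartiteAbove, mem_nb]
    have e2 : ∀ v, Finset.bipartiteBelow (fun v w => ¬ G.Adj v w) A v = A \ nb G v := by
      intro v; ext w; simp [Finset.bipartiteBelow, mem_nb, G.adj_comm]
    simp only [e1, e2] at h
    exact_mod_cast h.symm
  have hsq : ((A.card : ℝ) - Aᶜ.card) ^ 2 ≤ (n / 500) ^ 2 := by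
    have : ((A.card : ℝ) - Aᶜ.card) ^ 2 = n ^ 2 - 4 * (A.card * Aᶜ.card) := by rw [← hab]; ring
    nlinarith
  have habs := abs_le_of_sq_le_sq' hsq (by positivity)
  have hsmall : ∑ v ∈ A, ((Aᶜ \ nb G v).card : ℝ) ≤ n ^ 2 / 1000000 := by
    have : (A.card : ℝ) * Aᶜ.card ≤ n ^ 2 / 4 := by
      rw [← hab]; nlinarith [sq_nonneg ((A.card : ℝ) - Aᶜ.card)]
    linarith
  have hA1 := core_half A (fun v => (Aᶜ \ nb G v).card) n hn0 hsmall
  have hB1 := core_half Aᶜ (fun v => (A \ nb G v).card) n hn0 (by rw [hswap]; exact hsmall)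
  have hfl : ∀ k : ℕ, (k : ℝ) ≤ n / 1000 → k ≤ Fintype.card V / 1000 := by
    intro k hk
    rw [Nat.le_div_iff_mul_le (by norm_num)]
    have : (k : ℝ) * 1000 ≤ (Fintype.card V : ℝ) := by rw [← hn]; linarith
    exact_mod_cast this
  refine ⟨A.filter (fun v => ((Aᶜ \ nb G v).card : ℝ) ≤ n / 1000),
    Aᶜ.filter (fun v => ((A \ nb G v).card : ℝ) ≤ n / 1000), ?_, ?_, ?_, ?_, ?_⟩
  · exact Finset.disjoint_of_subset_left (Finset.filter_subset _ _)
      (Finset.disjoint_of_subset_right (Finset.filter_subset _ _) disjoint_compl_right)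
  · intro x hx
    apply hfl
    simp only [Finset.mem_filter] at hx
    refine le_trans ?_ hx.2
    exact_mod_cast Finset.card_le_card (Finset.sdiff_subset_sdiff (Finset.filter_subset _ _) le_rfl)
  · intro x hx
    apply hfl
    simp only [Finset.mem_filter] at hx
    refine le_trans ?_ hx.2
    exact_mod_cast Finset.card_le_card (Finset.sdiff_subset_sdiff (Finset.filter_subset _ _) le_rfl)
  · refine le_trans ?_ hA1; linarith [habs.1]
  · refine le_trans ?_ hB1; linarith [habs.2]

lemma extremal_case {V : Type*} [Fintype V] [DecidableEq V] [Nonempty V] (G : SimpleGraph V)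
    (h : Real.sqrt ((Fintype.card V ^ 2 / 4 : ℕ) : ℝ) < specRad G)
    (hn : 1000 ≤ Fintype.card V) (A : Finset V)
    (hA : (1 / 4 - 1 / 1000000) * (Fintype.card V : ℝ) ^ 2 ≤ ∑ v ∈ A, ((nb G v \ A).card : ℝ))
    (l : ℕ) (hl4 : 4 ≤ l) (hl : (l : ℝ) ≤ Fintype.card V / 4) :
    ∃ (v : V) (c : G.Walk v v), c.IsCycle ∧ c.length = l := by
  classical
  obtain ⟨X, Y, hXY, hX, hY, hXc, hYc⟩ := core_exists G A hA
  set n := Fintype.card V with hnn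
  have hXc' : 498 * n ≤ 1000 * X.card := by
    have : (498 : ℝ) * n ≤ 1000 * X.card := by linarith
    exact_mod_cast this
  have hYc' : 498 * n ≤ 1000 * Y.card := by
    have : (498 : ℝ) * n ≤ 1000 * Y.card := by linarith
    exact_mod_cast this
  have hl' : 4 * l ≤ n := by
    have : (4 : ℝ) * l ≤ n := by linarith
    exact_mod_cast this
  have hXY' : X.card + Y.card ≤ n := by
    rw [← Finset.card_union_of_disjoint hXY]; exact Finset.card_le_univ _
  have hcX : n / 3 ≤ X.card := by omega
  have hcY : n / 3 ≤ Y.card := by omega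
  rcases Nat.even_or_odd' l with ⟨t, ht | ht⟩
  · obtain ⟨v, c, hc, hcl⟩ := core_even G X Y (n / 3) (n / 1000) hX hcX hcY (t - 2) (by omega)
    exact ⟨v, c, hc, by omega⟩
  · by_cases hmono : ∃ u v, G.Adj u v ∧ ((3 ≤ (nb G u ∩ X).card ∧ 3 ≤ (nb G v ∩ X).card) ∨
        (3 ≤ (nb G u ∩ Y).card ∧ 3 ≤ (nb G v ∩ Y).card))
    · obtain ⟨u, v, huv, hh | hh⟩ := hmono
      · obtain ⟨v, c, hc, hcl⟩ := core_odd G X Y (n / 3) (n / 1000) hX hcX hcY (t - 2) (by omega)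
          u v huv hh.1 hh.2
        exact ⟨v, c, hc, by omega⟩
      · obtain ⟨v, c, hc, hcl⟩ := core_odd G Y X (n / 3) (n / 1000) hY hcY hcX (t - 2) (by omega)
          u v huv hh.1 hh.2
        exact ⟨v, c, hc, by omega⟩
    · exfalso
      push Not at hmono
      set S := Finset.univ.filter (fun v => 5 * (nb G v).card ≤ n) with hS
      have hmem : ∀ v, v ∉ S → n < 5 * (nb G v).card := by
        intro v hv; simpa [hS] using hv
      have hnbX : ∀ x ∈ X, x ∉ S := by
        intro x hx hxS
        simp only [hS, Finset.mem_filter] at hxS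
        have h1 := Finset.card_sdiff_add_card_inter Y (nb G x)
        have h2 := Finset.card_le_card (Finset.inter_subset_right (s₁ := Y) (s₂ := nb G x))
        have := hX x hx
        omega
      have hnbY : ∀ x ∈ Y, x ∉ S := by
        intro x hx hxS
        simp only [hS, Finset.mem_filter] at hxS
        have h1 := Finset.card_sdiff_add_card_inter X (nb G x)
        have h2 := Finset.card_le_card (Finset.inter_subset_right (s₁ := X) (s₂ := nb G x))
        have := hY x hx
        omega
      have hcU : (X ∪ Y).card = X.card + Y.card := Finset.card_union_of_disjoint hXY
      have hcC := Finset.card_add_card_compl (X ∪ Y)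
      have hSc : S.card ≤ (X ∪ Y)ᶜ.card := by
        apply Finset.card_le_card
        intro v hv
        simp only [Finset.mem_compl, Finset.mem_union, not_or]
        exact ⟨fun hh => hnbX v hh hv, fun hh => hnbY v hh hv⟩
      have hside : ∀ v, v ∉ S → (nb G v ∩ X).card < 3 → 3 ≤ (nb G v ∩ Y).card := by
        intro v hv h3
        have h1 := hmem v hv
        have h2 : nb G v ⊆ (nb G v ∩ X) ∪ ((nb G v ∩ Y) ∪ (X ∪ Y)ᶜ) := by
          intro w hw
          simp only [Finset.mem_compl, Finset.mem_union, Finset.mem_inter]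
          tauto
        have h4 := Finset.card_le_card h2
        have h5 := Finset.card_union_le (nb G v ∩ X) ((nb G v ∩ Y) ∪ (X ∪ Y)ᶜ)
        have h6 := Finset.card_union_le (nb G v ∩ Y) ((X ∪ Y)ᶜ)
        omega
      refine bip_spectral G h (by omega) S (fun v => 3 ≤ (nb G v ∩ X).card) ?_ ?_ ?_
      · intro v w hv hw hvw
        have h1 := hmono v w hvw
        constructor
        · intro h2 h3
          have := h1.1 h2
          omega
        · intro h2
          by_contra h3
          have := h1.2 (hside v hv (by omega))
          have := hside w hw (by omega)
          omega
      · intro v hv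
        simp only [hS, Finset.mem_filter] at hv
        have : (5 : ℝ) * (nb G v).card ≤ n := by exact_mod_cast hv.2
        linarith
      · have : 250 * S.card ≤ n := by omega
        have : (250 : ℝ) * S.card ≤ n := by exact_mod_cast this
        linarith


/-- The one-sided regularity property used for embedding. -/
def GoodPair {V : Type*} [Fintype V] [DecidableEq V] (G : SimpleGraph V) (e κ : ℝ)
    (A B : Finset V) : Prop :=
  ∀ A' ⊆ A, ∀ B' ⊆ B, e * A.card ≤ A'.card → e * B.card ≤ B'.card →
    ∃ x ∈ A', κ * (B'.card : ℝ) ≤ ((nb G x ∩ B').card : ℝ)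

lemma lift_walk {V : Type*} [Fintype V] [DecidableEq V] (G : SimpleGraph V)
    {K : Type*} [DecidableEq K] (R : SimpleGraph K) (cl : K → Finset V)
    (hdisj : ∀ a b, a ≠ b → Disjoint (cl a) (cl b)) (hne : ∀ a, (cl a).Nonempty)
    (e κ γ : ℝ) (he : 0 < e) (hκ : 0 < κ) (hγ1 : e ≤ γ) (hγ : e ≤ κ * γ)
    (hR : ∀ a b, R.Adj a b → GoodPair G e κ (cl a) (cl b))
    {a b : K} (p : R.Walk a b) : ∀ (F S T : Finset V), 1 ≤ p.length →
      S ⊆ cl a → T ⊆ cl b → e * (cl a).card ≤ S.card → e * (cl b).card ≤ T.card →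
      Disjoint S F → Disjoint T F → Disjoint S T →
      (∀ c, ((cl c ∩ F).card : ℝ) + (cl c ∩ T).card + p.support.count c ≤
        (1 - γ) * (cl c).card) →
      ∃ x ∈ S, ∃ y ∈ T, ∃ q : G.Walk x y, q.IsPath ∧ q.length = p.length ∧
        ∀ v ∈ q.support, v ∉ F := by
  have hpos : ∀ a, (0 : ℝ) < (cl a).card := fun a => by exact_mod_cast (hne a).card_pos
  induction p with
  | nil => intro F S T h; simp at h
  | @cons a a' b h p ih =>
    intro F S T _ hSa hTb hS hT hSF hTF hST hcount
    by_cases hp : p.length = 0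
    · obtain rfl := Walk.eq_of_length_eq_zero hp
      obtain ⟨x, hx, hxc⟩ := hR _ _ h S hSa T hTb hS hT
      have hTpos : (0 : ℝ) < T.card := lt_of_lt_of_le (mul_pos he (hpos _)) hT
      have : (0 : ℝ) < (nb G x ∩ T).card := lt_of_lt_of_le (mul_pos hκ hTpos) hxc
      obtain ⟨y, hy⟩ := Finset.card_pos.1 (by exact_mod_cast this)
      rw [Finset.mem_inter, mem_nb] at hy
      refine ⟨x, hx, y, hy.2, Walk.cons hy.1 Walk.nil, ?_, by simp [hp], ?_⟩
      · simp [hy.1.ne]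
      · intro v hv
        simp only [Walk.support_cons, Walk.support_nil, List.mem_cons, List.not_mem_nil,
          or_false] at hv
        rcases hv with rfl | rfl
        · exact Finset.disjoint_left.1 hSF hx
        · exact Finset.disjoint_left.1 hTF hy.2
    · set U := cl a' \ (F ∪ T) with hU
      have hUc : γ * (cl a').card ≤ (U.card : ℝ) := by
        have h1 := Finset.card_sdiff_add_card_inter (cl a') (F ∪ T)
        have h2 := Finset.card_union_le (cl a' ∩ F) (cl a' ∩ T)
        rw [← Finset.inter_union_distrib_left] at h2
        have h3 := hcount a'
        have h4 : (0 : ℝ) ≤ (Walk.cons h p).support.count a' := Nat.cast_nonneg _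
        have h1' : (U.card : ℝ) + (cl a' ∩ (F ∪ T)).card = (cl a').card := by exact_mod_cast h1
        have h2' : ((cl a' ∩ (F ∪ T)).card : ℝ) ≤ (cl a' ∩ F).card + (cl a' ∩ T).card := by
          exact_mod_cast h2
        linarith
      obtain ⟨x, hx, hxc⟩ := hR _ _ h S hSa U Finset.sdiff_subset hS
        (le_trans (mul_le_mul_of_nonneg_right hγ1 (hpos _).le) hUc)
      have hS'c : e * (cl a').card ≤ ((nb G x ∩ U).card : ℝ) := by
        refine le_trans ?_ hxc
        calc e * (cl a').card ≤ (κ * γ) * (cl a').card :=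
              mul_le_mul_of_nonneg_right hγ (hpos _).le
          _ = κ * (γ * (cl a').card) := by ring
          _ ≤ _ := mul_le_mul_of_nonneg_left hUc hκ.le
      have hxa : x ∈ cl a := hSa hx
      have hxna : x ∉ cl a' := Finset.disjoint_left.1 (hdisj _ _ h.ne) hxa
      have hxT : x ∉ T := Finset.disjoint_left.1 hST hx
      have hxF : x ∉ F := Finset.disjoint_left.1 hSF hx
      obtain ⟨x', hx', y, hy, q, hq, hql, hqF⟩ := ih (insert x F) (nb G x ∩ U) T (by omega)
        (Finset.inter_subset_right.trans Finset.sdiff_subset) hTb hS'c hT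
        (by
          rw [Finset.disjoint_left]
          intro v hv hv'
          simp only [hU, Finset.mem_inter, Finset.mem_sdiff, Finset.mem_union, not_or] at hv
          rcases Finset.mem_insert.1 hv' with rfl | hv'
          · exact hxna hv.2.1
          · exact hv.2.2.1 hv')
        (by
          rw [Finset.disjoint_insert_right]
          exact ⟨hxT, hTF⟩)
        (by
          rw [Finset.disjoint_left]
          intro v hv hv'
          simp only [hU, Finset.mem_inter, Finset.mem_sdiff, Finset.mem_union, not_or] at hv
          exact hv.2.2.2 hv')
        (by
          intro c
          refine le_trans ?_ (hcount c)
          rw [Walk.support_cons, List.count_cons]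
          have : (cl c ∩ insert x F).card ≤ (cl c ∩ F).card + if a = c then 1 else 0 := by
            by_cases hac : a = c
            · subst hac
              rw [Finset.inter_insert_of_mem hxa]
              simpa using Finset.card_insert_le x (cl a ∩ F)
            · rw [Finset.inter_insert_of_notMem
                (Finset.disjoint_left.1 (hdisj _ _ hac) hxa)]
              simp
          have : ((cl c ∩ insert x F).card : ℝ) ≤ (cl c ∩ F).card + if a = c then 1 else 0 := by
            exact_mod_cast this
          push_cast
          simp only [beq_iff_eq]
          linarith)
      simp only [hU, Finset.mem_inter, mem_nb] at hx'
      refine ⟨x, hx, y, hy, Walk.cons hx'.1 q, ?_, by simp [hql], ?_⟩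
      · rw [Walk.cons_isPath_iff]
        exact ⟨hq, fun hh => hqF x hh (Finset.mem_insert_self _ _)⟩
      · intro v hv
        rw [Walk.support_cons, List.mem_cons] at hv
        rcases hv with rfl | hv
        · exact hxF
        · exact fun hh => hqF v hv (Finset.mem_insert_of_mem hh)

lemma goodPair_few {V : Type*} [Fintype V] [DecidableEq V] (G : SimpleGraph V) (e κ : ℝ)
    (A B : Finset V) (he1 : e ≤ 1) (h : GoodPair G e κ A B) :
    ((A.filter (fun x => ((nb G x ∩ B).card : ℝ) < κ * B.card)).card : ℝ) < e * A.card := by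
  by_contra! hcon
  obtain ⟨x, hx, hxc⟩ := h _ (Finset.filter_subset _ _) B subset_rfl hcon
    (by nlinarith [(Nat.cast_nonneg B.card : (0 : ℝ) ≤ B.card)])
  rw [Finset.mem_filter] at hx
  linarith [hx.2]

lemma cycle_of_walk {V : Type*} [Fintype V] [DecidableEq V] (G : SimpleGraph V)
    {K : Type*} [DecidableEq K] (R : SimpleGraph K) (cl : K → Finset V)
    (hdisj : ∀ a b, a ≠ b → Disjoint (cl a) (cl b)) (hne : ∀ a, (cl a).Nonempty)
    (e κ γ : ℝ) (he : 0 < e) (he4 : e ≤ 1 / 4) (hκ3 : 3 * e ≤ κ) (hγ1 : e ≤ γ) (hγ : e ≤ κ * γ)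
    (hR : ∀ a b, R.Adj a b → GoodPair G e κ (cl a) (cl b))
    (hbig : ∀ a, 1 ≤ e * (cl a).card)
    {a b c₀ : K} (p : R.Walk a b) (hp : 1 ≤ p.length) (ha : R.Adj c₀ a) (hb : R.Adj c₀ b)
    (hcount : ∀ c, (p.support.count c : ℝ) + 1 + 2 * e * (cl c).card ≤ (1 - γ) * (cl c).card) :
    ∃ (v : V) (q : G.Walk v v), q.IsCycle ∧ q.length = p.length + 2 := by
  have hpos : ∀ a, (0 : ℝ) < (cl a).card := fun a => by exact_mod_cast (hne a).card_pos
  have h1 := goodPair_few G e κ _ _ (by linarith) (hR _ _ ha)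
  have h2 := goodPair_few G e κ _ _ (by linarith) (hR _ _ hb)
  set B1 := (cl c₀).filter (fun x => ((nb G x ∩ cl a).card : ℝ) < κ * (cl a).card) with hB1
  set B2 := (cl c₀).filter (fun x => ((nb G x ∩ cl b).card : ℝ) < κ * (cl b).card) with hB2
  obtain ⟨x₀, hx₀, hx₀a, hx₀b⟩ : ∃ x₀ ∈ cl c₀, κ * (cl a).card ≤ ((nb G x₀ ∩ cl a).card : ℝ) ∧
      κ * (cl b).card ≤ ((nb G x₀ ∩ cl b).card : ℝ) := by
    by_contra! hno
    have hsub : cl c₀ ⊆ B1 ∪ B2 := by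
      intro x hx
      simp only [hB1, hB2, Finset.mem_union, Finset.mem_filter]
      by_cases hxa : κ * (cl a).card ≤ ((nb G x ∩ cl a).card : ℝ)
      · exact Or.inr ⟨hx, hno x hx hxa⟩
      · exact Or.inl ⟨hx, not_le.1 hxa⟩
    have h3 : (cl c₀).card ≤ B1.card + B2.card :=
      (Finset.card_le_card hsub).trans (Finset.card_union_le _ _)
    have h3' : ((cl c₀).card : ℝ) ≤ B1.card + B2.card := by exact_mod_cast h3
    nlinarith [hpos c₀]
  have hceil : ∀ c, (⌈e * (cl c).card⌉₊ : ℝ) ≤ 2 * e * (cl c).card := by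
    intro c
    have := Nat.ceil_lt_add_one (mul_pos he (hpos c)).le
    linarith [hbig c]
  obtain ⟨T, hTsub, hTc⟩ := Finset.exists_subset_card_eq
    (s := nb G x₀ ∩ cl b) (n := ⌈e * (cl b).card⌉₊) (by
      have : (⌈e * (cl b).card⌉₊ : ℝ) ≤ (nb G x₀ ∩ cl b).card := by
        refine (hceil b).trans (le_trans ?_ hx₀b)
        exact mul_le_mul_of_nonneg_right (by linarith) (hpos b).le
      exact_mod_cast this)
  have hTb : T ⊆ cl b := hTsub.trans Finset.inter_subset_right
  have hTc' : (T.card : ℝ) ≤ 2 * e * (cl b).card := by rw [hTc]; exact hceil b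
  have hclT : ∀ c, ((cl c ∩ T).card : ℝ) ≤ 2 * e * (cl c).card := by
    intro c
    by_cases hcb : c = b
    · subst hcb
      refine le_trans ?_ hTc'
      exact_mod_cast Finset.card_le_card Finset.inter_subset_right
    · have : cl c ∩ T = ∅ := by
        rw [← Finset.disjoint_iff_inter_eq_empty]
        exact Finset.disjoint_of_subset_right hTb (hdisj _ _ hcb)
      rw [this]
      have := hpos c
      simp; positivity
  have hx₀T : x₀ ∉ T := fun hh => by
    have := Finset.mem_inter.1 (hTsub hh)
    exact G.loopless.irrefl _ (mem_nb.1 this.1)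
  obtain ⟨x, hx, y, hy, q, hq, hql, hqF⟩ := lift_walk G R cl hdisj hne e κ γ he (by linarith)
    hγ1 hγ hR p {x₀} ((nb G x₀ ∩ cl a) \ T) T hp
    (Finset.sdiff_subset.trans Finset.inter_subset_right) hTb
    (by
      have h4 := Finset.le_card_sdiff T (nb G x₀ ∩ cl a)
      have h5 : T ∩ cl a = cl a ∩ T := Finset.inter_comm _ _
      have h6 := Finset.card_sdiff_add_card_inter (nb G x₀ ∩ cl a) T
      have h7 : ((nb G x₀ ∩ cl a) ∩ T).card ≤ (cl a ∩ T).card :=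
        Finset.card_le_card (Finset.inter_subset_inter_right Finset.inter_subset_right)
      have h8 := hclT a
      have h6' : ((((nb G x₀ ∩ cl a) \ T).card : ℝ)) + ((nb G x₀ ∩ cl a) ∩ T).card =
        (nb G x₀ ∩ cl a).card := by exact_mod_cast h6
      have h7' : (((nb G x₀ ∩ cl a) ∩ T).card : ℝ) ≤ (cl a ∩ T).card := by exact_mod_cast h7
      nlinarith [hpos a])
    (by rw [hTc]; exact Nat.le_ceil _)
    (by
      rw [Finset.disjoint_singleton_right]
      intro hh
      have := Finset.mem_inter.1 (Finset.mem_sdiff.1 hh).1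
      exact G.loopless.irrefl _ (mem_nb.1 this.1))
    (by rw [Finset.disjoint_singleton_right]; exact hx₀T)
    Finset.sdiff_disjoint
    (by
      intro c
      have h4 : ((cl c ∩ {x₀}).card : ℝ) ≤ 1 := by
        have := Finset.card_le_card (Finset.inter_subset_right (s₁ := cl c) (s₂ := {x₀}))
        rw [Finset.card_singleton] at this
        exact_mod_cast this
      linarith [hclT c, hcount c])
  have hxx := Finset.mem_sdiff.1 hx
  have hx1 := mem_nb.1 (Finset.mem_inter.1 hxx.1).1
  have hy1 := mem_nb.1 (Finset.mem_inter.1 (hTsub hy)).1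
  obtain ⟨v, c, hc, hcl⟩ := cycle_of_path G q hq (fun h => hxx.2 (h ▸ hy))
    (fun hh => hqF _ hh (Finset.mem_singleton_self _)) hx1 hy1.symm
  exact ⟨v, c, hc, by omega⟩

lemma osc_walk {K : Type*} [DecidableEq K] (R : SimpleGraph K) {a b : K} (h : R.Adj a b) (t : ℕ) :
    ∃ w : R.Walk a a, w.length = 2 * t ∧
      ∀ v, w.support.tail.count v ≤ if v = a ∨ v = b then t else 0 := by
  induction t with
  | zero => exact ⟨Walk.nil, by simp, by simp⟩
  | succ t ih =>
    obtain ⟨w, hw, hc⟩ := ih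
    refine ⟨w.append (Walk.cons h (Walk.cons h.symm Walk.nil)), ?_, ?_⟩
    · simp [hw]; ring
    · intro v
      have := hc v
      rw [Walk.tail_support_append, List.count_append]
      simp only [Walk.support_cons, Walk.support_nil, List.tail_cons, List.count_cons,
        List.count_nil, beq_iff_eq]
      have hab := h.ne
      by_cases h1 : v = a
      · subst h1
        simp [hab.symm] at this ⊢
        omega
      · by_cases h2 : v = b
        · subst h2
          simp [hab] at this ⊢
          omega
        · simp [h1, h2, Ne.symm h1, Ne.symm h2] at this ⊢
          omega

lemma excursion {K : Type*} [Fintype K] [DecidableEq K] (R : SimpleGraph K) {r a b : K}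
    (hr : R.Reachable r a) (h : R.Adj a b) :
    ∃ d ≤ Fintype.card K, ∀ t, ∃ w : R.Walk r r, w.length = 2 * d + 2 * t ∧
      ∀ v, w.support.tail.count v ≤ 2 * d + if v = a ∨ v = b then t else 0 := by
  obtain ⟨p, hp⟩ := hr.exists_isPath
  refine ⟨p.length, hp.length_lt.le, fun t => ?_⟩
  obtain ⟨w, hw, hc⟩ := osc_walk R h t
  refine ⟨(p.append w).append p.reverse, by simp [hw]; ring, ?_⟩
  intro v
  rw [Walk.tail_support_append, Walk.tail_support_append, List.count_append, List.count_append]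
  have h1 : p.support.tail.count v ≤ p.length := List.count_le_length.trans (by simp)
  have h2 : p.reverse.support.tail.count v ≤ p.length := List.count_le_length.trans (by simp)
  have := hc v
  omega

lemma multi_excursion {K : Type*} [Fintype K] [DecidableEq K] (R : SimpleGraph K) (r : K) (T : ℕ)
    (D : Finset (K × K)) (hD : ∀ d ∈ D, R.Reachable r d.1 ∧ R.Adj d.1 d.2) :
    ∃ E ≤ Fintype.card K * D.card, ∀ τ ≤ D.card * T, ∃ w : R.Walk r r,
      w.length = 2 * E + 2 * τ ∧
      ∀ v, w.support.tail.count v ≤ 2 * E + T * (D.filter (fun d => v = d.1 ∨ v = d.2)).card := by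
  induction D using Finset.induction_on with
  | empty =>
    refine ⟨0, by simp, fun τ hτ => ⟨Walk.nil, ?_, by simp⟩⟩
    simp at hτ; simp [hτ]
  | insert d D hd ih =>
    obtain ⟨E, hE, hw⟩ := ih (fun d' hd' => hD d' (Finset.mem_insert_of_mem hd'))
    obtain ⟨h1, h2⟩ := hD d (Finset.mem_insert_self _ _)
    obtain ⟨e, he, hx⟩ := excursion R h1 h2
    refine ⟨E + e, ?_, ?_⟩
    · rw [Finset.card_insert_of_notMem hd]; nlinarith
    · intro τ hτ
      rw [Finset.card_insert_of_notMem hd] at hτ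
      obtain ⟨t, s, hts, ht, hs⟩ : ∃ t s, t + s = τ ∧ t ≤ T ∧ s ≤ D.card * T := by
        by_cases hτT : τ ≤ T
        · exact ⟨τ, 0, by simp, hτT, by simp⟩
        · refine ⟨T, τ - T, by omega, le_rfl, ?_⟩
          have : (D.card + 1) * T = D.card * T + T := by ring
          omega
      obtain ⟨w, hwl, hwc⟩ := hw s hs
      obtain ⟨x, hxl, hxc⟩ := hx t
      refine ⟨w.append x, by rw [Walk.length_append, hwl, hxl]; omega, ?_⟩
      intro v
      rw [Walk.tail_support_append, List.count_append]
      have h3 := hwc v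
      have h4 := hxc v
      rw [Finset.filter_insert]
      by_cases hv : v = d.1 ∨ v = d.2
      · rw [if_pos hv] at h4 ⊢
        rw [Finset.card_insert_of_notMem (by simp [hd])]
        rw [Nat.mul_add T]
        omega
      · rw [if_neg hv] at h4 ⊢
        omega

lemma closed_walk {K : Type*} [Fintype K] [DecidableEq K] (R : SimpleGraph K) (r p : K)
    (hrp : R.Adj r p) (T : ℕ)
    (D : Finset (K × K)) (hD : ∀ d ∈ D, R.Reachable r d.1 ∧ R.Adj d.1 d.2) (M : ℕ)
    (hM : M ≤ D.card * T) :
    ∃ w : R.Walk r r, w.length = 2 * M ∧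
      ∀ v, w.support.count v ≤ 1 + 2 * Fintype.card K ^ 3 + 2 * Fintype.card K * T := by
  have key : ∀ (w : R.Walk r r) v, w.support.count v ≤ 1 + w.support.tail.count v := by
    intro w v
    rw [Walk.support_eq_cons, List.count_cons]
    simp only [List.tail_cons]
    split_ifs <;> omega
  obtain ⟨E, hE, hw⟩ := multi_excursion R r T D hD
  have hDc : D.card ≤ Fintype.card K ^ 2 := by
    have := Finset.card_le_univ D
    rw [Fintype.card_prod] at this
    nlinarith
  have hE3 : E ≤ Fintype.card K ^ 3 := hE.trans (by
    calc Fintype.card K * D.card ≤ Fintype.card K * Fintype.card K ^ 2 :=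
          Nat.mul_le_mul_left _ hDc
      _ = _ := by ring)
  by_cases hME : M ≤ E
  · obtain ⟨w, hwl, hwc⟩ := osc_walk R hrp M
    refine ⟨w, hwl, fun v => (key w v).trans ?_⟩
    have h1 := hwc v
    have h2 : (if v = r ∨ v = p then M else 0) ≤ M := by split_ifs <;> omega
    omega
  · obtain ⟨w, hwl, hwc⟩ := hw (M - E) (by omega)
    refine ⟨w, by omega, fun v => (key w v).trans ?_⟩
    have h1 := hwc v
    have h2 : (D.filter (fun d => v = d.1 ∨ v = d.2)).card ≤ 2 * Fintype.card K := by
      have hsub : D.filter (fun d => v = d.1 ∨ v = d.2) ⊆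
          (Finset.univ.image (fun x => (v, x))) ∪ (Finset.univ.image (fun x => (x, v))) := by
        rintro ⟨a, b⟩ hab
        simp only [Finset.mem_filter] at hab
        rcases hab.2 with h | h
        · simp [h]
        · simp [h]
      have h3 := (Finset.card_le_card hsub).trans (Finset.card_union_le _ _)
      have h4 := Finset.card_image_le (s := (Finset.univ : Finset K)) (f := fun x => (v, x))
      have h5 := Finset.card_image_le (s := (Finset.univ : Finset K)) (f := fun x => (x, v))
      rw [Finset.card_univ] at h4 h5
      omega
    have h3 := Nat.mul_le_mul_left T h2
    have h4 : T * (2 * Fintype.card K) = 2 * Fintype.card K * T := by ring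
    omega

lemma cycles_from_reduced {V : Type*} [Fintype V] [DecidableEq V] (G : SimpleGraph V)
    {K : Type*} [Fintype K] [DecidableEq K] (R : SimpleGraph K) (cl : K → Finset V)
    (hdisj : ∀ a b, a ≠ b → Disjoint (cl a) (cl b)) (hne : ∀ a, (cl a).Nonempty)
    (e κ γ : ℝ) (he : 0 < e) (he4 : e ≤ 1 / 4) (hκ3 : 3 * e ≤ κ) (hγ1 : e ≤ γ) (hγ : e ≤ κ * γ)
    (hγ2 : γ ≤ 1 / 4)
    (hR : ∀ a b, R.Adj a b → GoodPair G e κ (cl a) (cl b))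
    (s : ℕ) (hs : ∀ a, s ≤ (cl a).card) (hbig : 1 ≤ e * s)
    (r p q : K) (hrp : R.Adj r p) (hrq : R.Adj r q) (hpq : R.Adj p q)
    (D : Finset (K × K)) (hD : ∀ d ∈ D, R.Reachable r d.1 ∧ R.Adj d.1 d.2) (T : ℕ)
    (hT : (3 : ℝ) + 2 * (Fintype.card K : ℝ) ^ 3 + 2 * Fintype.card K * T ≤ (1 - γ - 2 * e) * s)
    (l : ℕ) (hl4 : 4 ≤ l) (hl : l ≤ 2 * D.card * T) :
    ∃ (v : V) (c : G.Walk v v), c.IsCycle ∧ c.length = l := by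
  have hs' : ∀ a, (s : ℝ) ≤ (cl a).card := fun a => by exact_mod_cast hs a
  have hbig' : ∀ a, 1 ≤ e * (cl a).card := fun a =>
    hbig.trans (mul_le_mul_of_nonneg_left (hs' a) he.le)
  have hT' : ∀ c, (3 : ℝ) + 2 * (Fintype.card K : ℝ) ^ 3 + 2 * Fintype.card K * T ≤
      (1 - γ - 2 * e) * (cl c).card := fun c =>
    hT.trans (mul_le_mul_of_nonneg_left (hs' c) (by linarith))
  have h2D : 2 * D.card * T = 2 * (D.card * T) := by ring
  rcases Nat.even_or_odd' l with ⟨t, ht | ht⟩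
  · obtain ⟨w, hwl, hwc⟩ := closed_walk R r p hrp T D hD (t - 1) (by omega)
    obtain ⟨v, c, hc, hcl⟩ := cycle_of_walk G R cl hdisj hne e κ γ he he4 hκ3 hγ1 hγ hR hbig'
      w (by omega) hrp.symm hrp.symm (by
        intro c
        have h1 : (w.support.count c : ℝ) ≤
          1 + 2 * (Fintype.card K : ℝ) ^ 3 + 2 * Fintype.card K * T := by exact_mod_cast hwc c
        linarith [hT' c])
    exact ⟨v, c, hc, by omega⟩
  · obtain ⟨w, hwl, hwc⟩ := closed_walk R r p hrp T D hD (t - 1) (by omega)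
    obtain ⟨v, c, hc, hcl⟩ := cycle_of_walk G R cl hdisj hne e κ γ he he4 hκ3 hγ1 hγ hR hbig'
      (w.concat hrq) (by rw [Walk.length_concat]; omega) hrp.symm hpq (by
        intro c
        have h0 : (w.concat hrq).support.count c ≤ w.support.count c + 1 := by
          rw [Walk.support_concat, List.count_append]
          have : [q].count c ≤ 1 := List.count_le_length
          omega
        have h0' := h0.trans (Nat.add_le_add_right (hwc c) 1)
        have h1 : ((w.concat hrq).support.count c : ℝ) ≤
          1 + 2 * (Fintype.card K : ℝ) ^ 3 + 2 * Fintype.card K * T + 1 := by exact_mod_cast h0'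
        linarith [hT' c])
    rw [Walk.length_concat] at hcl
    exact ⟨v, c, hc, by omega⟩

lemma choose_T (n k s q l : ℕ) (ε γ e η : ℝ) (hk : 1 ≤ k) (hγ0 : 0 < γ) (hγ : γ ≤ 1 / 16)
    (heγ : e ≤ γ) (hη0 : 0 < η) (hη : 4 * η ≤ 1 / 4) (hεγ : 3 / 2 * γ + 4 * η ≤ ε)
    (hs : (3 : ℝ) + 2 * (k : ℝ) ^ 3 + 2 * k ≤ γ * s) (hks : k * s ≤ n)
    (hq : (1 / 4 - 4 * η) * (n : ℝ) ^ 2 ≤ q * ((s : ℝ) + 1) ^ 2)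
    (hl : (l : ℝ) ≤ (1 / 4 - ε) * n) :
    ∃ T : ℕ, (3 : ℝ) + 2 * (k : ℝ) ^ 3 + 2 * k * T ≤ (1 - γ - 2 * e) * s ∧ l ≤ 2 * q * T := by
  have hk' : (1 : ℝ) ≤ k := by exact_mod_cast hk
  have hk3 : (0 : ℝ) ≤ (k : ℝ) ^ 3 := by positivity
  have hsγ : 1 ≤ γ * s := by linarith
  have hs0 : (0 : ℝ) < s := by
    by_contra! h
    nlinarith
  have hks' : (k : ℝ) * s ≤ n := by exact_mod_cast hks
  have hn0 : (0 : ℝ) < n := lt_of_lt_of_le (by positivity) hks'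
  set X : ℝ := ((1 - γ - 2 * e) * s - 3 - 2 * (k : ℝ) ^ 3) / (2 * k) with hX
  have hXk : X * (2 * k) = (1 - γ - 2 * e) * s - 3 - 2 * (k : ℝ) ^ 3 := by
    rw [hX]; field_simp
  have hX0 : 0 ≤ X := by
    rw [hX]; apply div_nonneg _ (by positivity)
    nlinarith
  refine ⟨⌊X⌋₊, ?_, ?_⟩
  · have h1 := Nat.floor_le hX0
    have h2 : (⌊X⌋₊ : ℝ) * (2 * k) ≤ X * (2 * k) := mul_le_mul_of_nonneg_right h1 (by positivity)
    linarith
  · have h1 := (Nat.lt_floor_add_one X).le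
    have h2 : X * (2 * k) ≤ (⌊X⌋₊ + 1 : ℝ) * (2 * k) := mul_le_mul_of_nonneg_right h1 (by positivity)
    have h3 : (1 - 4 * γ) * s ≤ 2 * k * (⌊X⌋₊ : ℝ) := by nlinarith
    have h4 : ((s : ℝ) + 1) ^ 2 ≤ (1 + γ) ^ 2 * (s : ℝ) ^ 2 := by
      rw [← mul_pow]
      apply pow_le_pow_left₀ (by positivity)
      linarith
    have hq' : (1 / 4 - 4 * η) * (n : ℝ) ^ 2 ≤ q * ((1 + γ) ^ 2 * (s : ℝ) ^ 2) :=
      hq.trans (mul_le_mul_of_nonneg_left h4 (Nat.cast_nonneg _))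
    have hq2 : (1 - 2 * γ) * ((1 / 4 - 4 * η) * (n : ℝ) ^ 2) ≤ q * (s : ℝ) ^ 2 := by
      have h5 : (1 - 2 * γ) * (1 + γ) ^ 2 ≤ 1 := by nlinarith [pow_pos hγ0 3, sq_nonneg γ]
      calc _ ≤ (1 - 2 * γ) * (q * ((1 + γ) ^ 2 * (s : ℝ) ^ 2)) :=
            mul_le_mul_of_nonneg_left hq' (by linarith)
        _ = ((1 - 2 * γ) * (1 + γ) ^ 2) * (q * (s : ℝ) ^ 2) := by ring
        _ ≤ 1 * (q * (s : ℝ) ^ 2) := mul_le_mul_of_nonneg_right h5 (by positivity)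
        _ = _ := one_mul _
    have hcoef : 1 / 4 - ε ≤ (1 - 4 * γ) * ((1 - 2 * γ) * (1 / 4 - 4 * η)) := by
      nlinarith [mul_pos hγ0 hη0, mul_pos hγ0 hγ0, mul_nonneg (sq_nonneg γ) (sub_nonneg.2 hη)]
    have h6 : (1 / 4 - ε) * (n : ℝ) ^ 2 ≤ (2 * q * (⌊X⌋₊ : ℝ)) * (k * s) := by
      calc (1 / 4 - ε) * (n : ℝ) ^ 2
          ≤ ((1 - 4 * γ) * ((1 - 2 * γ) * (1 / 4 - 4 * η))) * (n : ℝ) ^ 2 :=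
            mul_le_mul_of_nonneg_right hcoef (by positivity)
        _ = (1 - 4 * γ) * ((1 - 2 * γ) * ((1 / 4 - 4 * η) * (n : ℝ) ^ 2)) := by ring
        _ ≤ (1 - 4 * γ) * (q * (s : ℝ) ^ 2) := mul_le_mul_of_nonneg_left hq2 (by linarith)
        _ = ((1 - 4 * γ) * s) * (q * s) := by ring
        _ ≤ (2 * k * (⌊X⌋₊ : ℝ)) * (q * s) := mul_le_mul_of_nonneg_right h3 (by positivity)
        _ = _ := by ring
    have h7 : (1 / 4 - ε) * (n : ℝ) ^ 2 ≤ (2 * q * (⌊X⌋₊ : ℝ)) * n :=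
      h6.trans (mul_le_mul_of_nonneg_left hks' (by positivity))
    have h8 : ((1 / 4 - ε) * (n : ℝ)) * n ≤ (2 * q * (⌊X⌋₊ : ℝ)) * n := by
      rw [sq, ← mul_assoc] at h7; exact h7
    have h9 := hl.trans (le_of_mul_le_mul_right h8 hn0)
    exact_mod_cast h9

open scoped Classical in
lemma goodPair_of_uniform {V : Type*} [Fintype V] [DecidableEq V] (G : SimpleGraph V)
    (e δ : ℝ) (he : 0 < e) (A B : Finset V) (hA : A.Nonempty) (hB : B.Nonempty)
    (hu : G.IsUniform e A B) (hd : δ ≤ (G.edgeDensity A B : ℝ)) : GoodPair G e (δ - e) A B := by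
  intro A' hA' B' hB' hAc hBc
  have hApos : (0 : ℝ) < A.card := by exact_mod_cast hA.card_pos
  have hBpos : (0 : ℝ) < B.card := by exact_mod_cast hB.card_pos
  have hA'pos : (0 : ℝ) < A'.card := lt_of_lt_of_le (mul_pos he hApos) hAc
  have hB'pos : (0 : ℝ) < B'.card := lt_of_lt_of_le (mul_pos he hBpos) hBc
  have h1 := hu hA' hB' (by rw [mul_comm]; exact hAc) (by rw [mul_comm]; exact hBc)
  rw [abs_lt] at h1
  by_contra! hno
  have h2 : ∑ x ∈ A', ((nb G x ∩ B').card : ℝ) < ∑ x ∈ A', (δ - e) * (B'.card : ℝ) := by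
    apply Finset.sum_lt_sum_of_nonempty
    · exact Finset.card_pos.1 (by exact_mod_cast hA'pos)
    · exact hno
  have h3 : ((G.interedges A' B').card : ℝ) = ∑ x ∈ A', ((nb G x ∩ B').card : ℝ) := by
    rw [SimpleGraph.interedges_def, Finset.card_filter, Finset.sum_product]
    push_cast
    apply Finset.sum_congr rfl
    intro x _
    have : nb G x ∩ B' = B'.filter (fun y => G.Adj x y) := by
      ext y; simp [mem_nb, and_comm]
    rw [this, Finset.card_filter]
    push_cast
    rfl
  have h4 : (G.edgeDensity A' B' : ℝ) = ((G.interedges A' B').card : ℝ) / (A'.card * B'.card) := by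
    rw [SimpleGraph.edgeDensity_def]; push_cast; rfl
  have h5 : (G.edgeDensity A' B' : ℝ) * (A'.card * B'.card) = (G.interedges A' B').card := by
    rw [h4]; field_simp
  rw [Finset.sum_const, nsmul_eq_mul, ← h3, ← h5] at h2
  have h6 : (δ - e) * ((A'.card : ℝ) * B'.card) ≤ (G.edgeDensity A' B' : ℝ) * (A'.card * B'.card) :=
    mul_le_mul_of_nonneg_right (by linarith) (by positivity)
  linarith

open scoped Classical in
lemma reduced_count {V : Type*} [Fintype V] [DecidableEq V] [Nonempty V] (G : SimpleGraph V)
    (P : Finpartition (Finset.univ : Finset V)) (e δ : ℝ) (he : 0 < e) (heδ : e ≤ δ)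
    (hP : P.IsEquipartition) (hPu : P.IsUniform G e) (hP' : 4 / δ ≤ (P.parts.card : ℝ)) :
    (((Finset.univ : Finset (V × V)).filter
      (fun p => G.Adj p.1 p.2 ∧ ¬ (G.regularityReduced P e δ).Adj p.1 p.2)).card : ℝ) ≤
      9 * δ * (Fintype.card V : ℝ) ^ 2 := by
  have hδ : 0 < δ := lt_of_lt_of_le he heδ
  set A := (P.nonUniforms G e).biUnion (fun UV => UV.1 ×ˢ UV.2) with hA
  set B := P.parts.biUnion Finset.offDiag with hB
  set C := (P.sparsePairs G δ).biUnion (fun UV => G.interedges UV.1 UV.2) with hC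
  have hsub : (Finset.univ : Finset (V × V)).filter
      (fun p => G.Adj p.1 p.2 ∧ ¬ (G.regularityReduced P e δ).Adj p.1 p.2) ⊆ A ∪ B ∪ C := by
    rintro ⟨x, y⟩
    simp only [hA, hB, hC, Finset.mem_filter, regularityReduced_adj, not_and, not_exists,
      not_le, Finset.mem_biUnion, Finset.mem_union, Finset.mem_product, Prod.exists,
      Finset.mem_offDiag, and_imp, Finset.mem_univ, true_implies,
      or_assoc, and_assoc, P.mk_mem_nonUniforms, Finpartition.mk_mem_sparsePairs,
      SimpleGraph.mem_interedges_iff]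
    intro h h'
    replace h' := h' h
    obtain ⟨U, hU, hx⟩ := P.exists_mem (Finset.mem_univ x)
    obtain ⟨W, hW, hy⟩ := P.exists_mem (Finset.mem_univ y)
    obtain rfl | hUV := eq_or_ne U W
    · exact Or.inr (Or.inl ⟨U, hU, hx, hy, G.ne_of_adj h⟩)
    by_cases h₂ : G.IsUniform e U W
    · exact Or.inr <| Or.inr ⟨U, W, hU, hW, hUV, h' _ hU _ hW hx hy hUV h₂, hx, hy, h⟩
    · exact Or.inl ⟨U, W, hU, hW, hUV, h₂, hx, hy⟩
  have h1 : (A.card : ℝ) < 4 * e * (Fintype.card V : ℝ) ^ 2 :=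
    hP.sum_nonUniforms_lt Finset.univ_nonempty he hPu
  have h2 : (B.card : ℝ) ≤ δ / 2 * (Fintype.card V : ℝ) ^ 2 := hP.card_biUnion_offDiag_le hδ hP'
  have h3 : (C.card : ℝ) ≤ 4 * δ * (Fintype.card V : ℝ) ^ 2 :=
    hP.card_interedges_sparsePairs_le (G := G) hδ.le
  have h4 := (Finset.card_le_card hsub).trans ((Finset.card_union_le _ _).trans
    (Nat.add_le_add_right (Finset.card_union_le A B) _))
  have h4' : (((Finset.univ : Finset (V × V)).filter
      (fun p => G.Adj p.1 p.2 ∧ ¬ (G.regularityReduced P e δ).Adj p.1 p.2)).card : ℝ) ≤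
      A.card + B.card + C.card := by exact_mod_cast h4
  have h5 : 4 * e * (Fintype.card V : ℝ) ^ 2 ≤ 4 * δ * (Fintype.card V : ℝ) ^ 2 := by gcongr
  nlinarith [sq_nonneg (Fintype.card V : ℝ)]

lemma sqrt_floor_ge (n : ℕ) (hn : 2 ≤ n) :
    ((n : ℝ) - 1) / 2 ≤ Real.sqrt ((n ^ 2 / 4 : ℕ) : ℝ) := by
  have hn' : (2 : ℝ) ≤ n := by exact_mod_cast hn
  apply Real.le_sqrt_of_sq_le
  have h1 : n ^ 2 ≤ 4 * (n ^ 2 / 4) + 3 := by omega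
  have h2 : (n : ℝ) ^ 2 ≤ 4 * ((n ^ 2 / 4 : ℕ) : ℝ) + 3 := by exact_mod_cast h1
  nlinarith

open scoped Classical in
lemma main_reg {V : Type*} [Fintype V] [DecidableEq V] [Nonempty V] (G : SimpleGraph V)
    (h : Real.sqrt ((Fintype.card V ^ 2 / 4 : ℕ) : ℝ) < specRad G)
    (hn : 1000 ≤ Fintype.card V) (ε γ e η δ : ℝ) (hε : 0 < ε)
    (hγ0 : 0 < γ) (hγ : γ ≤ 1 / 16) (he : 0 < e)
    (heγ : e ≤ γ) (hη0 : 0 < η) (hη : 4 * η ≤ 1 / 1000000) (hεγ : 3 / 2 * γ + 4 * η ≤ ε)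
    (hδ : δ = η ^ 2) (heδ : e ≤ δ) (hκ3 : 3 * e ≤ δ - e) (hκγ : e ≤ (δ - e) * γ)
    (hnη : 1 ≤ 2 * η * (Fintype.card V : ℝ))
    (P : Finpartition (Finset.univ : Finset V))
    (hP : P.IsEquipartition) (hPu : P.IsUniform G e) (hP' : 4 / δ ≤ (P.parts.card : ℝ))
    (hs : (3 : ℝ) + 2 * (P.parts.card : ℝ) ^ 3 + 2 * P.parts.card ≤
      γ * ((Fintype.card V / P.parts.card : ℕ) : ℝ))
    (hbig : 1 ≤ e * ((Fintype.card V / P.parts.card : ℕ) : ℝ))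
    (l : ℕ) (hl4 : 4 ≤ l) (hl : (l : ℝ) ≤ (1 / 4 - ε) * Fintype.card V) :
    ∃ (v : V) (c : G.Walk v v), c.IsCycle ∧ c.length = l := by
  have hn' : (1000 : ℝ) ≤ Fintype.card V := by exact_mod_cast hn
  have hδ0 : 0 < δ := lt_of_lt_of_le he heδ
  have hle : G.regularityReduced P e δ ≤ G := regularityReduced_le
  have hadj0 : ∀ v w, (G.regularityReduced P e δ).Adj v w → G.Adj v w ∧
      ∃ U ∈ P.parts, ∃ W ∈ P.parts, v ∈ U ∧ w ∈ W ∧ U ≠ W ∧ G.IsUniform e U W ∧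
        δ ≤ G.edgeDensity U W := fun v w hvw => hvw
  have hsp := specRad_sub_le G (G.regularityReduced P e δ) hle (3 * η * Fintype.card V)
    (by positivity) (by
      have := reduced_count G P e δ he heδ hP hPu hP'
      rw [hδ] at this ⊢
      refine le_trans (le_of_eq ?_) (this.trans (le_of_eq (by ring)))
      congr)
  generalize G.regularityReduced P e δ = G' at hle hadj0 hsp
  have hfl := sqrt_floor_ge (Fintype.card V) (by omega)
  have hlam : (1 / 2 - 4 * η) * Fintype.card V ≤ specRad G' := by nlinarith
  have hlam2 : (1 / 4 - 4 * η) * (Fintype.card V : ℝ) ^ 2 ≤ specRad G' ^ 2 := by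
    have h1 : ((1 / 2 - 4 * η) * (Fintype.card V : ℝ)) ^ 2 ≤ specRad G' ^ 2 :=
      pow_le_pow_left₀ (mul_nonneg (by linarith) (by linarith)) hlam 2
    refine le_trans ?_ h1
    rw [mul_pow]
    apply mul_le_mul_of_nonneg_right _ (by positivity)
    nlinarith
  obtain ⟨x, hx0, hx⟩ := eig_exists G'
  obtain ⟨u, hu, hmax⟩ := exists_max_abs x hx0
  by_cases htri : ∃ v w, G'.Adj u v ∧ G'.Adj u w ∧ G'.Adj v w
  swap
  · push Not at htri
    refine extremal_case G h hn (nb G' u) ?_ l hl4 (by nlinarith)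
    have h1 := walk2_le G' x _ hx u hu hmax
    have h2 : ∑ v ∈ nb G' u, ((nb G' v).card : ℝ) ≤
        ∑ v ∈ nb G' u, ((nb G v \ nb G' u).card : ℝ) := by
      apply Finset.sum_le_sum
      intro v hv
      have : nb G' v ⊆ nb G v \ nb G' u := by
        intro w hw
        rw [Finset.mem_sdiff, mem_nb, mem_nb]
        rw [mem_nb] at hw hv
        exact ⟨hle hw, fun hh => htri v w hv hh hw⟩
      exact_mod_cast Finset.card_le_card this
    refine le_trans ?_ (hlam2.trans (h1.trans h2))
    apply mul_le_mul_of_nonneg_right _ (by positivity)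
    linarith
  obtain ⟨v₁, v₂, h01, h02, h12⟩ := htri
  let R : SimpleGraph {U // U ∈ P.parts} :=
    { Adj := fun U W => U ≠ W ∧ G.IsUniform e U.1 W.1 ∧ δ ≤ (G.edgeDensity U.1 W.1 : ℝ)
      symm := ⟨fun U W hUW => ⟨hUW.1.symm, hUW.2.1.symm, by
        rw [edgeDensity_comm]; exact hUW.2.2⟩⟩
      loopless := ⟨fun U hU => hU.1 rfl⟩ }
  have hcls : ∀ v : V, ∃ U : {U // U ∈ P.parts}, v ∈ U.1 := fun v => by
    obtain ⟨U, hU, hv⟩ := P.exists_mem (Finset.mem_univ v)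
    exact ⟨⟨U, hU⟩, hv⟩
  choose cls hcls using hcls
  have huniq : ∀ v (U : {U // U ∈ P.parts}), v ∈ U.1 → U = cls v := by
    intro v U hv
    exact Subtype.ext (P.disjoint.elim U.2 (cls v).2 (Finset.not_disjoint_iff.2 ⟨v, hv, hcls v⟩))
  have hadj : ∀ v w, G'.Adj v w → R.Adj (cls v) (cls w) := by
    intro v w hvw
    obtain ⟨-, U, hU, W, hW, hvU, hwW, hne, hun, hd⟩ := hadj0 v w hvw
    rw [← huniq v ⟨U, hU⟩ hvU, ← huniq w ⟨W, hW⟩ hwW]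
    exact ⟨fun hh => hne (congrArg Subtype.val hh), hun, hd⟩
  set D : Finset ({U // U ∈ P.parts} × {U // U ∈ P.parts}) :=
    Finset.univ.filter (fun d => R.Reachable (cls u) d.1 ∧ R.Adj d.1 d.2) with hD
  have hcardK : Fintype.card {U // U ∈ P.parts} = P.parts.card := Fintype.card_coe _
  have hk1 : 1 ≤ P.parts.card := Finset.card_pos.2 ⟨_, (cls u).2⟩
  set s := Fintype.card V / P.parts.card with hsdef
  have hsum : ∑ v ∈ Finset.univ.filter (fun v => R.Reachable (cls u) (cls v)),
      ((nb G' v).card : ℝ) ≤ D.card * ((s : ℝ) + 1) ^ 2 := by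
    have h1 : ∑ v ∈ Finset.univ.filter (fun v => R.Reachable (cls u) (cls v)), (nb G' v).card ≤
        D.card * (s + 1) ^ 2 := by
      rw [← Finset.card_sigma]
      have hsub : (Finset.univ.filter (fun v => R.Reachable (cls u) (cls v))).sigma
          (fun v => nb G' v) ⊆ D.biUnion (fun d => d.1.1.sigma (fun _ => d.2.1)) := by
        rintro ⟨v, w⟩ hvw
        simp only [Finset.mem_sigma, Finset.mem_filter, Finset.mem_univ, true_and, mem_nb] at hvw
        rw [Finset.mem_biUnion]
        refine ⟨(cls v, cls w), ?_, ?_⟩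
        · simp only [hD, Finset.mem_filter, Finset.mem_univ, true_and]
          exact ⟨hvw.1, hadj _ _ hvw.2⟩
        · simp only [Finset.mem_sigma]
          exact ⟨hcls v, hcls w⟩
      refine (Finset.card_le_card hsub).trans (Finset.card_biUnion_le_card_mul _ _ _ ?_)
      intro d _
      rw [Finset.card_sigma, Finset.sum_const, smul_eq_mul, sq]
      have h2 := hP.card_part_le_average_add_one d.1.2
      have h3 := hP.card_part_le_average_add_one d.2.2
      rw [Finset.card_univ] at h2 h3
      exact Nat.mul_le_mul h2 h3
    exact_mod_cast h1
  have hcomp := comp_sq_le G' x _ hx (Finset.univ.filter (fun v => R.Reachable (cls u) (cls v)))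
    (by
      intro v hv w hvw
      simp only [Finset.mem_filter, Finset.mem_univ, true_and] at hv ⊢
      exact hv.trans (hadj _ _ hvw).reachable) u (by simp) hu
  obtain ⟨T, hT, hlT⟩ := choose_T (Fintype.card V) P.parts.card s D.card l ε γ e η hk1 hγ0 hγ heγ
    hη0 (by linarith) hεγ hs (Nat.mul_div_le _ _) (hlam2.trans (hcomp.trans hsum)) hl
  refine cycles_from_reduced G R (fun U => U.1) ?_ ?_ e (δ - e) γ he (by linarith) hκ3 heγ hκγ
    (by linarith) ?_ s ?_ hbig (cls u) (cls v₁) (cls v₂) (hadj _ _ h01) (hadj _ _ h02)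
    (hadj _ _ h12) D ?_ T (by rw [hcardK]; exact hT) l hl4 hlT
  · intro U W hUW
    exact P.disjoint U.2 W.2 (fun hh => hUW (Subtype.ext hh))
  · intro U; exact P.nonempty_of_mem_parts U.2
  · intro U W hUW
    have := goodPair_of_uniform G e δ he U.1 W.1 (P.nonempty_of_mem_parts U.2)
      (P.nonempty_of_mem_parts W.2) hUW.2.1 hUW.2.2
    exact this
  · intro U
    have := hP.average_le_card_part U.2
    rwa [Finset.card_univ] at this
  · intro d hd
    simpa [hD] using hd

lemma triangle_cycle {V : Type*} (G : SimpleGraph V) (u v w : V) (h1 : G.Adj u v)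
    (h2 : G.Adj u w) (h3 : G.Adj v w) :
    ∃ (v : V) (c : G.Walk v v), c.IsCycle ∧ c.length = 3 := by
  obtain ⟨y, c, hc, hcl⟩ := cycle_of_path G (Walk.cons h3 Walk.nil) (by simp [h3.ne]) h3.ne
    (y := u) (by simp [h1.ne, h2.ne]) h1 h2.symm
  exact ⟨y, c, hc, by simpa using hcl⟩

/-- Li–Ning: for `0 < ε < 1/4` there is `N(ε)` such that every graph on `n ≥ N` vertices
with `ρ(G) > √⌊n²/4⌋` contains every cycle `C_l` with `3 ≤ l ≤ (1/4 − ε)n`. -/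
theorem stmt12 (ε : ℝ) (hε0 : 0 < ε) (hε : ε < 1 / 4) :
    ∃ N : ℕ, ∀ n : ℕ, N ≤ n → ∀ G : SimpleGraph (Fin n),
      Real.sqrt ((n ^ 2 / 4 : ℕ) : ℝ) < specRad G →
      ∀ l : ℕ, 3 ≤ l → (l : ℝ) ≤ (1 / 4 - ε) * n →
        ∃ (v : Fin n) (c : G.Walk v v), c.IsCycle ∧ c.length = l := by
  classical
  obtain ⟨γ, hγ⟩ : ∃ γ : ℝ, γ = ε / 4 := ⟨_, rfl⟩
  obtain ⟨η, hη⟩ : ∃ η : ℝ, η = ε / 4000000 := ⟨_, rfl⟩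
  obtain ⟨δ, hδ⟩ : ∃ δ : ℝ, δ = η ^ 2 := ⟨_, rfl⟩
  obtain ⟨e, he⟩ : ∃ e : ℝ, e = δ * γ / 2 := ⟨_, rfl⟩
  have hγ0 : 0 < γ := by rw [hγ]; positivity
  have hη0 : 0 < η := by rw [hη]; positivity
  have hδ0 : 0 < δ := by rw [hδ]; positivity
  have he0 : 0 < e := by rw [he]; positivity
  have hγ1 : γ ≤ 1 / 16 := by linarith
  have hη1 : 4 * η ≤ 1 / 1000000 := by linarith
  have hδ1 : δ ≤ 1 := by rw [hδ]; nlinarith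
  have hδγ : δ * γ ≤ δ * (1 / 16) := mul_le_mul_of_nonneg_left hγ1 hδ0.le
  have hδγ' : δ * γ ≤ 1 * γ := mul_le_mul_of_nonneg_right hδ1 hγ0.le
  set l0 : ℕ := ⌈4 / δ⌉₊ with hl0
  set K0 : ℕ := SzemerediRegularity.bound e l0 with hK0
  set S0 : ℕ := ⌈(3 + 2 * (K0 : ℝ) ^ 3 + 2 * K0) / γ⌉₊ + ⌈1 / e⌉₊ with hS0
  refine ⟨K0 * S0 + l0 + 1000 + ⌈1 / (2 * η)⌉₊, fun n hn G hG l hl3 hl => ?_⟩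
  haveI : Nonempty (Fin n) := ⟨⟨0, by omega⟩⟩
  have hG' : Real.sqrt ((Fintype.card (Fin n) ^ 2 / 4 : ℕ) : ℝ) < specRad G := by
    rw [Fintype.card_fin]; exact hG
  rcases Nat.lt_or_ge 3 l with hl4 | hl4
  swap
  · obtain rfl : l = 3 := by omega
    obtain ⟨u, v, w, h1, h2, h3⟩ := exists_triangle G hG'
    exact triangle_cycle G u v w h1 h2 h3
  obtain ⟨P, hP, hPl, hPb, hPu⟩ := szemeredi_regularity G he0
    (l := l0) (by rw [Fintype.card_fin]; omega)
  have hk1 : 0 < P.parts.card := lt_of_lt_of_le (Nat.ceil_pos.2 (by positivity)) hPl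
  have hkK : (P.parts.card : ℝ) ≤ K0 := by exact_mod_cast hPb
  have hsS : S0 ≤ Fintype.card (Fin n) / P.parts.card := by
    rw [Fintype.card_fin, Nat.le_div_iff_mul_le hk1]
    have : S0 * P.parts.card ≤ S0 * K0 := Nat.mul_le_mul_left _ hPb
    have h2 : S0 * K0 = K0 * S0 := mul_comm _ _
    omega
  have hsS' : (S0 : ℝ) ≤ ((Fintype.card (Fin n) / P.parts.card : ℕ) : ℝ) := by exact_mod_cast hsS
  have hS0' : (S0 : ℝ) = (⌈(3 + 2 * (K0 : ℝ) ^ 3 + 2 * K0) / γ⌉₊ : ℝ) + (⌈1 / e⌉₊ : ℝ) := by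
    rw [hS0]; push_cast; rfl
  have hc1 := Nat.le_ceil ((3 + 2 * (K0 : ℝ) ^ 3 + 2 * K0) / γ)
  have hc2 := Nat.le_ceil (1 / e)
  have hc3 := Nat.le_ceil (1 / (2 * η))
  have hz1 : (0 : ℝ) ≤ (⌈(3 + 2 * (K0 : ℝ) ^ 3 + 2 * K0) / γ⌉₊ : ℝ) := Nat.cast_nonneg _
  have hz2 : (0 : ℝ) ≤ (⌈1 / e⌉₊ : ℝ) := Nat.cast_nonneg _
  have hnη : 1 ≤ 2 * η * (Fintype.card (Fin n) : ℝ) := by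
    have h1 : (⌈1 / (2 * η)⌉₊ : ℝ) ≤ n := by
      have : ⌈1 / (2 * η)⌉₊ ≤ n := by omega
      exact_mod_cast this
    have h2 : 1 / (2 * η) ≤ n := hc3.trans h1
    rw [div_le_iff₀ (by positivity)] at h2
    rw [Fintype.card_fin]; linarith
  refine main_reg G hG' (by rw [Fintype.card_fin]; omega) ε γ e η δ hε0 hγ0 hγ1 he0
    (by linarith) hη0 hη1 (by linarith) hδ (by linarith) (by linarith)
    (by nlinarith) hnη P hP ?_ ?_ ?_ ?_ l hl4 ?_
  · convert hPu
  · exact (Nat.le_ceil _).trans (by exact_mod_cast hPl)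
  · have h1 : (3 + 2 * (K0 : ℝ) ^ 3 + 2 * K0) / γ ≤
        ((Fintype.card (Fin n) / P.parts.card : ℕ) : ℝ) := by linarith
    rw [div_le_iff₀ hγ0] at h1
    have h2 : (P.parts.card : ℝ) ^ 3 ≤ (K0 : ℝ) ^ 3 :=
      pow_le_pow_left₀ (Nat.cast_nonneg _) hkK 3
    linarith
  · have h1 : 1 / e ≤ ((Fintype.card (Fin n) / P.parts.card : ℕ) : ℝ) := by linarith
    rw [div_le_iff₀ he0] at h1
    linarith
  · rw [Fintype.card_fin]; exact hl
end
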